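/- (PRV component) Let λ and μ be dominant weights of a semisimple complex Lie group G, and let w be any element of the Weyl group. Then the irreducible representation whose highest weight is the dominant representative of λ + wμ occurs in V(λ) ⊗ V(μ). -/

import Mathlib

/-!
(PRV component.)  Let `λ` and `μ` be dominant weights of a semisimple complex Lie group `G`,
and let `w` be any element of the Weyl group.  Then the irreducible representation whose highest
weight is the dominant representative `ν` of `λ + wμ` occurs in `V(λ) ⊗ V(μ)`.

Occurrence of `V(ν)` in the (completely reducible) tensor product is rendered as the existence
of a highest weight vector of weight `ν`; `ν` is the dominant representative of `λ + wμ`: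
it is dominant (`⟨ν, α∨⟩` is a non-negative integer for positive `α`) and Weyl-conjugate
to `λ + wμ`.
-/

open scoped TensorProduct
open scoped TensorProduct Pointwise

section LieFramework

variable {L : Type*} [LieRing L] [LieAlgebra ℂ L] [FiniteDimensional ℂ L]
  [LieAlgebra.IsKilling ℂ L] (H : LieSubalgebra ℂ L) [H.IsCartanSubalgebra]

/-- `α` is a root of `L` with respect to the Cartan subalgebra `H`. -/
def IsRootOf (α : H → ℂ) : Prop := α ≠ 0 ∧ LieAlgebra.rootSpace H α ≠ ⊥

/-- `P` is a system of positive roots: every root or its negative is in `P`, never both, `P`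
consists of roots, and `P` is closed under addition (when the sum is a root). -/
def IsPositiveSystem (P : Set (H → ℂ)) : Prop :=
  (∀ α ∈ P, IsRootOf H α) ∧
  (∀ α : H → ℂ, IsRootOf H α → (α ∈ P ∨ -α ∈ P)) ∧
  (∀ α ∈ P, -α ∉ P) ∧
  (∀ α ∈ P, ∀ β ∈ P, IsRootOf H (α + β) → α + β ∈ P)

variable {V : Type*} [AddCommGroup V] [Module ℂ V] [LieRingModule L V] [LieModule ℂ L V]

/-- `v` is a highest weight vector of weight `λ`, for the positive system `P`: it is a nonzero
vector of weight `λ` annihilated by all positive root spaces. -/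
def IsHWVec (P : Set (H → ℂ)) (lam : H → ℂ) (v : V) : Prop :=
  v ≠ 0 ∧ v ∈ LieModule.genWeightSpace V lam ∧
    ∀ α ∈ P, ∀ x ∈ LieAlgebra.rootSpace H α, ⁅(x : L), v⁆ = 0

/-- `V` is (a model of) the irreducible module `V(λ)` of highest weight `λ`. -/
def IsHWModule (P : Set (H → ℂ)) (lam : H → ℂ) (V : Type*) [AddCommGroup V] [Module ℂ V]
    [LieRingModule L V] [LieModule ℂ L V] : Prop :=
  LieModule.IsIrreducible ℂ L V ∧ ∃ v : V, IsHWVec H P lam v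

/-- The reflection in the root `α`, acting on weights: `χ ↦ χ - χ(α∨) α`. -/
noncomputable def rootRefl (α : LieModule.Weight ℂ H L) : (H → ℂ) →ₗ[ℂ] (H → ℂ) :=
  LinearMap.id - LinearMap.smulRight (LinearMap.proj (LieAlgebra.IsKilling.coroot α)) (α : H → ℂ)

/-- The Weyl group (as a monoid of linear endomorphisms of the weight space, generated by the
root reflections; reflections are involutions, so this is a group). -/
noncomputable def WeylMonoid : Submonoid ((H → ℂ) →ₗ[ℂ] (H → ℂ)) :=
  Submonoid.closure { f | ∃ α : LieModule.Weight ℂ H L, α.IsNonZero ∧ f = rootRefl H α }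

/-- The subspace of highest weight vectors of weight `λ` (together with `0`). -/
noncomputable def hwVectorSubmodule (P : Set (H → ℂ)) (lam : H → ℂ) : Submodule ℂ V :=
  (LieModule.genWeightSpace V lam : LieSubmodule ℂ H V).toSubmodule ⊓
    ⨅ (α : H → ℂ) (_ : α ∈ P) (x : L) (_ : x ∈ LieAlgebra.rootSpace H α),
      LinearMap.ker (LieModule.toEnd ℂ L V x)

end LieFramework

/-- A system of positive roots indexed by `ι` inside a lattice `Λ` of integral weights: `p β` is the
pairing with the coroot of `β` and `len β` is half of the squared length of `β`. -/
structure PosRootDatum (ι Λ : Type*) [Fintype ι] [AddCommGroup Λ] where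
  root : ι → Λ
  p : ι → Λ →+ ℤ
  len : ι → ℚ
  len_pos : ∀ β, 0 < len β
  p_self : ∀ β, p β (root β) = 2
  form_root' : ∀ χ β, 2 * ∑ γ, len γ ^ 2 * p γ χ * p γ (root β) = len β * p β χ
  refl_root : ∀ β γ, ∃ δ, root γ - p β (root γ) • root β = root δ ∨
    root γ - p β (root γ) • root β = - root δ
  add_root : ∀ β γ, p β (root γ) < 0 → ∃ δ, root δ = root β + root γ
  sub_root : ∀ β γ, 0 < p β (root γ) → γ ≠ β →
    ∃ δ, root γ - root β = root δ ∨ root γ - root β = - root δ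
  reduced : ∀ β γ, root β ≠ root γ + root γ
  root_ne_neg : ∀ β γ, root β ≠ - root γ
  root_inj : Function.Injective root
  nondeg : ∀ χ, (∀ β, p β χ = 0) → χ = 0

namespace PosRootDatum

variable {ι Λ : Type*} [Fintype ι] [AddCommGroup Λ] (D : PosRootDatum ι Λ)

/-- The invariant bilinear form. -/
def form (χ ψ : Λ) : ℚ := 2 * ∑ γ, D.len γ ^ 2 * D.p γ χ * D.p γ ψ

lemma form_root (χ : Λ) (β : ι) : D.form χ (D.root β) = D.len β * D.p β χ := D.form_root' χ β

lemma form_comm (χ ψ : Λ) : D.form χ ψ = D.form ψ χ := by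
  unfold form; congr 1; exact Finset.sum_congr rfl fun _ _ => by ring

lemma form_add_left (χ χ' ψ : Λ) : D.form (χ + χ') ψ = D.form χ ψ + D.form χ' ψ := by
  unfold form; rw [← mul_add, ← Finset.sum_add_distrib]; congr 1
  exact Finset.sum_congr rfl fun _ _ => by push_cast [map_add]; ring

lemma form_add_right (ψ χ χ' : Λ) : D.form ψ (χ + χ') = D.form ψ χ + D.form ψ χ' := by
  rw [form_comm, form_add_left, form_comm, D.form_comm χ']

lemma form_zero_left (ψ : Λ) : D.form 0 ψ = 0 := by simp [form]

lemma form_zero_right (ψ : Λ) : D.form ψ 0 = 0 := by simp [form]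

lemma form_neg_left (χ ψ : Λ) : D.form (-χ) ψ = - D.form χ ψ := by
  have := D.form_add_left χ (-χ) ψ
  rw [add_neg_cancel, form_zero_left] at this; linarith

lemma form_neg_right (χ ψ : Λ) : D.form χ (-ψ) = - D.form χ ψ := by
  rw [form_comm, form_neg_left, form_comm]

lemma form_sub_left (χ χ' ψ : Λ) : D.form (χ - χ') ψ = D.form χ ψ - D.form χ' ψ := by
  rw [sub_eq_add_neg, form_add_left, form_neg_left, sub_eq_add_neg]

lemma form_sub_right (ψ χ χ' : Λ) : D.form ψ (χ - χ') = D.form ψ χ - D.form ψ χ' := by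
  rw [sub_eq_add_neg, form_add_right, form_neg_right, sub_eq_add_neg]

lemma form_zsmul_left (n : ℤ) (χ ψ : Λ) : D.form (n • χ) ψ = n * D.form χ ψ := by
  unfold form
  simp only [map_zsmul, smul_eq_mul, Int.cast_mul, Finset.mul_sum]
  exact Finset.sum_congr rfl fun _ _ => by ring

lemma form_zsmul_right (n : ℤ) (χ ψ : Λ) : D.form χ (n • ψ) = n * D.form χ ψ := by
  rw [form_comm, form_zsmul_left, form_comm]

lemma form_self_nonneg (χ : Λ) : 0 ≤ D.form χ χ := by
  unfold form
  refine mul_nonneg zero_le_two (Finset.sum_nonneg fun γ _ => ?_)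
  rw [mul_assoc]; exact mul_nonneg (sq_nonneg _) (mul_self_nonneg _)

lemma eq_zero_of_form_self (χ : Λ) (h : D.form χ χ ≤ 0) : χ = 0 := by
  have h0 : ∑ γ, D.len γ ^ 2 * D.p γ χ * D.p γ χ = 0 := by
    have := D.form_self_nonneg χ
    unfold form at *; linarith
  rw [Finset.sum_eq_zero_iff_of_nonneg] at h0
  · refine D.nondeg χ fun β => ?_
    have := h0 β (Finset.mem_univ _)
    have hl := D.len_pos β
    simpa [hl.ne'] using this
  · intro γ _
    rw [mul_assoc]; exact mul_nonneg (sq_nonneg _) (mul_self_nonneg _)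

/-- The reflection in the root `β`. -/
def refl (β : ι) : Λ →+ Λ where
  toFun χ := χ - D.p β χ • D.root β
  map_zero' := by simp
  map_add' χ ψ := by simp only [map_add, add_smul]; abel

lemma refl_apply (β : ι) (χ : Λ) : D.refl β χ = χ - D.p β χ • D.root β := rfl

lemma p_refl_self (β : ι) (χ : Λ) : D.p β (D.refl β χ) = - D.p β χ := by
  simp [refl_apply, D.p_self]; ring

@[simp] lemma refl_refl (β : ι) (χ : Λ) : D.refl β (D.refl β χ) = χ := by
  rw [refl_apply, p_refl_self, refl_apply]; simp

lemma refl_injective (β : ι) : Function.Injective (D.refl β) :=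
  Function.LeftInverse.injective (D.refl_refl β)

lemma refl_root_self (β : ι) : D.refl β (D.root β) = - D.root β := by
  rw [refl_apply, D.p_self, two_smul]; abel

lemma form_refl_left (β : ι) (χ ψ : Λ) : D.form (D.refl β χ) ψ = D.form χ (D.refl β ψ) := by
  simp only [refl_apply, form_sub_left, form_sub_right, form_zsmul_left, form_zsmul_right]
  rw [D.form_comm (D.root β), form_root, form_root]; ring

lemma form_refl_refl (β : ι) (χ ψ : Λ) : D.form (D.refl β χ) (D.refl β ψ) = D.form χ ψ := by
  rw [form_refl_left, refl_refl]

lemma form_root_self (β : ι) : D.form (D.root β) (D.root β) = 2 * D.len β := by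
  rw [form_root, D.p_self]; push_cast; ring

lemma root_ne_zero (β : ι) : D.root β ≠ 0 := fun h => by
  have := D.p_self β
  rw [h] at this; simp at this

lemma p_eq_of_refl_eq {β γ δ : ι} (h : D.refl β (D.root γ) = D.root δ) (χ : Λ) :
    D.p δ χ = D.p γ (D.refl β χ) := by
  have hl : D.len δ = D.len γ := by
    have := D.form_refl_refl β (D.root γ) (D.root γ)
    rw [h, form_root_self, form_root_self] at this; linarith
  have h1 := D.form_refl_left β χ (D.root γ)
  rw [h, form_root, form_root, hl] at h1
  have := mul_left_cancel₀ (D.len_pos γ).ne' h1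
  exact_mod_cast this.symm

lemma p_eq_of_refl_eq_neg {β γ δ : ι} (h : D.refl β (D.root γ) = - D.root δ) (χ : Λ) :
    D.p δ χ = - D.p γ (D.refl β χ) := by
  have h' : D.refl δ (D.refl β (D.root γ)) = D.root δ := by
    rw [h, map_neg, refl_root_self, neg_neg]
  have hl : D.len δ = D.len γ := by
    have := D.form_refl_refl β (D.root γ) (D.root γ)
    rw [h, form_neg_left, form_neg_right, form_root_self, form_root_self] at this; linarith
  have h1 := D.form_refl_left β χ (D.root γ)
  rw [h, form_neg_right, form_root, form_root, hl] at h1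
  have : (D.p γ (D.refl β χ) : ℚ) = - D.p δ χ :=
    mul_left_cancel₀ (D.len_pos γ).ne' (by rw [h1]; ring)
  have : D.p γ (D.refl β χ) = - D.p δ χ := by exact_mod_cast this
  rw [this, neg_neg]

/-- Sums of positive roots. -/
def posCone : AddSubmonoid Λ := AddSubmonoid.closure (Set.range D.root)

lemma root_mem_posCone (β : ι) : D.root β ∈ D.posCone :=
  AddSubmonoid.subset_closure ⟨β, rfl⟩

lemma p_neg_iff (β : ι) (χ : Λ) : D.p β χ < 0 ↔ D.form χ (D.root β) < 0 := by
  have := D.len_pos β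
  rw [form_root, mul_neg_iff]
  constructor
  · intro h; exact Or.inl ⟨this, by exact_mod_cast h⟩
  · rintro (h | h)
    · exact_mod_cast h.2
    · exact absurd this h.1.not_gt

lemma p_pos_iff (β : ι) (χ : Λ) : 0 < D.p β χ ↔ 0 < D.form χ (D.root β) := by
  rw [form_root, mul_pos_iff_of_pos_left (D.len_pos β)]; exact_mod_cast Iff.rfl

lemma form_list_sum (χ : Λ) (l : List Λ) : D.form χ l.sum = (l.map (D.form χ)).sum := by
  induction l with
  | nil => simp [form_zero_right]
  | cons a l ih => simp [form_add_right, ih]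

lemma list_sum_ne_zero (l : List ι) (hl : l ≠ []) : (l.map D.root).sum ≠ 0 := by
  induction hn : l.length using Nat.strong_induction_on generalizing l with
  | _ n ih =>
  obtain _ | ⟨β, l⟩ := l
  · exact absurd rfl hl
  intro h
  simp only [List.map_cons, List.sum_cons] at h
  have h1 : D.form (D.root β) (l.map D.root).sum < 0 := by
    rw [eq_neg_of_add_eq_zero_right h, form_neg_right, form_root_self]
    have := D.len_pos β; linarith
  rw [form_list_sum] at h1
  obtain ⟨x, hx, hx'⟩ : ∃ γ ∈ l, D.form (D.root β) (D.root γ) < 0 := by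
    by_contra! hc
    refine absurd h1 (not_lt.2 (List.sum_nonneg ?_))
    simpa using hc
  rw [form_comm, ← p_neg_iff] at hx'
  obtain ⟨δ, hδ⟩ := D.add_root _ _ hx'
  obtain ⟨l1, l2, rfl⟩ := List.append_of_mem hx
  refine ih (l1 ++ δ :: l2).length ?_ (l1 ++ δ :: l2) (by simp) rfl ?_
  · rw [← hn]; simp
  · rw [← h]; simp [hδ]; abel

lemma exists_list_of_mem_posCone {χ : Λ} (h : χ ∈ D.posCone) :
    ∃ l : List ι, (l.map D.root).sum = χ := by
  induction h using AddSubmonoid.closure_induction with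
  | mem x hx => obtain ⟨β, rfl⟩ := hx; exact ⟨[β], by simp⟩
  | zero => exact ⟨[], rfl⟩
  | add x y _ _ hx hy =>
    obtain ⟨l, rfl⟩ := hx; obtain ⟨l', rfl⟩ := hy
    exact ⟨l ++ l', by simp⟩

lemma add_ne_zero_of_mem_posCone {χ : Λ} (h : χ ∈ D.posCone) (β : ι) : D.root β + χ ≠ 0 := by
  obtain ⟨l, rfl⟩ := D.exists_list_of_mem_posCone h
  simpa using D.list_sum_ne_zero (β :: l) (by simp)

lemma eq_zero_of_mem_of_neg_mem {χ : Λ} (h : χ ∈ D.posCone) (h' : -χ ∈ D.posCone) : χ = 0 := by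
  obtain ⟨l, rfl⟩ := D.exists_list_of_mem_posCone h
  obtain ⟨l', hl'⟩ := D.exists_list_of_mem_posCone h'
  cases l with
  | nil => rfl
  | cons β l =>
    refine absurd ?_ (D.list_sum_ne_zero (β :: l ++ l') (by simp))
    rw [List.map_append, List.sum_append, hl', add_neg_cancel]

/-- A simple root: not the sum of two positive roots. -/
def IsSimpleRoot (i : ι) : Prop := ∀ β γ, D.root i ≠ D.root β + D.root γ

lemma finite_order_wf : WellFounded fun β γ : ι => D.root γ - D.root β ∈ D.posCone ∧ β ≠ γ := by
  have : IsTrans ι fun β γ : ι => D.root γ - D.root β ∈ D.posCone ∧ β ≠ γ := ⟨by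
    rintro a b c ⟨h1, h2⟩ ⟨h3, h4⟩
    refine ⟨by simpa using add_mem h3 h1, ?_⟩
    rintro rfl
    have := D.eq_zero_of_mem_of_neg_mem h1 (by simpa using h3)
    exact h4 (D.root_inj (sub_eq_zero.1 this))⟩
  have : Std.Irrefl fun β γ : ι => D.root γ - D.root β ∈ D.posCone ∧ β ≠ γ :=
    ⟨fun a h => h.2 rfl⟩
  exact Finite.wellFounded_of_trans_of_irrefl _

/-- Sums of simple roots. -/
def simpleCone : AddSubmonoid Λ := AddSubmonoid.closure (D.root '' {i | D.IsSimpleRoot i})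

lemma root_mem_simpleCone (β : ι) : D.root β ∈ D.simpleCone := by
  induction β using D.finite_order_wf.induction with
  | _ β ih =>
  by_cases hβ : D.IsSimpleRoot β
  · exact AddSubmonoid.subset_closure ⟨β, hβ, rfl⟩
  · simp only [IsSimpleRoot, ne_eq, not_forall, not_not] at hβ
    obtain ⟨γ, δ, h⟩ := hβ
    rw [h]
    refine add_mem (ih γ ⟨?_, ?_⟩) (ih δ ⟨?_, ?_⟩)
    · rw [h]; simpa using D.root_mem_posCone δ
    · rintro rfl; simp [D.root_ne_zero] at h
    · rw [h]; simpa using D.root_mem_posCone γ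
    · rintro rfl; simp [D.root_ne_zero] at h

lemma posCone_le_simpleCone : D.posCone ≤ D.simpleCone := by
  rw [posCone, AddSubmonoid.closure_le]
  rintro _ ⟨β, rfl⟩; exact D.root_mem_simpleCone β

lemma form_nonneg_of_simple {χ ψ : Λ} (h : ∀ i, D.IsSimpleRoot i → 0 ≤ D.p i χ)
    (hψ : ψ ∈ D.posCone) : 0 ≤ D.form χ ψ := by
  replace hψ := D.posCone_le_simpleCone hψ
  induction hψ using AddSubmonoid.closure_induction with
  | mem x hx =>
    obtain ⟨i, hi, rfl⟩ := hx
    rw [form_root]; exact mul_nonneg (D.len_pos i).le (by exact_mod_cast h i hi)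
  | zero => rw [form_zero_right]
  | add x y _ _ hx hy => rw [form_add_right]; exact add_nonneg hx hy

/-- Dominance: all pairings with positive coroots are non-negative. -/
def IsDom (χ : Λ) : Prop := ∀ β, 0 ≤ D.p β χ

lemma isDom_of_simple {χ : Λ} (h : ∀ i, D.IsSimpleRoot i → 0 ≤ D.p i χ) : D.IsDom χ := by
  intro β
  have := D.form_nonneg_of_simple h (D.root_mem_posCone β)
  by_contra! hc
  rw [p_neg_iff] at hc; linarith

lemma refl_simple_aux {i : ι} (hi : D.IsSimpleRoot i) (n : ℕ) (β : ι) (hβ : β ≠ i)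
    (hn : D.p i (D.root β) = n + 1) : ∃ δ, D.root β - ((n : ℤ) + 1) • D.root i = D.root δ := by
  induction n using Nat.strong_induction_on generalizing β with
  | _ n ih =>
  obtain ⟨ε, hε⟩ : ∃ ε, D.root β - D.root i = D.root ε := by
    obtain ⟨ε, h | h⟩ := D.sub_root i β (by omega) hβ
    · exact ⟨ε, h⟩
    · refine absurd ?_ (hi β ε)
      rw [← neg_neg (D.root ε), ← h]; abel
  have hεi : ε ≠ i := by
    rintro rfl
    exact D.reduced β ε (sub_eq_iff_eq_add.1 hε)
  have hpε : D.p i (D.root ε) = n - 1 := by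
    rw [← hε, map_sub, hn, D.p_self]; ring
  obtain ⟨ζ, hζ⟩ := D.refl_root i β
  rw [hn] at hζ
  rcases hζ with hζ | hζ
  · exact ⟨ζ, hζ⟩
  rcases n with _ | _ | n
  · exact ⟨ε, by simpa using hε⟩
  · refine absurd ?_ (hi ε ζ)
    rw [← neg_neg (D.root ζ), ← hζ, ← hε]
    norm_num; rw [two_smul]; abel
  · obtain ⟨δ, hδ⟩ := ih n (by omega) ε hεi (by rw [hpε]; push_cast; ring)
    refine absurd ?_ (hi δ ζ)
    rw [← neg_neg (D.root ζ), ← hζ, ← hδ, ← hε]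
    push_cast; simp only [add_smul, one_smul]; abel

lemma refl_simple {i : ι} (hi : D.IsSimpleRoot i) {β : ι} (hβ : β ≠ i) :
    ∃ δ, D.refl i (D.root β) = D.root δ := by
  rcases lt_or_ge 0 (D.p i (D.root β)) with h | h
  · obtain ⟨n, hn⟩ : ∃ n : ℕ, D.p i (D.root β) = n + 1 :=
      ⟨(D.p i (D.root β) - 1).toNat, by omega⟩
    obtain ⟨δ, hδ⟩ := D.refl_simple_aux hi n β hβ hn
    exact ⟨δ, by rw [refl_apply, hn, hδ]⟩
  · obtain ⟨δ, hδ | hδ⟩ := D.refl_root i β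
    · exact ⟨δ, hδ⟩
    · exfalso
      obtain ⟨n, hn⟩ : ∃ n : ℕ, D.p i (D.root β) = - n := ⟨(- D.p i (D.root β)).toNat, by omega⟩
      refine D.add_ne_zero_of_mem_posCone (χ := n • D.root i + D.root δ)
        (add_mem (nsmul_mem (D.root_mem_posCone i) n) (D.root_mem_posCone δ)) β ?_
      rw [← neg_neg (D.root δ), ← hδ, hn]
      simp

/-- The positive root `± s_β γ`. -/
noncomputable def rperm (β γ : ι) : ι := (D.refl_root β γ).choose

lemma rperm_spec (β γ : ι) : D.refl β (D.root γ) = D.root (D.rperm β γ) ∨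
    D.refl β (D.root γ) = - D.root (D.rperm β γ) := (D.refl_root β γ).choose_spec

lemma refl_root_simple {i : ι} (hi : D.IsSimpleRoot i) {β : ι} (hβ : β ≠ i) :
    D.refl i (D.root β) = D.root (D.rperm i β) := by
  obtain ⟨δ, hδ⟩ := D.refl_simple hi hβ
  rcases D.rperm_spec i β with h | h
  · exact h
  · exact absurd (hδ.symm.trans h) (D.root_ne_neg _ _)

lemma rperm_rperm (β γ : ι) : D.rperm β (D.rperm β γ) = γ := by
  rcases D.rperm_spec β γ with h | h <;> rcases D.rperm_spec β (D.rperm β γ) with h' | h'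
  · rw [← h, refl_refl] at h'; exact (D.root_inj h').symm
  · rw [← h, refl_refl] at h'; exact absurd h' (D.root_ne_neg _ _)
  · rw [← neg_neg (D.root (D.rperm β γ)), ← h, map_neg, refl_refl] at h'
    exact absurd h'.symm (D.root_ne_neg _ _)
  · rw [← neg_neg (D.root (D.rperm β γ)), ← h, map_neg, refl_refl, neg_inj] at h'
    exact (D.root_inj h').symm

lemma rperm_self (β : ι) : D.rperm β β = β := by
  rcases D.rperm_spec β β with h | h
  · rw [refl_root_self] at h; exact absurd h.symm (D.root_ne_neg _ _)
  · rw [refl_root_self, neg_inj] at h; exact (D.root_inj h).symm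

lemma rperm_ne {i β : ι} (hβ : β ≠ i) : D.rperm i β ≠ i := by
  intro h
  apply hβ
  rw [← D.rperm_rperm i β, h, rperm_self]

lemma p_rperm_simple {i : ι} (hi : D.IsSimpleRoot i) {β : ι} (hβ : β ≠ i) (χ : Λ) :
    D.p (D.rperm i β) χ = D.p β (D.refl i χ) :=
  D.p_eq_of_refl_eq (D.refl_root_simple hi hβ) χ

lemma refl_refl_eq {β γ δ : ι} (h : D.refl β (D.root γ) = D.root δ) (χ : Λ) :
    D.refl β (D.refl γ χ) = D.refl δ (D.refl β χ) := by
  rw [D.refl_apply δ, D.p_eq_of_refl_eq h, refl_refl, ← h, D.refl_apply γ, map_sub, map_zsmul]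

lemma exists_simple_pos (β : ι) : ∃ i, D.IsSimpleRoot i ∧ 0 < D.p i (D.root β) := by
  by_contra! hc
  have := D.form_nonneg_of_simple (χ := - D.root β) (ψ := D.root β)
    (fun i hi => by rw [map_neg]; linarith [hc i hi]) (D.root_mem_posCone β)
  rw [form_neg_left, form_root_self] at this
  linarith [D.len_pos β]

lemma induction_simple {C : ι → Prop} (h0 : ∀ i, D.IsSimpleRoot i → C i)
    (h1 : ∀ i β, D.IsSimpleRoot i → β ≠ i → C β → C (D.rperm i β)) (β : ι) : C β := by
  induction β using D.finite_order_wf.induction with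
  | _ β ih =>
  by_cases hβ : D.IsSimpleRoot β
  · exact h0 β hβ
  obtain ⟨i, hi, hp⟩ := D.exists_simple_pos β
  have hne : β ≠ i := by rintro rfl; exact hβ hi
  rw [← D.rperm_rperm i β]
  refine h1 i _ hi (D.rperm_ne hne) (ih _ ?_)
  have h2 := D.refl_root_simple hi hne
  refine ⟨?_, ?_⟩
  · rw [← h2, refl_apply]
    obtain ⟨n, hn⟩ : ∃ n : ℕ, D.p i (D.root β) = n := ⟨(D.p i (D.root β)).toNat, by omega⟩
    rw [hn]; simpa using nsmul_mem (D.root_mem_posCone i) n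
  · intro h
    rw [h, refl_apply, sub_eq_self] at h2
    have := congrArg (D.p i) h2
    rw [map_zsmul, D.p_self, map_zero] at this
    simp only [smul_eq_mul] at this; omega

/-- The action of a word in the simple reflections. -/
def word : List ι → Λ → Λ
  | [], χ => χ
  | i :: l, χ => D.refl i (word l χ)

lemma word_append (l l' : List ι) (χ : Λ) : D.word (l ++ l') χ = D.word l (D.word l' χ) := by
  induction l with
  | nil => rfl
  | cons i l ih => simp [word, ih]

lemma word_reverse (l : List ι) (χ : Λ) : D.word l.reverse (D.word l χ) = χ := by
  induction l generalizing χ with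
  | nil => rfl
  | cons i l ih => simp [word, word_append, ih]

lemma word_add (l : List ι) (χ ψ : Λ) : D.word l (χ + ψ) = D.word l χ + D.word l ψ := by
  induction l with
  | nil => rfl
  | cons i l ih => simp [word, ih]

lemma word_neg (l : List ι) (χ : Λ) : D.word l (-χ) = - D.word l χ := by
  induction l with
  | nil => rfl
  | cons i l ih => simp [word, ih]

lemma form_word (l : List ι) (χ ψ : Λ) : D.form (D.word l χ) (D.word l ψ) = D.form χ ψ := by
  induction l with
  | nil => rfl
  | cons i l ih => simp [word, form_refl_refl, ih]

lemma exists_word_refl (β : ι) :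
    ∃ l : List ι, (∀ i ∈ l, D.IsSimpleRoot i) ∧ ∀ χ, D.refl β χ = D.word l χ := by
  induction β using D.induction_simple with
  | h0 i hi => exact ⟨[i], by simpa using hi, fun _ => rfl⟩
  | h1 i β hi hβ ih =>
    obtain ⟨l, hl, h⟩ := ih
    refine ⟨i :: (l ++ [i]), by simpa [or_imp, forall_and] using ⟨hi, hl, hi⟩, fun χ => ?_⟩
    have := D.refl_refl_eq (D.refl_root_simple hi hβ) (D.refl i χ)
    rw [refl_refl] at this
    rw [← this, h]; simp [word, word_append]

lemma exchange {a : Λ} (ha : D.IsDom a) (l : List ι) (hl : ∀ i ∈ l, D.IsSimpleRoot i) (γ : ι)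
    (h : D.p γ (D.word l a) < 0) : ∃ l' : List ι, (∀ i ∈ l', D.IsSimpleRoot i) ∧
      l'.length < l.length ∧ D.refl γ (D.word l a) = D.word l' a := by
  induction l generalizing γ with
  | nil => exact absurd h (ha γ).not_gt
  | cons j m ih =>
    have hm : ∀ i ∈ m, D.IsSimpleRoot i := fun i hi => hl i (by simp [hi])
    have hj : D.IsSimpleRoot j := hl j (by simp)
    by_cases hγ : γ = j
    · subst hγ
      exact ⟨m, hm, by simp, by simp [word]⟩
    · rw [word, ← D.p_rperm_simple hj hγ] at h
      obtain ⟨m', h1, h2, h3⟩ := ih hm _ h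
      refine ⟨j :: m', by simpa using ⟨hj, h1⟩, by simpa using h2, ?_⟩
      have := D.refl_refl_eq (D.refl_root_simple hj (D.rperm_ne hγ)) (D.word m a)
      rw [rperm_rperm] at this
      rw [word, word, ← this, h3]

lemma dom_unique_word {a b : Λ} (ha : D.IsDom a) (hb : D.IsDom b) (l : List ι)
    (hl : ∀ i ∈ l, D.IsSimpleRoot i) (h : D.word l a = b) : b = a := by
  induction hn : l.length using Nat.strong_induction_on generalizing l with
  | _ n ih =>
  obtain _ | ⟨i, l⟩ := l
  · exact h.symm
  have hl' : ∀ j ∈ l, D.IsSimpleRoot j := fun j hj => hl j (by simp [hj])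
  have hp : D.p i (D.word l a) = - D.p i b := by rw [← h, word, p_refl_self, neg_neg]
  rcases (hb i).eq_or_lt with h0 | h0
  · refine ih l.length (by rw [← hn]; simp) l hl' ?_ rfl
    rw [← h, word, refl_apply, hp, ← h0]; simp
  · obtain ⟨l', h1, h2, h3⟩ := D.exchange ha l hl' i (by omega)
    refine ih l'.length (by rw [← hn]; simp; omega) l' h1 ?_ rfl
    rw [← h3, ← h, word]

/-- Conjugacy under the Weyl group. -/
def Conj (χ ψ : Λ) : Prop := ∃ l : List ι, D.word l χ = ψ

lemma Conj.symm {χ ψ : Λ} (h : D.Conj χ ψ) : D.Conj ψ χ := by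
  obtain ⟨l, rfl⟩ := h; exact ⟨l.reverse, D.word_reverse l χ⟩

lemma Conj.trans {χ ψ θ : Λ} (h : D.Conj χ ψ) (h' : D.Conj ψ θ) : D.Conj χ θ := by
  obtain ⟨l, rfl⟩ := h; obtain ⟨l', rfl⟩ := h'; exact ⟨l' ++ l, D.word_append _ _ _⟩

lemma exists_simple_word (l : List ι) :
    ∃ l' : List ι, (∀ i ∈ l', D.IsSimpleRoot i) ∧ ∀ χ, D.word l χ = D.word l' χ := by
  induction l with
  | nil => exact ⟨[], by simp, fun _ => rfl⟩
  | cons β l ih =>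
    obtain ⟨l1, h1, h2⟩ := ih
    obtain ⟨l2, h3, h4⟩ := D.exists_word_refl β
    refine ⟨l2 ++ l1, by simpa [or_imp, forall_and] using ⟨h3, h1⟩, fun χ => ?_⟩
    rw [word, h4, h2, word_append]

lemma Conj.eq_of_isDom {a b : Λ} (h : D.Conj a b) (ha : D.IsDom a) (hb : D.IsDom b) : b = a := by
  obtain ⟨l, h⟩ := h
  obtain ⟨l', h1, h2⟩ := D.exists_simple_word l
  exact D.dom_unique_word ha hb l' h1 (by rw [← h2, h])

/-- Twice the half sum of positive roots. -/
def twoRho : Λ := ∑ β, D.root β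

lemma refl_twoRho [DecidableEq ι] {i : ι} (hi : D.IsSimpleRoot i) :
    D.refl i D.twoRho = D.twoRho - 2 • D.root i := by
  unfold twoRho
  rw [← Finset.add_sum_erase _ _ (Finset.mem_univ i), map_add, map_sum, refl_root_self]
  have : ∑ x ∈ Finset.univ.erase i, D.refl i (D.root x) =
      ∑ x ∈ Finset.univ.erase i, D.root x := by
    refine Finset.sum_bij' (fun x _ => D.rperm i x) (fun x _ => D.rperm i x) ?_ ?_ ?_ ?_ ?_
    · intro x hx; simpa using D.rperm_ne (by simpa using hx)
    · intro x hx; simpa using D.rperm_ne (by simpa using hx)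
    · intro x _; exact D.rperm_rperm i x
    · intro x _; exact D.rperm_rperm i x
    · intro x hx; exact D.refl_root_simple hi (by simpa using hx)
  rw [this, two_smul]; abel

lemma p_twoRho_simple {i : ι} (hi : D.IsSimpleRoot i) : D.p i D.twoRho = 2 := by
  classical
  have := congrArg (D.p i) (D.refl_twoRho hi)
  rw [p_refl_self, map_sub, map_nsmul, D.p_self] at this
  simp only [nsmul_eq_mul] at this
  push_cast at this; omega

lemma even_p_twoRho (β : ι) : Even (D.p β D.twoRho) := by
  classical
  induction β using D.induction_simple with
  | h0 i hi => rw [D.p_twoRho_simple hi]; exact even_two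
  | h1 i β hi hβ ih =>
    rw [D.p_rperm_simple hi hβ, D.refl_twoRho hi, map_sub, map_nsmul]
    exact ih.sub (by simp)

lemma p_twoRho_pos (β : ι) : 0 < D.p β D.twoRho := by
  rw [p_pos_iff]
  have h : ∀ ψ ∈ D.simpleCone, ψ = 0 ∨ 0 < D.form D.twoRho ψ := by
    intro ψ hψ
    induction hψ using AddSubmonoid.closure_induction with
    | mem x hx =>
      obtain ⟨i, hi, rfl⟩ := hx
      right; rw [← p_pos_iff, D.p_twoRho_simple hi]; norm_num
    | zero => exact Or.inl rfl
    | add x y _ _ hx hy =>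
      rcases hx with rfl | hx
      · simpa using hy
      rcases hy with rfl | hy
      · right; simpa using hx
      · right; rw [form_add_right]; exact add_pos hx hy
  exact (h _ (D.root_mem_simpleCone β)).resolve_left (D.root_ne_zero β)

lemma eq_zero_of_zsmul (D : PosRootDatum ι Λ) {n : ℤ} (hn : n ≠ 0) {χ : Λ} (h : n • χ = 0) : χ = 0 := by
  refine D.nondeg χ fun β => ?_
  have := congrArg (D.p β) h
  simpa [hn] using this

end PosRootDatum

namespace PosRootDatum

variable {ι Λ : Type*} [Fintype ι] [AddCommGroup Λ] (D : PosRootDatum ι Λ)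

/-- The number of positive roots pairing negatively with `η`. -/
def negCount (η : Λ) : ℕ := (Finset.univ.filter fun β => D.p β η < 0).card

lemma p_root_pos_of_refl_neg {β γ : ι} (h : D.refl β (D.root γ) = - D.root (D.rperm β γ)) :
    0 < D.p β (D.root γ) := by
  by_contra! hc
  obtain ⟨n, hn⟩ : ∃ n : ℕ, D.p β (D.root γ) = - n := ⟨(- D.p β (D.root γ)).toNat, by omega⟩
  refine D.add_ne_zero_of_mem_posCone (χ := n • D.root β + D.root (D.rperm β γ))
    (add_mem (nsmul_mem (D.root_mem_posCone β) n) (D.root_mem_posCone _)) γ ?_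
  rw [← neg_neg (D.root (D.rperm β γ)), ← h, refl_apply, hn]
  simp

lemma p_root_pos_symm {β γ : ι} (h : 0 < D.p β (D.root γ)) : 0 < D.p γ (D.root β) := by
  rw [p_pos_iff] at *; rwa [form_comm]

open Classical in
lemma negCount_refl_lt {β : ι} {η : Λ} (h : D.p β η < 0) :
    D.negCount (D.refl β η) < D.negCount η := by
  let g : ι → ι := fun γ => if D.refl β (D.root γ) = D.root (D.rperm β γ) then D.rperm β γ else γ
  have hne : ∀ γ, D.refl β (D.root γ) ≠ D.root (D.rperm β γ) →
      D.refl β (D.root γ) = - D.root (D.rperm β γ) := fun γ hγ => (D.rperm_spec β γ).resolve_left hγ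
  have hpos : ∀ γ, D.refl β (D.root γ) = D.root (D.rperm β γ) →
      D.refl β (D.root (D.rperm β γ)) = D.root (D.rperm β (D.rperm β γ)) := fun γ hγ => by
    rw [rperm_rperm, ← hγ, refl_refl]
  have hinj : Set.InjOn g (Finset.univ.filter fun γ => D.p γ (D.refl β η) < 0) := by
    intro γ _ γ' _ hg
    simp only [g] at hg
    split_ifs at hg with h1 h2 h2
    · rw [← D.rperm_rperm β γ, hg, rperm_rperm]
    · exact absurd (hg ▸ hpos γ h1) h2
    · exact absurd (hg ▸ hpos γ' h2) h1
    · exact hg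
  unfold negCount
  rw [← Finset.card_image_of_injOn hinj]
  apply Finset.card_lt_card
  rw [Finset.ssubset_iff_of_subset]
  · refine ⟨β, by simpa using h, ?_⟩
    simp only [Finset.mem_image, Finset.mem_filter, Finset.mem_univ, true_and, not_exists, not_and]
    intro γ hγ hg
    simp only [g] at hg
    split_ifs at hg with h1
    · have : γ = β := by rw [← D.rperm_rperm β γ, hg, rperm_self]
      subst this
      rw [hg, refl_root_self] at h1
      exact D.root_ne_neg _ _ h1.symm
    · subst hg
      rw [p_refl_self] at hγ; omega
  · intro δ hδ
    simp only [Finset.mem_image, Finset.mem_filter, Finset.mem_univ, true_and] at hδ ⊢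
    obtain ⟨γ, hγ, rfl⟩ := hδ
    simp only [g]
    split_ifs with h1
    · rwa [D.p_eq_of_refl_eq h1]
    · have h2 := D.p_root_pos_symm (D.p_root_pos_of_refl_neg (hne γ h1))
      rw [refl_apply, map_sub, map_zsmul, smul_eq_mul] at hγ
      nlinarith

lemma negCount_refl_simple {i : ι} (hi : D.IsSimpleRoot i) {η : Λ} (h : D.p i η < 0) :
    D.negCount (D.refl i η) + 1 = D.negCount η := by
  classical
  unfold negCount
  have h1 : (Finset.univ.filter fun β => D.p β η < 0) =
      insert i ((Finset.univ.filter fun β => D.p β (D.refl i η) < 0).image (D.rperm i)) := by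
    ext γ
    simp only [Finset.mem_filter, Finset.mem_univ, true_and, Finset.mem_insert, Finset.mem_image]
    constructor
    · intro hγ
      by_cases hγi : γ = i
      · exact Or.inl hγi
      · refine Or.inr ⟨D.rperm i γ, ?_, D.rperm_rperm i γ⟩
        rwa [D.p_rperm_simple hi hγi, refl_refl]
    · rintro (rfl | ⟨δ, hδ, rfl⟩)
      · exact h
      · by_cases hδi : δ = i
        · subst hδi; rw [p_refl_self] at hδ; omega
        · rwa [D.p_rperm_simple hi hδi]
  rw [h1, Finset.card_insert_of_notMem, Finset.card_image_of_injective]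
  · exact Function.LeftInverse.injective (D.rperm_rperm i)
  · simp only [Finset.mem_filter, Finset.mem_univ, true_and, Finset.mem_image, not_exists, not_and]
    intro γ hγ hg
    have : γ = i := by rw [← D.rperm_rperm i γ, hg, rperm_self]
    subst this
    rw [p_refl_self] at hγ; omega

lemma negCount_refl_simple_pos {i : ι} (hi : D.IsSimpleRoot i) {η : Λ} (h : 0 < D.p i η) :
    D.negCount (D.refl i η) = D.negCount η + 1 := by
  have := D.negCount_refl_simple hi (η := D.refl i η) (by rw [p_refl_self]; omega)
  rw [refl_refl] at this; exact this.symm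

lemma refl_of_p_eq_zero {i : ι} {η : Λ} (h : D.p i η = 0) : D.refl i η = η := by
  simp [refl_apply, h]

/-- A covering step in the Bruhat order of an orbit, integral at time `k / N`. -/
def Edge (N k : ℕ) (η η' : Λ) : Prop :=
  ∃ β, D.p β η < 0 ∧ (N : ℤ) ∣ k * D.p β η ∧ η' = D.refl β η ∧ D.negCount η = D.negCount η' + 1

/-- Chains of integral covering steps. -/
def Chain (N k : ℕ) : Λ → Λ → Prop := Relation.ReflTransGen (D.Edge N k)

variable {D} {N k : ℕ} {i : ι} {η η' : Λ}

lemma edge_simple (hi : D.IsSimpleRoot i) (h : D.p i η < 0) (hk : (N : ℤ) ∣ k * D.p i η) :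
    D.Edge N k η (D.refl i η) :=
  ⟨i, h, hk, rfl, (D.negCount_refl_simple hi h).symm⟩

lemma Edge.dvd_sub (h : D.Edge N k η η') (i : ι) :
    (N : ℤ) ∣ k * D.p i η' - k * D.p i η := by
  obtain ⟨β, _, h2, rfl, _⟩ := h
  rw [refl_apply, map_sub, map_zsmul, smul_eq_mul]
  obtain ⟨c, hc⟩ := h2
  exact ⟨-(c * D.p i (D.root β)), by linear_combination (-(D.p i (D.root β))) * hc⟩

lemma Chain.dvd_sub (h : D.Chain N k η η') (i : ι) :
    (N : ℤ) ∣ k * D.p i η' - k * D.p i η := by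
  induction h with
  | refl => simp
  | tail _ h2 ih => simpa using dvd_add (h2.dvd_sub i) ih

lemma Edge.cases_simple (hi : D.IsSimpleRoot i) (h : D.Edge N k η η') :
    (η' = D.refl i η ∧ D.p i η < 0 ∧ (N : ℤ) ∣ k * D.p i η) ∨
    ((D.p i η < 0 → D.p i η' < 0 ∧ D.Edge N k (D.refl i η) (D.refl i η')) ∧
      (0 < D.p i η' → 0 < D.p i η ∧ D.Edge N k (D.refl i η) (D.refl i η'))) := by
  obtain ⟨β, h1, h2, h3, h4⟩ := h
  by_cases hβ : β = i
  · subst hβ; exact Or.inl ⟨h3, h1, h2⟩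
  right
  have hp : D.p (D.rperm i β) (D.refl i η) = D.p β η := by
    rw [D.p_rperm_simple hi hβ, refl_refl]
  have hr : D.refl i η' = D.refl (D.rperm i β) (D.refl i η) := by
    rw [h3, D.refl_refl_eq (D.refl_root_simple hi hβ)]
  have hS : D.negCount (D.refl i η') < D.negCount (D.refl i η) := by
    rw [hr]; exact D.negCount_refl_lt (by rwa [hp])
  have hedge : D.negCount (D.refl i η) = D.negCount (D.refl i η') + 1 →
      D.Edge N k (D.refl i η) (D.refl i η') := fun hc =>
    ⟨D.rperm i β, by rwa [hp], by rwa [hp], hr, hc⟩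
  constructor
  · intro hη
    have e1 := D.negCount_refl_simple hi hη
    have : D.p i η' < 0 := by
      by_contra! hc
      rcases hc.eq_or_lt with hc | hc
      · rw [D.refl_of_p_eq_zero hc.symm] at hS; omega
      · have := D.negCount_refl_simple_pos hi hc; omega
    have e2 := D.negCount_refl_simple hi this
    exact ⟨this, hedge (by omega)⟩
  · intro hη
    have e1 := D.negCount_refl_simple_pos hi hη
    have : 0 < D.p i η := by
      by_contra! hc
      rcases hc.eq_or_lt with hc | hc
      · rw [D.refl_of_p_eq_zero hc] at hS; omega
      · have := D.negCount_refl_simple hi hc; omega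
    have e2 := D.negCount_refl_simple_pos hi this
    exact ⟨this, hedge (by omega)⟩

lemma Chain.of_not_dvd_neg (hi : D.IsSimpleRoot i) (h : D.Chain N k η η') (h1 : D.p i η < 0)
    (h2 : ¬ (N : ℤ) ∣ k * D.p i η) : D.p i η' < 0 ∧ D.Chain N k (D.refl i η) (D.refl i η') := by
  induction h with
  | refl => exact ⟨h1, .refl⟩
  | tail hc he ih =>
    rcases he.cases_simple hi with h3 | h3
    · exact absurd ((dvd_sub_right h3.2.2).1 (Chain.dvd_sub hc i)) h2
    · obtain ⟨h4, h5⟩ := h3.1 ih.1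
      exact ⟨h4, ih.2.tail h5⟩

lemma Chain.of_not_dvd_pos (hi : D.IsSimpleRoot i) (h : D.Chain N k η η') (h1 : 0 < D.p i η')
    (h2 : ¬ (N : ℤ) ∣ k * D.p i η') : 0 < D.p i η ∧ D.Chain N k (D.refl i η) (D.refl i η') := by
  induction h using Relation.ReflTransGen.head_induction_on with
  | refl => exact ⟨h1, .refl⟩
  | head he hc ih =>
    rcases he.cases_simple hi with h3 | h3
    · have := dvd_add (Chain.dvd_sub hc i) (he.dvd_sub i)
      rw [sub_add_sub_cancel] at this
      exact absurd ((dvd_sub_left h3.2.2).1 this) h2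
    · obtain ⟨h4, h5⟩ := h3.2 ih.1
      exact ⟨h4, ih.2.head h5⟩

lemma Chain.of_neg (hi : D.IsSimpleRoot i) (h : D.Chain N k η η') (h1 : D.p i η < 0) :
    (D.p i η' < 0 ∧ D.Chain N k (D.refl i η) (D.refl i η')) ∨ D.Chain N k (D.refl i η) η' := by
  induction h with
  | refl => exact Or.inl ⟨h1, .refl⟩
  | tail hc he ih =>
    rcases ih with ih | ih
    · rcases he.cases_simple hi with h3 | h3
      · right; rw [h3.1]; exact ih.2
      · obtain ⟨h4, h5⟩ := h3.1 ih.1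
        exact Or.inl ⟨h4, ih.2.tail h5⟩
    · exact Or.inr (ih.tail he)

lemma Chain.of_pos (hi : D.IsSimpleRoot i) (h : D.Chain N k η η') (h1 : 0 < D.p i η') :
    (0 < D.p i η ∧ D.Chain N k (D.refl i η) (D.refl i η')) ∨ D.Chain N k η (D.refl i η') := by
  induction h using Relation.ReflTransGen.head_induction_on with
  | refl => exact Or.inl ⟨h1, .refl⟩
  | head he hc ih =>
    rcases ih with ih | ih
    · rcases he.cases_simple hi with h3 | h3
      · right; rw [h3.1, refl_refl] at ih; exact ih.2
      · obtain ⟨h4, h5⟩ := h3.2 ih.1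
        exact Or.inl ⟨h4, ih.2.head h5⟩
    · exact Or.inr (ih.head he)

end PosRootDatum

namespace PosRootDatum

variable {ι Λ : Type*} [Fintype ι] [AddCommGroup Λ] (D : PosRootDatum ι Λ)

/-- `O` is a Weyl-stable set of directions and `N` is divisible by all pairings on `O`. -/
structure PathSetup (O : Finset Λ) (N : ℕ) : Prop where
  pos : 0 < N
  stable : ∀ η ∈ O, ∀ β, D.refl β η ∈ O
  dvd : ∀ η ∈ O, ∀ β, D.p β η ≠ 0 → D.p β η ∣ (N : ℤ)

/-- Lakshmibai–Seshadri paths with directions in `O` and `N` steps. -/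
structure IsPath (O : Finset Λ) (N : ℕ) (d : ℕ → Λ) : Prop where
  mem : ∀ k < N, d k ∈ O
  zero : ∀ k, N ≤ k → d k = 0
  chain : ∀ k, k + 1 < N → D.Chain N (k + 1) (d k) (d (k + 1))

/-- The position of a path after `k` steps. -/
def pt (d : ℕ → Λ) (k : ℕ) : Λ := ∑ l ∈ Finset.range k, d l

@[simp] lemma pt_zero (d : ℕ → Λ) : pt d 0 = 0 := rfl

lemma pt_succ (d : ℕ → Λ) (k : ℕ) : pt d (k + 1) = pt d k + d k := Finset.sum_range_succ _ _

lemma pt_congr {d d' : ℕ → Λ} {t : ℕ} (h : ∀ l < t, d l = d' l) : pt d t = pt d' t :=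
  Finset.sum_congr rfl fun l hl => h l (Finset.mem_range.1 hl)

variable {D} {O : Finset Λ} {N : ℕ} {d : ℕ → Λ} {i : ι}

namespace IsPath

lemma dvd_height (h : D.IsPath O N d) (i : ι) (k : ℕ) (hk : k < N) :
    (N : ℤ) ∣ k * D.p i (d k) - D.p i (pt d k) := by
  induction k with
  | zero => simp
  | succ k ih =>
    have h1 := (h.chain k hk).dvd_sub i
    have h2 := dvd_add h1 (ih (by omega))
    refine (congrArg ((N : ℤ) ∣ ·) ?_).mpr h2
    rw [pt_succ, map_add]; push_cast; ring

lemma dvd_height' (h : D.IsPath O N d) (i : ι) (k : ℕ) (hk : k < N) :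
    (N : ℤ) ∣ ((k + 1 : ℕ) : ℤ) * D.p i (d k) - D.p i (pt d (k + 1)) := by
  refine (congrArg ((N : ℤ) ∣ ·) ?_).mpr (h.dvd_height i k hk)
  rw [pt_succ, map_add]; push_cast; ring

lemma dvd_height_end (h : D.IsPath O N d) (i : ι) : (N : ℤ) ∣ D.p i (pt d N) := by
  rcases N with _ | n
  · simp
  · have := h.dvd_height' i n (by omega)
    exact (dvd_sub_right (dvd_mul_right _ _)).1 this

lemma slope_dvd (hS : D.PathSetup O N) (h : D.IsPath O N d) (i : ι) {k : ℕ} (hk : k < N) {m : ℤ}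
    (hm : (N : ℤ) ∣ m) (h0 : D.p i (d k) ≠ 0) : D.p i (d k) ∣ m - D.p i (pt d k) := by
  have h1 := hS.dvd _ (h.mem k hk) i h0
  have h2 := h1.trans (h.dvd_height i k hk)
  exact dvd_sub (h1.trans hm) ((dvd_sub_right (dvd_mul_left _ _)).1 h2)

lemma step_le (hS : D.PathSetup O N) (h : D.IsPath O N d) (i : ι) {k : ℕ} (hk : k < N) {m : ℤ}
    (hm : (N : ℤ) ∣ m) (hlt : D.p i (pt d k) < m) : D.p i (pt d (k + 1)) ≤ m := by
  rw [pt_succ, map_add]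
  rcases le_or_gt (D.p i (d k)) 0 with h0 | h0
  · omega
  · have := Int.le_of_dvd (by omega) (h.slope_dvd hS i hk hm h0.ne')
    omega

lemma le_step (hS : D.PathSetup O N) (h : D.IsPath O N d) (i : ι) {k : ℕ} (hk : k < N) {m : ℤ}
    (hm : (N : ℤ) ∣ m) (hlt : m < D.p i (pt d k)) : m ≤ D.p i (pt d (k + 1)) := by
  rw [pt_succ, map_add]
  rcases le_or_gt 0 (D.p i (d k)) with h0 | h0
  · omega
  · have := Int.le_of_dvd (by omega)
      ((neg_dvd.2 (dvd_neg.2 (h.slope_dvd hS i hk hm h0.ne))) :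
        -D.p i (d k) ∣ -(m - D.p i (pt d k)))
    omega

lemma neg_step (hi : D.IsSimpleRoot i) (h : D.IsPath O N d) {k : ℕ} (hk : k + 1 < N)
    (hd : ¬ (N : ℤ) ∣ D.p i (pt d (k + 1))) (hs : D.p i (d k) < 0) :
    D.p i (d (k + 1)) < 0 ∧ D.Chain N (k + 1) (D.refl i (d k)) (D.refl i (d (k + 1))) := by
  refine (h.chain k hk).of_not_dvd_neg hi hs fun hc => hd ?_
  exact (dvd_sub_right hc).1 (h.dvd_height' i k (by omega))

lemma pos_step (hi : D.IsSimpleRoot i) (h : D.IsPath O N d) {k : ℕ} (hk : k + 1 < N)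
    (hd : ¬ (N : ℤ) ∣ D.p i (pt d (k + 1))) (hs : 0 < D.p i (d (k + 1))) :
    0 < D.p i (d k) ∧ D.Chain N (k + 1) (D.refl i (d k)) (D.refl i (d (k + 1))) := by
  refine (h.chain k hk).of_not_dvd_pos hi hs fun hc => hd ?_
  exact (dvd_sub_right hc).1 (h.dvd_height i (k + 1) hk)

/-- Local minima of the height function are multiples of `N`. -/
lemma exists_min (hi : D.IsSimpleRoot i) (h : D.IsPath O N d) {a b : ℕ} (hab : a ≤ b) (hb : b ≤ N)
    (ha' : (N : ℤ) ∣ D.p i (pt d a)) (hb' : (N : ℤ) ∣ D.p i (pt d b)) :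
    ∃ l, a ≤ l ∧ l ≤ b ∧ (∀ l', a ≤ l' → l' ≤ b → D.p i (pt d l) ≤ D.p i (pt d l')) ∧
      (N : ℤ) ∣ D.p i (pt d l) := by
  classical
  have hex : ∃ l, a ≤ l ∧ l ≤ b ∧ ∀ l', a ≤ l' → l' ≤ b → D.p i (pt d l) ≤ D.p i (pt d l') := by
    obtain ⟨l, hl, hl'⟩ := Finset.exists_min_image (Finset.Icc a b) (fun l => D.p i (pt d l))
      ⟨a, by simpa using hab⟩
    rw [Finset.mem_Icc] at hl
    exact ⟨l, hl.1, hl.2, fun l' h1 h2 => hl' l' (Finset.mem_Icc.2 ⟨h1, h2⟩)⟩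
  obtain ⟨h1, h2, h3⟩ := Nat.find_spec hex
  refine ⟨Nat.find hex, h1, h2, h3, ?_⟩
  by_contra hc
  generalize hl : Nat.find hex = l at *
  have hla : l ≠ a := by rintro rfl; exact hc ha'
  have hlb : l ≠ b := by rintro rfl; exact hc hb'
  obtain ⟨k, rfl⟩ : ∃ k, l = k + 1 := ⟨l - 1, by omega⟩
  have h4 : D.p i (pt d (k + 1)) < D.p i (pt d k) := by
    by_contra! h5
    exact Nat.find_min hex (m := k) (by omega)
      ⟨by omega, by omega, fun l' h6 h7 => h5.trans (h3 l' h6 h7)⟩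
  have h5 := (h.neg_step hi (k := k) (by omega) hc (by rw [pt_succ, map_add] at h4; omega)).1
  have h6 := h3 (k + 2) (by omega) (by omega)
  rw [pt_succ d (k + 1), map_add] at h6; omega

lemma add_le_of_lt (hi : D.IsSimpleRoot i) (h : D.IsPath O N d) {a b : ℕ} (hab : a ≤ b)
    (hb : b ≤ N) (ha' : (N : ℤ) ∣ D.p i (pt d a)) (hb' : (N : ℤ) ∣ D.p i (pt d b)) {m : ℤ}
    (hm : (N : ℤ) ∣ m) (hlt : ∀ l, a ≤ l → l ≤ b → m < D.p i (pt d l)) :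
    ∀ l, a ≤ l → l ≤ b → m + N ≤ D.p i (pt d l) := by
  intro l h1 h2
  obtain ⟨l0, h3, h4, h5, h6⟩ := h.exists_min hi hab hb ha' hb'
  have := Int.le_of_dvd (by linarith [hlt l0 h3 h4]) (dvd_sub h6 hm)
  linarith [h5 l h1 h2]

end IsPath

/-- Replace the steps with index in `[p, q)` by their reflections. -/
def flip (D : PosRootDatum ι Λ) (i : ι) (p q : ℕ) (d : ℕ → Λ) : ℕ → Λ :=
  fun l => if p ≤ l ∧ l < q then D.refl i (d l) else d l

lemma flip_of_mem {p q l : ℕ} (h1 : p ≤ l) (h2 : l < q) : flip D i p q d l = D.refl i (d l) :=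
  if_pos ⟨h1, h2⟩

lemma flip_of_lt {p q l : ℕ} (h1 : l < p) : flip D i p q d l = d l :=
  if_neg (by omega)

lemma flip_of_ge {p q l : ℕ} (h1 : q ≤ l) : flip D i p q d l = d l :=
  if_neg (by omega)

lemma flip_flip {p q : ℕ} : flip D i p q (flip D i p q d) = d := by
  funext l
  unfold flip
  split_ifs <;> simp

lemma pt_flip_of_le {p q l : ℕ} (h : l ≤ p) : pt (flip D i p q d) l = pt d l :=
  pt_congr fun l' hl' => flip_of_lt (by omega)

lemma pt_flip_of_mem {p q l : ℕ} (h1 : p ≤ l) (h2 : l ≤ q) : pt (flip D i p q d) l =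
    pt d l - (D.p i (pt d l) - D.p i (pt d p)) • D.root i := by
  induction l, h1 using Nat.le_induction with
  | base => rw [pt_flip_of_le le_rfl]; simp
  | succ l hl ih =>
    rw [pt_succ, ih (by omega), flip_of_mem hl (by omega), pt_succ, refl_apply, map_add]
    simp only [sub_smul, add_smul]; abel

lemma pt_flip_of_ge {p q l : ℕ} (h0 : p ≤ q) (h1 : q ≤ l) : pt (flip D i p q d) l =
    pt d l - (D.p i (pt d q) - D.p i (pt d p)) • D.root i := by
  induction l, h1 using Nat.le_induction with
  | base => rw [pt_flip_of_mem h0 le_rfl]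
  | succ l hl ih =>
    rw [pt_succ, ih, flip_of_ge hl, pt_succ]; abel

lemma p_pt_flip_of_mem {p q l : ℕ} (h1 : p ≤ l) (h2 : l ≤ q) : D.p i (pt (flip D i p q d) l) =
    2 * D.p i (pt d p) - D.p i (pt d l) := by
  rw [pt_flip_of_mem h1 h2, map_sub, map_zsmul, D.p_self, smul_eq_mul]; ring

lemma p_pt_flip_of_ge {p q l : ℕ} (h0 : p ≤ q) (h1 : q ≤ l) : D.p i (pt (flip D i p q d) l) =
    D.p i (pt d l) - 2 * (D.p i (pt d q) - D.p i (pt d p)) := by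
  rw [pt_flip_of_ge h0 h1, map_sub, map_zsmul, D.p_self, smul_eq_mul]; ring

variable (D) in
/-- `[p, q]` is the interval on which the raising operator acts. -/
structure RaisesAt (N : ℕ) (i : ι) (d : ℕ → Λ) (p q : ℕ) (m : ℤ) : Prop where
  lt : p < q
  le : q ≤ N
  dvd : (N : ℤ) ∣ m
  hp : D.p i (pt d p) = m + N
  hq : D.p i (pt d q) = m
  left : ∀ l ≤ p, m + N ≤ D.p i (pt d l)
  mid : ∀ l, p < l → l < q → m < D.p i (pt d l) ∧ D.p i (pt d l) < m + N
  right : ∀ l, q ≤ l → l ≤ N → m ≤ D.p i (pt d l)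

variable (D) in
/-- `[p, q]` is the interval on which the lowering operator acts. -/
structure LowersAt (N : ℕ) (i : ι) (d : ℕ → Λ) (p q : ℕ) (m : ℤ) : Prop where
  lt : p < q
  le : q ≤ N
  dvd : (N : ℤ) ∣ m
  hp : D.p i (pt d p) = m
  hq : D.p i (pt d q) = m + N
  left : ∀ l ≤ p, m ≤ D.p i (pt d l)
  mid : ∀ l, p < l → l < q → m < D.p i (pt d l) ∧ D.p i (pt d l) < m + N
  right : ∀ l, q ≤ l → l ≤ N → m + N ≤ D.p i (pt d l)

lemma RaisesAt.flip {p q : ℕ} {m : ℤ} (h : D.RaisesAt N i d p q m) :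
    D.LowersAt N i (flip D i p q d) p q (m + N) where
  lt := h.lt
  le := h.le
  dvd := dvd_add h.dvd dvd_rfl
  hp := by rw [pt_flip_of_le le_rfl, h.hp]
  hq := by rw [p_pt_flip_of_mem h.lt.le le_rfl, h.hp, h.hq]; ring
  left l hl := by rw [pt_flip_of_le hl]; exact h.left l hl
  mid l h1 h2 := by
    rw [p_pt_flip_of_mem h1.le h2.le, h.hp]; have := h.mid l h1 h2; constructor <;> linarith
  right l h1 h2 := by
    rw [p_pt_flip_of_ge h.lt.le h1, h.hp, h.hq]; linarith [h.right l h1 h2]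

lemma LowersAt.flip {p q : ℕ} {m : ℤ} (h : D.LowersAt N i d p q m) :
    D.RaisesAt N i (flip D i p q d) p q (m - N) where
  lt := h.lt
  le := h.le
  dvd := dvd_sub h.dvd dvd_rfl
  hp := by rw [pt_flip_of_le le_rfl, h.hp]; ring
  hq := by rw [p_pt_flip_of_mem h.lt.le le_rfl, h.hp, h.hq]; ring
  left l hl := by rw [pt_flip_of_le hl]; linarith [h.left l hl]
  mid l h1 h2 := by
    rw [p_pt_flip_of_mem h1.le h2.le, h.hp]; have := h.mid l h1 h2; constructor <;> linarith
  right l h1 h2 := by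
    rw [p_pt_flip_of_ge h.lt.le h1, h.hp, h.hq]; linarith [h.right l h1 h2]

lemma RaisesAt.min_unique (hN : 0 < N) {p q p' q' : ℕ} {m m' : ℤ} (h : D.RaisesAt N i d p q m)
    (h' : D.RaisesAt N i d p' q' m') : m ≤ m' := by
  rw [← h'.hq]
  rcases le_or_gt q' p with h1 | h1
  · linarith [h.left q' h1, (Nat.cast_pos (α := ℤ)).2 hN]
  rcases lt_or_ge q' q with h2 | h2
  · exact (h.mid q' h1 h2).1.le
  · exact h.right q' h2 h'.le

lemma RaisesAt.unique (hN : 0 < N) {p q p' q' : ℕ} {m m' : ℤ} (h : D.RaisesAt N i d p q m)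
    (h' : D.RaisesAt N i d p' q' m') : p = p' ∧ q = q' ∧ m = m' := by
  obtain rfl := le_antisymm (h.min_unique hN h') (h'.min_unique hN h)
  have hN' := (Nat.cast_pos (α := ℤ)).2 hN
  have key : ∀ {p q p' q'}, D.RaisesAt N i d p q m → D.RaisesAt N i d p' q' m → q ≤ q' := by
    intro p q p' q' h h'
    by_contra! hc
    rcases le_or_gt q' p with h1 | h1
    · linarith [h.left q' h1, h'.hq]
    · linarith [(h.mid q' h1 hc).1, h'.hq]
  obtain rfl := le_antisymm (key h h') (key h' h)
  have key' : ∀ {p p'}, D.RaisesAt N i d p q m → D.RaisesAt N i d p' q m → p ≤ p' := by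
    intro p p' h h'
    by_contra! hc
    linarith [(h'.mid p hc h.lt).2, h.hp]
  exact ⟨le_antisymm (key' h h') (key' h' h), rfl, rfl⟩

lemma LowersAt.min_unique (hN : 0 < N) {p q p' q' : ℕ} {m m' : ℤ} (h : D.LowersAt N i d p q m)
    (h' : D.LowersAt N i d p' q' m') : m ≤ m' := by
  rw [← h'.hp]
  rcases le_or_gt p' p with h1 | h1
  · exact h.left p' h1
  rcases lt_or_ge p' q with h2 | h2
  · exact (h.mid p' h1 h2).1.le
  · linarith [h.right p' h2 (h'.lt.le.trans h'.le)]

lemma LowersAt.unique (hN : 0 < N) {p q p' q' : ℕ} {m m' : ℤ} (h : D.LowersAt N i d p q m)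
    (h' : D.LowersAt N i d p' q' m') : p = p' ∧ q = q' ∧ m = m' := by
  obtain rfl := le_antisymm (h.min_unique hN h') (h'.min_unique hN h)
  have hN' := (Nat.cast_pos (α := ℤ)).2 hN
  have key : ∀ {p q p' q'}, D.LowersAt N i d p q m → D.LowersAt N i d p' q' m → p' ≤ p := by
    intro p q p' q' h h'
    by_contra! hc
    rcases lt_or_ge p' q with h1 | h1
    · linarith [(h.mid p' hc h1).1, h'.hp]
    · linarith [h.right p' h1 (h'.lt.le.trans h'.le), h'.hp]
  obtain rfl := le_antisymm (key h' h) (key h h')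
  have key' : ∀ {q q'}, D.LowersAt N i d p q m → D.LowersAt N i d p q' m → q' ≤ q := by
    intro q q' h h'
    by_contra! hc
    linarith [(h'.mid q h.lt hc).2, h.hq]
  exact ⟨rfl, le_antisymm (key' h' h) (key' h h'), rfl⟩

lemma IsPath.exists_raisesAt (hS : D.PathSetup O N) (hi : D.IsSimpleRoot i) (h : D.IsPath O N d)
    {t : ℕ} (ht : t ≤ N) (hneg : D.p i (pt d t) ≤ -N) : ∃ p q m, D.RaisesAt N i d p q m := by
  classical
  have hN := (Nat.cast_pos (α := ℤ)).2 hS.pos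
  obtain ⟨l, -, hl, hmin, hdvd⟩ := h.exists_min hi (Nat.zero_le N) le_rfl (by simp)
    (h.dvd_height_end i)
  set m := D.p i (pt d l) with hm
  have hmN : m ≤ -N := (hmin t (by omega) ht).trans hneg
  have hex : ∃ q, D.p i (pt d q) = m := ⟨l, rfl⟩
  set q := Nat.find hex with hq
  have hql : q ≤ l := Nat.find_min' hex rfl
  have hq1 : D.p i (pt d q) = m := Nat.find_spec hex
  have hq2 : ∀ l' < q, m < D.p i (pt d l') := fun l' h' =>
    lt_of_le_of_ne (hmin l' (by omega) (by omega)) fun hc => Nat.find_min hex h' hc.symm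
  have hex' : ∃ p, p < q ∧ m + N ≤ D.p i (pt d p) := by
    refine ⟨0, ?_, by simp; omega⟩
    by_contra hc
    have : q = 0 := by omega
    rw [this] at hq1; simp at hq1; omega
  obtain ⟨p, ⟨hp1, hp2⟩, hp3⟩ : ∃ p, (p < q ∧ m + N ≤ D.p i (pt d p)) ∧
      ∀ l', p < l' → l' < q → D.p i (pt d l') < m + N := by
    have hfin : ((Finset.range q).filter fun p => m + N ≤ D.p i (pt d p)).Nonempty := by
      obtain ⟨p, hp⟩ := hex'; exact ⟨p, by simpa using hp⟩
    refine ⟨Finset.max' _ hfin, by simpa using Finset.max'_mem _ hfin, fun l' h1 h2 => ?_⟩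
    by_contra! hc
    exact absurd (Finset.le_max' ((Finset.range q).filter fun p => m + N ≤ D.p i (pt d p)) l'
      (by simp [h2, hc])) (by omega)
  have hmid : ∀ l', p < l' → l' < q → m < D.p i (pt d l') ∧ D.p i (pt d l') < m + N :=
    fun l' h1 h2 => ⟨hq2 l' h2, hp3 l' h1 h2⟩
  have hpe : D.p i (pt d p) = m + N := by
    refine le_antisymm ?_ hp2
    by_contra! hc
    have h1 := h.le_step hS i (k := p) (by omega) (dvd_add hdvd dvd_rfl) hc
    rcases (show p + 1 ≤ q by omega).eq_or_lt with h2 | h2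
    · rw [h2, hq1] at h1; omega
    · have := hp3 (p + 1) (by omega) h2; omega
  refine ⟨p, q, m, hp1, by omega, hdvd, hpe, hq1, fun l' hl' => ?_, hmid,
    fun l' _ h2 => hmin l' (by omega) h2⟩
  exact h.add_le_of_lt hi (Nat.zero_le p) (by omega) (by simp)
    (by rw [hpe]; exact dvd_add hdvd dvd_rfl) hdvd
    (fun l'' _ h2 => hq2 l'' (by omega)) l' (by omega) hl'

lemma IsPath.exists_lowersAt (hS : D.PathSetup O N) (hi : D.IsSimpleRoot i) (h : D.IsPath O N d)
    {t : ℕ} (ht : t ≤ N) (hpos : D.p i (pt d t) + N ≤ D.p i (pt d N)) :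
    ∃ p q m, D.LowersAt N i d p q m := by
  classical
  have hN := (Nat.cast_pos (α := ℤ)).2 hS.pos
  obtain ⟨l, -, hl, hmin, hdvd⟩ := h.exists_min hi (Nat.zero_le N) le_rfl (by simp)
    (h.dvd_height_end i)
  set m := D.p i (pt d l) with hm
  have hmN : m + N ≤ D.p i (pt d N) := by linarith [hmin t (by omega) ht]
  obtain ⟨p, ⟨hp0, hp1⟩, hp2⟩ : ∃ p, (p ≤ N ∧ D.p i (pt d p) = m) ∧
      ∀ l', p < l' → l' ≤ N → m < D.p i (pt d l') := by
    have hfin : ((Finset.range (N + 1)).filter fun p => D.p i (pt d p) = m).Nonempty :=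
      ⟨l, by simp [hm]; omega⟩
    refine ⟨Finset.max' _ hfin, ?_, fun l' h1 h2 => ?_⟩
    · have := Finset.max'_mem _ hfin
      rw [Finset.mem_filter, Finset.mem_range] at this
      exact ⟨by omega, this.2⟩
    · refine lt_of_le_of_ne (hmin l' (by omega) h2) fun hc => ?_
      exact absurd (Finset.le_max' ((Finset.range (N + 1)).filter fun p => D.p i (pt d p) = m) l'
        (by simp [← hc]; omega)) (by omega)
  have hpN : p < N := lt_of_le_of_ne hp0 (by rintro rfl; omega)
  have hex : ∃ q, p < q ∧ m + N ≤ D.p i (pt d q) := ⟨N, hpN, hmN⟩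
  set q := Nat.find hex with hq
  obtain ⟨hq1, hq2⟩ : p < q ∧ m + N ≤ D.p i (pt d q) := Nat.find_spec hex
  have hqN : q ≤ N := Nat.find_min' hex ⟨hpN, hmN⟩
  have hmid : ∀ l', p < l' → l' < q → m < D.p i (pt d l') ∧ D.p i (pt d l') < m + N := by
    intro l' h1 h2
    refine ⟨hp2 l' h1 (by omega), ?_⟩
    by_contra! hc
    exact Nat.find_min hex h2 ⟨h1, hc⟩
  have hqe : D.p i (pt d q) = m + N := by
    refine le_antisymm ?_ hq2
    obtain ⟨k, hk⟩ : ∃ k, q = k + 1 := ⟨q - 1, by omega⟩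
    rw [hk]
    refine h.step_le hS i (by omega) (dvd_add hdvd dvd_rfl) ?_
    rcases (show p ≤ k by omega).eq_or_lt with h2 | h2
    · rw [← h2, hp1]; omega
    · exact (hmid k h2 (by omega)).2
  refine ⟨p, q, m, hq1, hqN, hdvd, hp1, hqe, fun l' h1 => hmin l' (by omega) (by omega), hmid,
    fun l' h1 h2 => ?_⟩
  exact h.add_le_of_lt hi hqN le_rfl (by rw [hqe]; exact dvd_add hdvd dvd_rfl)
    (h.dvd_height_end i) hdvd (fun l'' h3 h4 => hp2 l'' (by omega) h4) l' h1 h2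

lemma not_dvd_of_mid {m x : ℤ} (hm : (N : ℤ) ∣ m) (h1 : m < x) (h2 : x < m + N) :
    ¬ (N : ℤ) ∣ x := fun hc => by
  have := Int.le_of_dvd (by omega) (dvd_sub hc hm)
  omega

lemma RaisesAt.isPath (hS : D.PathSetup O N) (hi : D.IsSimpleRoot i) (h : D.IsPath O N d)
    {p q : ℕ} {m : ℤ} (hr : D.RaisesAt N i d p q m) : D.IsPath O N (PosRootDatum.flip D i p q d) := by
  have hN := (Nat.cast_pos (α := ℤ)).2 hS.pos
  have hq := hr.le
  have hpq := hr.lt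
  have hslope : ∀ l, p ≤ l → l < q → D.p i (d l) < 0 := by
    intro l hl
    induction l, hl using Nat.le_induction with
    | base =>
      intro _
      have h1 : D.p i (pt d (p + 1)) < m + N := by
        rcases (show p + 1 ≤ q by omega).eq_or_lt with h2 | h2
        · rw [h2, hr.hq]; omega
        · exact (hr.mid _ (by omega) h2).2
      rw [pt_succ, map_add, hr.hp] at h1; omega
    | succ l hl ih =>
      intro hl'
      have h1 := hr.mid (l + 1) (by omega) hl'
      exact (h.neg_step hi (by omega) (not_dvd_of_mid hr.dvd h1.1 h1.2) (ih (by omega))).1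
  refine ⟨fun k hk => ?_, fun k hk => ?_, fun k hk => ?_⟩
  · unfold PosRootDatum.flip
    split_ifs
    · exact hS.stable _ (h.mem k hk) i
    · exact h.mem k hk
  · rw [flip_of_ge (by omega), h.zero k hk]
  · rcases lt_or_ge (k + 1) p with h1 | h1
    · rw [flip_of_lt h1, flip_of_lt (by omega)]; exact h.chain k hk
    rcases h1.eq_or_lt with h1 | h1
    · rw [flip_of_lt (l := k) (by omega), flip_of_mem h1.le (by omega)]
      refine (h.chain k hk).tail (edge_simple hi (hslope _ h1.le (by omega)) ?_)
      have h2 := h.dvd_height i (k + 1) hk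
      rw [← h1, hr.hp] at h2
      rw [← h1]
      exact (dvd_sub_left (dvd_add hr.dvd dvd_rfl)).1 h2
    rcases lt_or_ge (k + 1) q with h2 | h2
    · rw [flip_of_mem (l := k) (by omega) (by omega), flip_of_mem (by omega) h2]
      have h3 := hr.mid (k + 1) (by omega) h2
      exact (h.neg_step hi hk (not_dvd_of_mid hr.dvd h3.1 h3.2) (hslope k (by omega) (by omega))).2
    rcases h2.eq_or_lt with h2 | h2
    · rw [flip_of_mem (l := k) (by omega) (by omega), flip_of_ge h2.le]
      rcases (h.chain k hk).of_neg hi (hslope k (by omega) (by omega)) with h3 | h3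
      · exfalso
        have h4 := hr.right (k + 2) (by omega) (by omega)
        rw [pt_succ, map_add, ← h2, hr.hq, h2] at h4
        omega
      · exact h3
    · rw [flip_of_ge (l := k) (by omega), flip_of_ge (by omega)]; exact h.chain k hk

lemma LowersAt.isPath (hS : D.PathSetup O N) (hi : D.IsSimpleRoot i) (h : D.IsPath O N d)
    {p q : ℕ} {m : ℤ} (hr : D.LowersAt N i d p q m) : D.IsPath O N (PosRootDatum.flip D i p q d) := by
  have hN := (Nat.cast_pos (α := ℤ)).2 hS.pos
  have hq := hr.le
  have hpq := hr.lt
  have hslope' : ∀ n l, l + n + 1 = q → p ≤ l → 0 < D.p i (d l) := by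
    intro n
    induction n with
    | zero =>
      intro l h1 h2
      have h3 : D.p i (pt d l) < m + N := by
        rcases h2.eq_or_lt with h2 | h2
        · rw [← h2, hr.hp]; omega
        · exact (hr.mid _ h2 (by omega)).2
      have h4 := hr.hq
      rw [← h1, add_zero, pt_succ, map_add] at h4; omega
    | succ n ih =>
      intro l h1 h2
      have h3 := hr.mid (l + 1) (by omega) (by omega)
      exact (h.pos_step hi (by omega) (not_dvd_of_mid hr.dvd h3.1 h3.2)
        (ih (l + 1) (by omega) (by omega))).1
  have hslope : ∀ l, p ≤ l → l < q → 0 < D.p i (d l) := fun l h1 h2 =>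
    hslope' (q - l - 1) l (by omega) h1
  refine ⟨fun k hk => ?_, fun k hk => ?_, fun k hk => ?_⟩
  · unfold PosRootDatum.flip
    split_ifs
    · exact hS.stable _ (h.mem k hk) i
    · exact h.mem k hk
  · rw [flip_of_ge (by omega), h.zero k hk]
  · rcases lt_or_ge (k + 1) p with h1 | h1
    · rw [flip_of_lt h1, flip_of_lt (by omega)]; exact h.chain k hk
    rcases h1.eq_or_lt with h1 | h1
    · rw [flip_of_lt (l := k) (by omega), flip_of_mem h1.le (by omega)]
      rcases (h.chain k hk).of_pos hi (hslope (k + 1) (by omega) (by omega)) with h3 | h3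
      · exfalso
        have h4 := hr.left k (by omega)
        have h5 := hr.hp
        rw [h1, pt_succ, map_add] at h5
        omega
      · exact h3
    rcases lt_or_ge (k + 1) q with h2 | h2
    · rw [flip_of_mem (l := k) (by omega) (by omega), flip_of_mem (by omega) h2]
      have h3 := hr.mid (k + 1) (by omega) h2
      exact (h.pos_step hi hk (not_dvd_of_mid hr.dvd h3.1 h3.2) (hslope _ (by omega) h2)).2
    rcases h2.eq_or_lt with h2 | h2
    · rw [flip_of_mem (l := k) (by omega) (by omega), flip_of_ge h2.le]
      refine Relation.ReflTransGen.head ?_ (h.chain k hk)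
      have h3 : D.p i (D.refl i (d k)) < 0 := by
        rw [p_refl_self]; linarith [hslope k (by omega) (by omega)]
      have := edge_simple (N := N) (k := k + 1) hi h3 ?_
      · rwa [refl_refl] at this
      · rw [p_refl_self, mul_neg, dvd_neg]
        have h4 := h.dvd_height' i k (by omega)
        rw [← h2, hr.hq] at h4
        rw [← h2]
        exact (dvd_sub_left (dvd_add hr.dvd dvd_rfl)).1 h4
    · rw [flip_of_ge (l := k) (by omega), flip_of_ge (by omega)]; exact h.chain k hk

end PosRootDatum

namespace PosRootDatum

variable {ι Λ : Type*} [Fintype ι] [AddCommGroup Λ] {D : PosRootDatum ι Λ}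
variable {O : Finset Λ} {N : ℕ} {d : ℕ → Λ} {i : ι}

variable (D) in
open Classical in
/-- The lowering operator on paths. -/
noncomputable def lowOp (N : ℕ) (i : ι) (d : ℕ → Λ) : ℕ → Λ :=
  if h : ∃ pq : ℕ × ℕ, ∃ m, D.LowersAt N i d pq.1 pq.2 m then flip D i h.choose.1 h.choose.2 d
  else d

variable (D) in
open Classical in
/-- The raising operator on paths. -/
noncomputable def raiseOp (N : ℕ) (i : ι) (d : ℕ → Λ) : ℕ → Λ :=
  if h : ∃ pq : ℕ × ℕ, ∃ m, D.RaisesAt N i d pq.1 pq.2 m then flip D i h.choose.1 h.choose.2 d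
  else d

lemma LowersAt.lowOp_eq (hN : 0 < N) {p q : ℕ} {m : ℤ} (h : D.LowersAt N i d p q m) :
    D.lowOp N i d = PosRootDatum.flip D i p q d := by
  have hex : ∃ pq : ℕ × ℕ, ∃ m, D.LowersAt N i d pq.1 pq.2 m := ⟨(p, q), m, h⟩
  obtain ⟨m', hm'⟩ := hex.choose_spec
  obtain ⟨h1, h2, -⟩ := hm'.unique hN h
  rw [lowOp, dif_pos hex, h1, h2]

lemma RaisesAt.raiseOp_eq (hN : 0 < N) {p q : ℕ} {m : ℤ} (h : D.RaisesAt N i d p q m) :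
    D.raiseOp N i d = PosRootDatum.flip D i p q d := by
  have hex : ∃ pq : ℕ × ℕ, ∃ m, D.RaisesAt N i d pq.1 pq.2 m := ⟨(p, q), m, h⟩
  obtain ⟨m', hm'⟩ := hex.choose_spec
  obtain ⟨h1, h2, -⟩ := hm'.unique hN h
  rw [raiseOp, dif_pos hex, h1, h2]

variable (D) in
/-- `t` is the first time at which the height in direction `i` is at most `-c N`. -/
structure Hit (N : ℕ) (i : ι) (c : ℤ) (t : ℕ) (d : ℕ → Λ) : Prop where
  le : t ≤ N
  at_time : D.p i (pt d t) ≤ -(c * N)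
  before : ∀ l < t, -(c * N) < D.p i (pt d l)

lemma Hit.congr {c : ℤ} {t : ℕ} (h : D.Hit N i c t d) {d' : ℕ → Λ} (hd : ∀ l < t, d' l = d l) :
    D.Hit N i c t d' where
  le := h.le
  at_time := by rw [pt_congr hd]; exact h.at_time
  before l hl := by rw [pt_congr fun l' hl' => hd l' (by omega)]; exact h.before l hl

lemma Hit.le_of_le {c : ℤ} {t p : ℕ} (h : D.Hit N i c t d) (hp : D.p i (pt d p) ≤ -(c * N)) :
    t ≤ p := by
  by_contra! hc
  linarith [h.before p hc]

lemma lowOp_step (hS : D.PathSetup O N) (hi : D.IsSimpleRoot i) (h : D.IsPath O N d) {c : ℤ}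
    {t : ℕ} (ht : D.Hit N i c t d) {n : ℕ} (hn : ∃ t' ≤ N,
      D.p i (pt d t') + (n + 1) * N ≤ D.p i (pt d N)) :
    D.IsPath O N (D.lowOp N i d) ∧ (∀ l < t, D.lowOp N i d l = d l) ∧
      pt (D.lowOp N i d) N = pt d N - (N : ℤ) • D.root i ∧
      (∃ t' ≤ N, D.p i (pt (D.lowOp N i d) t') + n * N ≤ D.p i (pt (D.lowOp N i d) N)) ∧
      D.raiseOp N i (D.lowOp N i d) = d := by
  obtain ⟨t', ht', hn⟩ := hn
  have hN := (Nat.cast_pos (α := ℤ)).2 hS.pos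
  obtain ⟨p, q, m, hl⟩ := h.exists_lowersAt hS hi ht' (by nlinarith)
  rw [hl.lowOp_eq hS.pos]
  have hmin : ∀ l ≤ N, m ≤ D.p i (pt d l) := by
    intro l hlN
    rcases le_or_gt l p with h1 | h1
    · exact hl.left l h1
    rcases lt_or_ge l q with h2 | h2
    · exact (hl.mid l h1 h2).1.le
    · linarith [hl.right l h2 hlN]
  have htp : t ≤ p := ht.le_of_le (by rw [hl.hp]; exact (hmin t ht.le).trans ht.at_time)
  refine ⟨hl.isPath hS hi h, fun l h1 => flip_of_lt (by omega), ?_, ⟨q, hl.le, ?_⟩, ?_⟩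
  · rw [pt_flip_of_ge hl.lt.le hl.le, hl.hp, hl.hq, add_sub_cancel_left]
  · rw [p_pt_flip_of_ge hl.lt.le hl.le, p_pt_flip_of_ge hl.lt.le le_rfl, hl.hp, hl.hq]
    linarith [hmin t' ht']
  · rw [hl.flip.raiseOp_eq hS.pos, flip_flip]

lemma raiseOp_step (hS : D.PathSetup O N) (hi : D.IsSimpleRoot i) (h : D.IsPath O N d) {c : ℤ}
    (hc : 0 ≤ c) {t : ℕ} (ht : D.Hit N i c t d) {n : ℕ}
    (hn : ∃ t' ≤ N, D.p i (pt d t') ≤ -((c + (n + 1)) * N)) :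
    D.IsPath O N (D.raiseOp N i d) ∧ (∀ l < t, D.raiseOp N i d l = d l) ∧
      pt (D.raiseOp N i d) N = pt d N + (N : ℤ) • D.root i ∧
      (∃ t' ≤ N, D.p i (pt (D.raiseOp N i d) t') ≤ -((c + n) * N)) ∧
      D.lowOp N i (D.raiseOp N i d) = d := by
  obtain ⟨t', ht', hn⟩ := hn
  have hN := (Nat.cast_pos (α := ℤ)).2 hS.pos
  have hcN := mul_nonneg hc hN.le
  have hnN := mul_nonneg (Nat.cast_nonneg (α := ℤ) n) hN.le
  obtain ⟨p, q, m, hl⟩ := h.exists_raisesAt hS hi ht' (by nlinarith)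
  rw [hl.raiseOp_eq hS.pos]
  have hmin : ∀ l ≤ N, m ≤ D.p i (pt d l) := by
    intro l hlN
    rcases le_or_gt l p with h1 | h1
    · linarith [hl.left l h1]
    rcases lt_or_ge l q with h2 | h2
    · exact (hl.mid l h1 h2).1.le
    · exact hl.right l h2 hlN
  have hm := hmin t' ht'
  have htp : t ≤ p := ht.le_of_le (by rw [hl.hp]; nlinarith)
  refine ⟨hl.isPath hS hi h, fun l h1 => flip_of_lt (by omega), ?_,
    ⟨p, hl.lt.le.trans hl.le, ?_⟩, ?_⟩
  · rw [pt_flip_of_ge hl.lt.le hl.le, hl.hp, hl.hq, sub_add_cancel_left, neg_smul, sub_neg_eq_add]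
  · rw [pt_flip_of_le le_rfl, hl.hp]; nlinarith
  · rw [hl.flip.lowOp_eq hS.pos, flip_flip]

lemma lowOp_iterate (hS : D.PathSetup O N) (hi : D.IsSimpleRoot i) {c : ℤ} {t : ℕ} (n : ℕ)
    (d : ℕ → Λ) (h : D.IsPath O N d) (ht : D.Hit N i c t d)
    (hn : ∃ t' ≤ N, D.p i (pt d t') + n * N ≤ D.p i (pt d N)) :
    D.IsPath O N ((D.lowOp N i)^[n] d) ∧ (∀ l < t, (D.lowOp N i)^[n] d l = d l) ∧
      pt ((D.lowOp N i)^[n] d) N = pt d N - (n * N : ℤ) • D.root i ∧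
      (D.raiseOp N i)^[n] ((D.lowOp N i)^[n] d) = d := by
  induction n generalizing d with
  | zero => simp [h]
  | succ n ih =>
    obtain ⟨h1, h2, h3, h4, h5⟩ := lowOp_step hS hi h ht (n := n) (by exact_mod_cast hn)
    obtain ⟨h6, h7, h8, h9⟩ := ih _ h1 (ht.congr h2) h4
    rw [Function.iterate_succ_apply, Function.iterate_succ_apply']
    refine ⟨h6, fun l hl => (h7 l hl).trans (h2 l hl), ?_, by rw [h9, h5]⟩
    rw [h8, h3]; push_cast; simp only [add_mul, add_smul, one_mul]; abel

lemma raiseOp_iterate (hS : D.PathSetup O N) (hi : D.IsSimpleRoot i) {c : ℤ} (hc : 0 ≤ c) {t : ℕ}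
    (n : ℕ) (d : ℕ → Λ) (h : D.IsPath O N d) (ht : D.Hit N i c t d)
    (hn : ∃ t' ≤ N, D.p i (pt d t') ≤ -((c + n) * N)) :
    D.IsPath O N ((D.raiseOp N i)^[n] d) ∧ (∀ l < t, (D.raiseOp N i)^[n] d l = d l) ∧
      pt ((D.raiseOp N i)^[n] d) N = pt d N + (n * N : ℤ) • D.root i ∧
      (D.lowOp N i)^[n] ((D.raiseOp N i)^[n] d) = d := by
  induction n generalizing d with
  | zero => simp [h]
  | succ n ih =>
    obtain ⟨h1, h2, h3, h4, h5⟩ := raiseOp_step hS hi h hc ht (n := n) (by exact_mod_cast hn)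
    obtain ⟨h6, h7, h8, h9⟩ := ih _ h1 (ht.congr h2) h4
    rw [Function.iterate_succ_apply, Function.iterate_succ_apply']
    refine ⟨h6, fun l hl => (h7 l hl).trans (h2 l hl), ?_, by rw [h9, h5]⟩
    rw [h8, h3]; push_cast; simp only [add_mul, add_smul, one_mul]; abel

lemma Edge.exists_smul {k : ℕ} {η η' : Λ} (h : D.Edge N k η η') :
    ∃ χ : Λ, (k : ℤ) • η' = (k : ℤ) • η + (N : ℤ) • χ := by
  obtain ⟨β, _, ⟨c, hc⟩, rfl, _⟩ := h
  refine ⟨-c • D.root β, ?_⟩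
  rw [refl_apply, smul_sub, ← mul_smul, hc, mul_smul, neg_smul, smul_neg, sub_eq_add_neg]

lemma Chain.exists_smul {k : ℕ} {η η' : Λ} (h : D.Chain N k η η') :
    ∃ χ : Λ, (k : ℤ) • η' = (k : ℤ) • η + (N : ℤ) • χ := by
  induction h with
  | refl => exact ⟨0, by simp⟩
  | tail _ he ih =>
    obtain ⟨χ, h1⟩ := ih
    obtain ⟨χ', h2⟩ := he.exists_smul
    exact ⟨χ + χ', by rw [h2, h1, smul_add, add_assoc]⟩

lemma IsPath.exists_pt_eq (h : D.IsPath O N d) (k : ℕ) (hk : k < N) :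
    ∃ χ : Λ, (k : ℤ) • d k = pt d k + (N : ℤ) • χ := by
  induction k with
  | zero => exact ⟨0, by simp⟩
  | succ k ih =>
    obtain ⟨χ, h1⟩ := ih (by omega)
    obtain ⟨χ', h2⟩ := (h.chain k hk).exists_smul
    refine ⟨χ + χ', ?_⟩
    rw [h2, pt_succ, smul_add]; push_cast
    rw [add_smul, h1, one_smul]; abel

lemma IsPath.exists_wt (h : D.IsPath O N d) : ∃ χ : Λ, (N : ℤ) • χ = pt d N := by
  rcases N with _ | n
  · exact ⟨0, by simp⟩
  · obtain ⟨χ, h1⟩ := h.exists_pt_eq n (by omega)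
    refine ⟨d n - χ, ?_⟩
    rw [pt_succ, smul_sub]
    have h2 : ((n + 1 : ℕ) : ℤ) • d n = (n : ℤ) • d n + d n := by
      push_cast; rw [add_smul, one_smul]
    rw [h2, h1]; abel

open Classical in
/-- The weight (end point) of a path. -/
noncomputable def wt (N : ℕ) (d : ℕ → Λ) : Λ :=
  if h : ∃ χ : Λ, (N : ℤ) • χ = pt d N then h.choose else 0

lemma IsPath.smul_wt (h : D.IsPath O N d) : (N : ℤ) • wt N d = pt d N := by
  rw [wt, dif_pos h.exists_wt]; exact h.exists_wt.choose_spec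

lemma smul_left_cancel' (D : PosRootDatum ι Λ) (hN : 0 < N) {χ ψ : Λ}
    (h : (N : ℤ) • χ = (N : ℤ) • ψ) : χ = ψ := by
  rw [← sub_eq_zero, ← smul_sub] at h
  exact sub_eq_zero.1 (D.eq_zero_of_zsmul (by exact_mod_cast hN.ne') h)

lemma IsPath.wt_eq (hN : 0 < N) (h : D.IsPath O N d) {χ : Λ} (hχ : (N : ℤ) • χ = pt d N) :
    wt N d = χ :=
  D.smul_left_cancel' hN (h.smul_wt.trans hχ.symm)

variable (D) in
/-- The reflection of the truncated `i`-string of a path. -/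
noncomputable def stringRefl (N : ℕ) (i : ι) (c : ℤ) (d : ℕ → Λ) : ℕ → Λ :=
  if 0 ≤ c + D.p i (wt N d) then (D.lowOp N i)^[(c + D.p i (wt N d)).toNat] d
  else (D.raiseOp N i)^[(-(c + D.p i (wt N d))).toNat] d

lemma stringRefl_spec (hS : D.PathSetup O N) (hi : D.IsSimpleRoot i) {c : ℤ} (hc : 0 ≤ c) {t : ℕ}
    (h : D.IsPath O N d) (ht : D.Hit N i c t d) :
    D.IsPath O N (D.stringRefl N i c d) ∧ (∀ l < t, D.stringRefl N i c d l = d l) ∧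
      wt N (D.stringRefl N i c d) = wt N d - (c + D.p i (wt N d)) • D.root i ∧
      D.stringRefl N i c (D.stringRefl N i c d) = d := by
  have hpN : D.p i (pt d N) = N * D.p i (wt N d) := by rw [← h.smul_wt, map_zsmul, smul_eq_mul]
  have hwt : ∀ (d' : ℕ → Λ), D.IsPath O N d' → ∀ n : ℤ, pt d' N = pt d N - (n * N) • D.root i →
      wt N d' = wt N d - n • D.root i := by
    intro d' h' n hd'
    refine h'.wt_eq hS.pos ?_
    rw [smul_sub, h.smul_wt, hd', ← mul_smul, mul_comm]
  have hneg : ∀ d' : ℕ → Λ, wt N d' = wt N d - (c + D.p i (wt N d)) • D.root i →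
      c + D.p i (wt N d') = -(c + D.p i (wt N d)) := by
    intro d' hd'
    rw [hd', map_sub, map_zsmul, D.p_self, smul_eq_mul]; ring
  rcases lt_or_ge (c + D.p i (wt N d)) 0 with h0 | h0
  · obtain ⟨n, hn⟩ : ∃ n : ℕ, c + D.p i (wt N d) = -n := ⟨(-(c + D.p i (wt N d))).toNat, by omega⟩
    have hR : D.stringRefl N i c d = (D.raiseOp N i)^[n] d := by
      rw [stringRefl, if_neg (by omega), hn, neg_neg, Int.toNat_natCast]
    obtain ⟨h1, h2, h3, h4⟩ := raiseOp_iterate hS hi hc n d h ht ⟨N, le_rfl, by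
      rw [hpN, show D.p i (wt N d) = -n - c by omega]; linarith⟩
    have h5 := hwt _ h1 (-n) (by rw [h3, neg_mul, neg_smul, sub_neg_eq_add])
    rw [hR]
    refine ⟨h1, h2, by rw [h5, hn], ?_⟩
    rw [stringRefl, hneg _ (by rw [h5, hn]), hn, neg_neg, if_pos (by omega), Int.toNat_natCast, h4]
  · obtain ⟨n, hn⟩ : ∃ n : ℕ, c + D.p i (wt N d) = n := ⟨(c + D.p i (wt N d)).toNat, by omega⟩
    have hR : D.stringRefl N i c d = (D.lowOp N i)^[n] d := by
      rw [stringRefl, if_pos h0, hn, Int.toNat_natCast]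
    obtain ⟨h1, h2, h3, h4⟩ := lowOp_iterate hS hi n d h ht ⟨t, ht.le, by
      rw [hpN, show D.p i (wt N d) = n - c by omega]; linarith [ht.at_time]⟩
    have h5 := hwt _ h1 n h3
    rw [hR]
    refine ⟨h1, h2, by rw [h5, hn], ?_⟩
    rw [stringRefl, hneg _ (by rw [h5, hn]), hn]
    rcases n with _ | n
    · simp
    · rw [if_neg (by omega), neg_neg, Int.toNat_natCast, h4]

variable (D) in
lemma finite_isPath (O : Finset Λ) (N : ℕ) : {d | D.IsPath O N d}.Finite := by
  classical
  let g : (Fin N → O) → (ℕ → Λ) := fun f k => if h : k < N then f ⟨k, h⟩ else 0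
  refine (Set.finite_range g).subset ?_
  intro d (hd : D.IsPath O N d)
  refine ⟨fun k => ⟨d k, hd.mem k k.2⟩, ?_⟩
  funext k
  simp only [g]
  split_ifs with h
  · rfl
  · exact (hd.zero k (by omega)).symm

variable (D) in
/-- The finite set of Lakshmibai–Seshadri paths. -/
noncomputable def paths (O : Finset Λ) (N : ℕ) : Finset (ℕ → Λ) := (D.finite_isPath O N).toFinset

@[simp] lemma mem_paths : d ∈ D.paths O N ↔ D.IsPath O N d := by simp [paths]

lemma hit_zero : D.Hit N i 0 0 d := ⟨Nat.zero_le _, by simp, by simp⟩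

/-- Weyl invariance of the path character. -/
lemma sum_paths_refl {A : Type*} [AddCommMonoid A] (hS : D.PathSetup O N) (hi : D.IsSimpleRoot i)
    (F : Λ → A) :
    ∑ d ∈ D.paths O N, F (D.refl i (wt N d)) = ∑ d ∈ D.paths O N, F (wt N d) := by
  have key := fun d (hd : d ∈ D.paths O N) =>
    stringRefl_spec hS hi le_rfl (mem_paths.1 hd) hit_zero
  refine Finset.sum_bij' (fun d _ => D.stringRefl N i 0 d) (fun d _ => D.stringRefl N i 0 d)
    ?_ ?_ ?_ ?_ ?_
  · exact fun d hd => mem_paths.2 (key d hd).1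
  · exact fun d hd => mem_paths.2 (key d hd).1
  · exact fun d hd => (key d hd).2.2.2
  · exact fun d hd => (key d hd).2.2.2
  · intro d hd
    rw [(key d hd).2.2.1, zero_add, refl_apply]

variable (D) in
/-- `d` leaves the dominant chamber when started at `ν`. -/
def BadAt (N : ℕ) (ν : Λ) (d : ℕ → Λ) (t : ℕ) : Prop :=
  t ≤ N ∧ ∃ j, D.IsSimpleRoot j ∧ D.p j (pt d t) ≤ -((D.p j ν + 1) * N)

variable (D) in
/-- `d` stays in the dominant chamber when started at `ν`. -/
def IsGood (N : ℕ) (ν : Λ) (d : ℕ → Λ) : Prop := ∀ t, ¬ D.BadAt N ν d t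

variable (D) in
open Classical in
/-- A wall crossed at a given position. -/
noncomputable def wall (N : ℕ) (ν : Λ) (x : Λ) : Option ι :=
  if h : ∃ j, D.IsSimpleRoot j ∧ D.p j x ≤ -((D.p j ν + 1) * N) then some h.choose else none

variable (D) in
open Classical in
/-- The sign reversing involution on paths leaving the dominant chamber. -/
noncomputable def signInv (N : ℕ) (ν : Λ) (d : ℕ → Λ) : ℕ → Λ :=
  if h : ∃ t, D.BadAt N ν d t then
    (D.wall N ν (pt d (Nat.find h))).elim d fun j => D.stringRefl N j (D.p j ν + 1) d
  else d

lemma signInv_spec (hS : D.PathSetup O N) {ν : Λ} (hν : D.IsDom ν) (h : D.IsPath O N d)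
    (hd : ¬ D.IsGood N ν d) :
    D.IsPath O N (D.signInv N ν d) ∧ ¬ D.IsGood N ν (D.signInv N ν d) ∧
      D.signInv N ν (D.signInv N ν d) = d ∧ ∃ j, D.IsSimpleRoot j ∧
      wt N (D.signInv N ν d) = wt N d - (D.p j ν + 1 + D.p j (wt N d)) • D.root j := by
  classical
  have hex : ∃ t, D.BadAt N ν d t := by simpa [IsGood] using hd
  have hbad := Nat.find_spec hex
  obtain ⟨T, hT⟩ : ∃ T, Nat.find hex = T := ⟨_, rfl⟩
  rw [hT] at hbad
  obtain ⟨hTN, hw⟩ := hbad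
  obtain ⟨j, hj⟩ : ∃ j, hw.choose = j := ⟨_, rfl⟩
  obtain ⟨hj1, hj2⟩ := hj ▸ hw.choose_spec
  have hwall : D.wall N ν (pt d T) = some j := by rw [wall, dif_pos hw, hj]
  have hRd : D.signInv N ν d = D.stringRefl N j (D.p j ν + 1) d := by
    rw [signInv, dif_pos hex, hT, hwall]; rfl
  have hhit : D.Hit N j (D.p j ν + 1) T d := by
    refine ⟨hTN, hj2, fun l hl => ?_⟩
    by_contra! hc
    rw [← hT] at hl
    exact Nat.find_min hex hl ⟨by omega, j, hj1, hc⟩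
  obtain ⟨h1, h2, h3, h4⟩ := stringRefl_spec hS hj1 (by linarith [hν j]) h hhit
  rw [hRd]
  have hpt : ∀ l ≤ T, pt (D.stringRefl N j (D.p j ν + 1) d) l = pt d l := fun l hl =>
    pt_congr fun l' hl' => h2 l' (by omega)
  have hbad' : ∀ l ≤ T, D.BadAt N ν (D.stringRefl N j (D.p j ν + 1) d) l ↔ D.BadAt N ν d l := by
    intro l hl; unfold BadAt; rw [hpt l hl]
  have hex' : ∃ t, D.BadAt N ν (D.stringRefl N j (D.p j ν + 1) d) t :=
    ⟨T, (hbad' T le_rfl).2 ⟨hTN, hw⟩⟩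
  have hT' : Nat.find hex' = T := by
    rw [Nat.find_eq_iff]
    refine ⟨(hbad' T le_rfl).2 ⟨hTN, hw⟩, fun l hl hc => ?_⟩
    rw [hbad' l hl.le] at hc
    rw [← hT] at hl
    exact Nat.find_min hex hl hc
  refine ⟨h1, ?_, ?_, j, hj1, h3⟩
  · intro hg; exact hg T ((hbad' T le_rfl).2 ⟨hTN, hw⟩)
  · rw [signInv, dif_pos hex', hT', hpt T le_rfl, hwall]
    exact h4

variable (D) in
/-- Skew-symmetry under the simple reflections. -/
def IsSkew (A : Λ → ℂ) : Prop := ∀ i, D.IsSimpleRoot i → ∀ χ, A (D.refl i χ) = - A χ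

open Classical in
/-- Cancellation of the contributions of paths leaving the dominant chamber. -/
lemma sum_paths_skew (hS : D.PathSetup O N) {A : Λ → ℂ} (hA : D.IsSkew A) {ν ρ : Λ}
    (hν : D.IsDom ν) (hρ : ∀ i, D.IsSimpleRoot i → D.p i ρ = 1) :
    ∑ d ∈ D.paths O N, A (ν + ρ + wt N d) =
      ∑ d ∈ (D.paths O N).filter (D.IsGood N ν), A (ν + ρ + wt N d) := by
  rw [← Finset.sum_filter_add_sum_filter_not (D.paths O N) (D.IsGood N ν)]
  have hA' : ∀ (d : ℕ → Λ) j, D.IsSimpleRoot j →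
      A (ν + ρ + (wt N d - (D.p j ν + 1 + D.p j (wt N d)) • D.root j)) = - A (ν + ρ + wt N d) := by
    intro d j hj
    rw [← hA j hj, refl_apply, map_add, map_add, hρ j hj]
    congr 1; abel
  refine add_eq_left.2 (Finset.sum_involution (fun d _ => D.signInv N ν d) ?_ ?_ ?_ ?_)
  · intro d hd
    rw [Finset.mem_filter, mem_paths] at hd
    obtain ⟨-, -, -, j, hj, hw⟩ := signInv_spec hS hν hd.1 hd.2
    rw [hw, hA' d j hj, add_neg_cancel]
  · intro d hd h0 hc
    rw [Finset.mem_filter, mem_paths] at hd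
    obtain ⟨-, -, -, j, hj, hw⟩ := signInv_spec hS hν hd.1 hd.2
    have := hA' d j hj
    rw [← hw, hc] at this
    exact h0 (self_eq_neg.1 this)
  · intro d hd
    rw [Finset.mem_filter, mem_paths] at hd ⊢
    obtain ⟨h1, h2, -⟩ := signInv_spec hS hν hd.1 hd.2
    exact ⟨h1, h2⟩
  · intro d hd
    rw [Finset.mem_filter, mem_paths] at hd
    exact (signInv_spec hS hν hd.1 hd.2).2.2.1

end PosRootDatum

namespace PosRootDatum

variable {ι Λ : Type*} [Fintype ι] [AddCommGroup Λ] (D : PosRootDatum ι Λ)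

variable {D} {O : Finset Λ} {N : ℕ} {d : ℕ → Λ}

lemma Conj.refl_left (β : ι) (χ : Λ) : D.Conj χ (D.refl β χ) := ⟨[β], rfl⟩

lemma Conj.neg {χ ψ : Λ} (h : D.Conj χ ψ) : D.Conj (-χ) (-ψ) := by
  obtain ⟨l, rfl⟩ := h
  exact ⟨l, D.word_neg l χ⟩

lemma IsGood.height_le (hS : D.PathSetup O N) {ν : Λ} (h : D.IsPath O N d)
    (hg : D.IsGood N ν d) {t : ℕ} (ht : t ≤ N) {j : ι} (hj : D.IsSimpleRoot j) :
    0 ≤ D.p j ((N : ℤ) • ν + pt d t) := by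
  obtain ⟨l, -, hl, hmin, hdvd⟩ := IsPath.exists_min hj h (Nat.zero_le N) le_rfl
    (by simp) (h.dvd_height_end j)
  have hgl : ¬ D.p j (pt d l) ≤ -((D.p j ν + 1) * N) := fun hb => hg l ⟨hl, j, hj, hb⟩
  have h1 := hmin t (Nat.zero_le _) ht
  have hN : (0 : ℤ) < N := by exact_mod_cast hS.pos
  obtain ⟨c, hc⟩ := hdvd
  rw [map_add, map_zsmul, smul_eq_mul]
  have h2 : -(D.p j ν + 1) < c := by
    push Not at hgl
    rw [hc] at hgl
    nlinarith
  have h3 : -(D.p j ν) ≤ c := by omega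
  nlinarith

lemma IsGood.isDom_wt (hS : D.PathSetup O N) {ν : Λ} (h : D.IsPath O N d)
    (hg : D.IsGood N ν d) : D.IsDom (ν + wt N d) := by
  refine D.isDom_of_simple fun j hj => ?_
  have := hg.height_le hS h le_rfl hj
  rw [← h.smul_wt, ← smul_add, map_zsmul, smul_eq_mul] at this
  have hN : (0 : ℤ) < N := by exact_mod_cast hS.pos
  exact nonneg_of_mul_nonneg_right this hN

lemma isGood_of_isDom (hN : 0 < N) {ν : Λ}
    (h : ∀ t ≤ N, D.IsDom ((N : ℤ) • ν + pt d t)) : D.IsGood N ν d := by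
  rintro t ⟨ht, j, -, hb⟩
  have := h t ht j
  rw [map_add, map_zsmul, smul_eq_mul] at this
  have hN : (0 : ℤ) < N := by exact_mod_cast hN
  nlinarith

lemma exists_straighten {ν η : Λ} {k : ℕ} {pos : Λ} (n : ℕ) :
    ∀ y : List ι, D.negCount (D.word y η) ≤ n →
      pos = (N : ℤ) • D.word y ν + (k : ℤ) • D.word y η →
      ∃ y' : List ι, pos = (N : ℤ) • D.word y' ν + (k : ℤ) • D.word y' η ∧
        D.Chain N k (D.word y η) (D.word y' η) ∧
        ∀ i, D.IsSimpleRoot i → D.p i pos = 0 → 0 ≤ D.p i (D.word y' η) := by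
  induction n with
  | zero =>
    intro y hy he
    refine ⟨y, he, Relation.ReflTransGen.refl, fun i hi _ => ?_⟩
    by_contra! hneg
    have := D.negCount_refl_lt hneg
    omega
  | succ n ih =>
    intro y hy he
    by_cases hex : ∃ i, D.IsSimpleRoot i ∧ D.p i pos = 0 ∧ D.p i (D.word y η) < 0
    · obtain ⟨i, hi, h0, hneg⟩ := hex
      have hlt := D.negCount_refl_lt hneg
      obtain ⟨y', h1, h2, h3⟩ := ih (i :: y) (by simp only [word]; omega) (by
        have := refl_of_p_eq_zero (D := D) h0
        rw [he, map_add, map_zsmul, map_zsmul] at this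
        rw [he]; exact this.symm)
      refine ⟨y', h1, Relation.ReflTransGen.head (edge_simple hi hneg ?_) h2, h3⟩
      rw [he, map_add, map_zsmul, map_zsmul, smul_eq_mul, smul_eq_mul] at h0
      exact ⟨-D.p i (D.word y ν), by linarith⟩
    · push Not at hex
      exact ⟨y, he, Relation.ReflTransGen.refl, hex⟩

lemma exists_dom_path (hS : D.PathSetup O N) {ν η : Λ} (hν : D.IsDom ν)
    (hO : ∀ l, D.word l η ∈ O) (k : ℕ) :
    k ≤ N → ∃ d : ℕ → Λ, (∀ l < k, d l ∈ O) ∧ (∀ l, k ≤ l → d l = 0) ∧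
      (∀ l, l + 1 < k → D.Chain N (l + 1) (d l) (d (l + 1))) ∧
      (∀ l ≤ k, D.IsDom ((N : ℤ) • ν + pt d l)) ∧
      ∃ y, (N : ℤ) • ν + pt d k = (N : ℤ) • D.word y ν + (k : ℤ) • D.word y η ∧
        ∀ l, l + 1 = k → d l = D.word y η := by
  have hN : (0 : ℤ) < N := by exact_mod_cast hS.pos
  induction k with
  | zero =>
    intro _
    refine ⟨fun _ => 0, by simp, by simp, by simp, ?_, [], by simp [word], by simp⟩
    intro l hl β
    obtain rfl : l = 0 := by omega
    simpa using mul_nonneg hN.le (hν β)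
  | succ k ih =>
    intro hk
    obtain ⟨d, h1, h2, h3, h4, y, h5, h6⟩ := ih (by omega)
    obtain ⟨y', g1, g2, g3⟩ := exists_straighten _ y le_rfl h5
    have hpt : ∀ l ≤ k, pt (Function.update d k (D.word y' η)) l = pt d l := fun l hl =>
      pt_congr fun m hm => by rw [Function.update_of_ne (by omega)]
    have hptk : (N : ℤ) • ν + pt (Function.update d k (D.word y' η)) (k + 1)
        = (N : ℤ) • D.word y' ν + ((k + 1 : ℕ) : ℤ) • D.word y' η := by
      rw [pt_succ, hpt k le_rfl, Function.update_self, ← add_assoc, g1]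
      push_cast
      rw [add_smul, one_smul, add_assoc]
    refine ⟨Function.update d k (D.word y' η), ?_, ?_, ?_, ?_, y', hptk, ?_⟩
    · intro l hl
      rcases eq_or_ne l k with rfl | hne
      · rw [Function.update_self]; exact hO _
      · rw [Function.update_of_ne hne]; exact h1 l (by omega)
    · intro l hl
      rw [Function.update_of_ne (by omega)]; exact h2 l (by omega)
    · intro l hl
      rcases Nat.lt_or_ge (l + 1) k with hlt | hge
      · rw [Function.update_of_ne (by omega), Function.update_of_ne (by omega)]
        exact h3 l hlt
      · have : l + 1 = k := by omega
        rw [this, Function.update_self, Function.update_of_ne (by omega), h6 l this]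
        exact g2
    · intro l hl
      rcases Nat.lt_or_ge k l with hlt | hge
      · obtain rfl : l = k + 1 := by omega
        refine D.isDom_of_simple fun i hi => ?_
        have e1 : D.p i ((N : ℤ) • ν + pt (Function.update d k (D.word y' η)) (k + 1))
            = D.p i ((N : ℤ) • ν + pt d k) + D.p i (D.word y' η) := by
          rw [pt_succ, hpt k le_rfl, Function.update_self, ← add_assoc, map_add]
        rw [e1]
        have hd0 := h4 k le_rfl i
        rcases le_or_gt 0 (D.p i (D.word y' η)) with hs | hs
        · omega
        · have hne : D.p i ((N : ℤ) • ν + pt d k) ≠ 0 := fun h0 => by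
            have := g3 i hi h0; omega
          have hdvd : D.p i (D.word y' η) ∣ D.p i ((N : ℤ) • ν + pt d k) := by
            rw [g1, map_add, map_zsmul, map_zsmul, smul_eq_mul, smul_eq_mul]
            exact dvd_add (Dvd.dvd.mul_right (hS.dvd _ (hO _) i hs.ne) _) (dvd_mul_left _ _)
          have := Int.le_of_dvd (lt_of_le_of_ne hd0 hne.symm) (neg_dvd.mpr hdvd)
          omega
      · rw [hpt l hge]; exact h4 l hge
    · intro l hl
      obtain rfl : l = k := by omega
      rw [Function.update_self]

/-- The path behind the PRV component. -/
lemma exists_good_path (hS : D.PathSetup O N) {ν η lam : Λ} (hν : D.IsDom ν)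
    (hlam : D.IsDom lam) (hO : ∀ l, D.word l η ∈ O) (hc : D.Conj (ν + η) lam) :
    ∃ d, D.IsPath O N d ∧ D.IsGood N ν d ∧ ν + wt N d = lam := by
  obtain ⟨d, h1, h2, h3, h4, y, h5, -⟩ := exists_dom_path hS hν hO N le_rfl
  have hd : D.IsPath O N d := ⟨h1, h2, h3⟩
  have hN : (0 : ℤ) < N := by exact_mod_cast hS.pos
  refine ⟨d, hd, isGood_of_isDom hS.pos h4, ?_⟩
  have hg := (isGood_of_isDom hS.pos h4).isDom_wt hS hd
  rw [← hd.smul_wt, ← smul_add, ← smul_add, ← D.word_add] at h5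
  have h6 := smul_left_cancel' D hS.pos h5
  exact (Conj.eq_of_isDom (D := D) (Conj.trans (D := D) (Conj.symm (D := D) hc) ⟨y, h6.symm⟩) hlam hg)


lemma p_refl_eq (β γ : ι) (χ : Λ) :
    D.p γ (D.refl β χ) = D.p (D.rperm β γ) χ ∨ D.p γ (D.refl β χ) = - D.p (D.rperm β γ) χ := by
  rcases D.rperm_spec β γ with h | h
  · exact Or.inl (D.p_eq_of_refl_eq h χ).symm
  · right
    rw [D.p_eq_of_refl_eq_neg h χ, neg_neg]

variable (D) in
lemma finite_bounded (M : ℕ) : {χ : Λ | ∀ β, |D.p β χ| ≤ M}.Finite := by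
  have hfin : {f : ι → ℤ | ∀ β, f β ∈ Set.Icc (-(M : ℤ)) M}.Finite :=
    Set.Finite.pi' fun _ => Set.finite_Icc _ _
  refine Set.Finite.of_finite_image (f := fun χ β => D.p β χ) (hfin.subset ?_) ?_
  · rintro _ ⟨χ, hχ, rfl⟩ β
    exact abs_le.mp (hχ β)
  · intro χ _ ψ _ h
    have : χ - ψ = 0 := D.nondeg _ fun β => by
      rw [map_sub, sub_eq_zero]; exact congrFun h β
    exact sub_eq_zero.mp this

variable (D) in
lemma exists_pathSetup (η : Λ) :
    ∃ (O : Finset Λ) (N : ℕ), D.PathSetup O N ∧ ∀ χ, χ ∈ O ↔ D.Conj η χ := by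
  classical
  obtain ⟨M, hM⟩ : ∃ M : ℕ, ∀ β, |D.p β η| ≤ M := by
    refine ⟨∑ β, (D.p β η).natAbs, fun β => ?_⟩
    rw [Int.abs_eq_natAbs]
    exact_mod_cast Finset.single_le_sum (f := fun β => (D.p β η).natAbs)
      (fun _ _ => Nat.zero_le _) (Finset.mem_univ β)
  have hw : ∀ l β, |D.p β (D.word l η)| ≤ M := by
    intro l
    induction l with
    | nil => exact hM
    | cons i l ih =>
      intro β
      rcases D.p_refl_eq i β (D.word l η) with h | h
      · rw [word, h]; exact ih _
      · rw [word, h, abs_neg]; exact ih _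
  have hfin : {χ | D.Conj η χ}.Finite := by
    refine (D.finite_bounded M).subset ?_
    rintro _ ⟨l, rfl⟩ β
    exact hw l β
  refine ⟨hfin.toFinset, M.factorial, ⟨Nat.factorial_pos _, ?_, ?_⟩, by simp⟩
  · intro χ hχ β
    rw [Set.Finite.mem_toFinset] at hχ ⊢
    exact Conj.trans (D := D) hχ (Conj.refl_left β χ)
  · intro χ hχ β hne
    rw [Set.Finite.mem_toFinset] at hχ
    obtain ⟨l, rfl⟩ := hχ
    rw [← Int.natAbs_dvd_natAbs, Int.natAbs_natCast]
    refine Nat.dvd_factorial (Int.natAbs_pos.mpr hne) ?_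
    have := hw l β
    rw [Int.abs_eq_natAbs] at this
    exact_mod_cast this

lemma exists_dom_conj (n : ℕ) : ∀ χ : Λ, D.negCount χ ≤ n →
    ∃ l : List ι, (∀ i ∈ l, D.IsSimpleRoot i) ∧ D.IsDom (D.word l χ) := by
  induction n with
  | zero =>
    refine fun χ h => ⟨[], by simp, fun β => ?_⟩
    by_contra! hneg
    have := D.negCount_refl_lt (η := χ) hneg
    omega
  | succ n ih =>
    intro χ h
    by_cases hd : ∀ i, D.IsSimpleRoot i → 0 ≤ D.p i χ
    · exact ⟨[], by simp, D.isDom_of_simple hd⟩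
    · push Not at hd
      obtain ⟨i, hi, hneg⟩ := hd
      have := D.negCount_refl_lt hneg
      obtain ⟨l, h1, h2⟩ := ih (D.refl i χ) (by omega)
      refine ⟨l ++ [i], ?_, by rwa [D.word_append]⟩
      intro j hj
      rcases List.mem_append.mp hj with hj | hj
      · exact h1 j hj
      · simp at hj; rwa [hj]

/-- A half-sum of positive roots inside the lattice. -/
def IsRho (D : PosRootDatum ι Λ) (ρ : Λ) : Prop := ρ + ρ = D.twoRho

lemma IsRho.p_simple {ρ : Λ} (h : D.IsRho ρ) {i : ι} (hi : D.IsSimpleRoot i) : D.p i ρ = 1 := by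
  have := D.p_twoRho_simple hi
  rw [← h, map_add] at this
  omega

lemma IsRho.p_pos {ρ : Λ} (h : D.IsRho ρ) (β : ι) : 0 < D.p β ρ := by
  have := D.p_twoRho_pos β
  rw [← h, map_add] at this
  omega

/-- A skew function in the support is met, up to conjugation, at a regular dominant weight. -/
lemma IsSkew.exists_dom {A : Λ → ℂ} (hA : D.IsSkew A) {ρ : Λ} (hρ : D.IsRho ρ) {ξ : Λ}
    (h : A ξ ≠ 0) : ∃ κ, D.IsDom κ ∧ A (κ + ρ) ≠ 0 ∧ D.Conj ξ (κ + ρ) := by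
  obtain ⟨l, hl, hd⟩ := exists_dom_conj (D := D) _ ξ le_rfl
  have hne : ∀ l : List ι, (∀ i ∈ l, D.IsSimpleRoot i) → A (D.word l ξ) ≠ 0 := by
    intro l
    induction l with
    | nil => exact fun _ => h
    | cons i l ih =>
      intro hl
      rw [word, hA i (hl i (by simp))]
      exact neg_ne_zero.mpr (ih fun j hj => hl j (by simp [hj]))
  have h1 := hne l hl
  refine ⟨D.word l ξ - ρ, D.isDom_of_simple fun i hi => ?_, by rwa [sub_add_cancel],
    ⟨l, by rw [sub_add_cancel]⟩⟩
  have h2 := hd i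
  have h3 : D.p i (D.word l ξ) ≠ 0 := fun h0 => by
    have := hA i hi (D.word l ξ)
    rw [refl_of_p_eq_zero (D := D) h0, eq_neg_iff_add_eq_zero, add_self_eq_zero] at this
    exact h1 this
  rw [map_sub, hρ.p_simple hi]
  omega

lemma IsSkew.eq_zero {A : Λ → ℂ} (hA : D.IsSkew A) {ρ : Λ} (hρ : D.IsRho ρ)
    (h : ∀ κ, D.IsDom κ → A (κ + ρ) = 0) : A = 0 := by
  funext ξ
  by_contra hne
  obtain ⟨κ, h1, h2, -⟩ := hA.exists_dom hρ hne
  exact h2 (h κ h1)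

/-- Paths ending at the antidominant weight `-ν` are straight. -/
lemma IsGood.eq_const (hS : D.PathSetup O N) {ν mu : Λ} (hmu : D.IsDom mu)
    (hO : ∀ χ, χ ∈ O ↔ D.Conj (-mu) χ) (h : D.IsPath O N d)
    (hg : D.IsGood N ν d) (he : ν + wt N d = 0) : ν = mu ∧ ∀ k < N, d k = -mu := by
  obtain ⟨n, rfl⟩ : ∃ n, N = n + 1 := ⟨N - 1, by have := hS.pos; omega⟩
  have hpt : ((n + 1 : ℕ) : ℤ) • ν + pt d n + d n = 0 := by
    rw [add_assoc, ← pt_succ, ← h.smul_wt, ← smul_add, he, smul_zero]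
  have hdom : D.IsDom (-d n) := D.isDom_of_simple fun j hj => by
    have := hg.height_le hS h (Nat.le_succ n) hj
    rwa [eq_neg_of_add_eq_zero_left hpt] at this
  have hlast : d n = -mu := by
    have h1 : D.Conj mu (-d n) := by
      have := Conj.neg (D := D) ((hO _).mp (h.mem n (Nat.lt_succ_self n)))
      rwa [neg_neg] at this
    rw [← Conj.eq_of_isDom (D := D) h1 hmu hdom, neg_neg]
  have hchain : ∀ k η η', D.Chain (n + 1) k η η' → η' = -mu → η = -mu := by
    intro k η η' hc
    induction hc with
    | refl => exact id
    | tail _ he ih =>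
      rintro rfl
      obtain ⟨β, hneg, -, heq, -⟩ := he
      exfalso
      have h1 := congrArg (D.p β) heq
      rw [p_refl_self, map_neg] at h1
      have := hmu β
      omega
  have hall : ∀ m k, k + m = n → d k = -mu := by
    intro m
    induction m with
    | zero => rintro k rfl; exact hlast
    | succ m ih =>
      intro k hk
      exact hchain _ _ _ (h.chain k (by omega)) (ih (k + 1) (by omega))
  have hall' : ∀ k < n + 1, d k = -mu := fun k hk => hall (n - k) k (by omega)
  refine ⟨?_, hall'⟩
  have hp : pt d (n + 1) = ((n + 1 : ℕ) : ℤ) • (-mu) := by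
    rw [pt, Finset.sum_congr rfl fun k hk => hall' k (Finset.mem_range.mp hk)]
    rw [Finset.sum_const, Finset.card_range, natCast_zsmul]
  have h2 : ((n + 1 : ℕ) : ℤ) • (wt (n + 1) d) = ((n + 1 : ℕ) : ℤ) • (-mu) := by
    rw [h.smul_wt, hp]
  rw [smul_left_cancel' D hS.pos h2] at he
  exact add_neg_eq_zero.mp he

lemma exists_const_path (hS : D.PathSetup O N) {mu : Λ} (hmu : D.IsDom mu)
    (hO : ∀ χ, χ ∈ O ↔ D.Conj (-mu) χ) :
    D.IsPath O N (fun k => if k < N then -mu else 0) ∧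
      D.IsGood N mu (fun k => if k < N then -mu else 0) ∧
      mu + wt N (fun k => if k < N then -mu else 0) = 0 := by
  have hN : (0 : ℤ) < N := by exact_mod_cast hS.pos
  have hpt : ∀ t ≤ N, pt (fun k => if k < N then -mu else 0) t = (t : ℤ) • (-mu) := by
    intro t ht
    rw [pt, Finset.sum_congr rfl fun k hk => if_pos
      (lt_of_lt_of_le (Finset.mem_range.mp hk) ht)]
    simp
  have hp : D.IsPath O N (fun k => if k < N then -mu else 0) := by
    refine ⟨?_, ?_, ?_⟩
    · intro k hk
      simp only [if_pos hk]
      exact (hO _).mpr ⟨[], rfl⟩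
    · intro k hk
      simp [hk]
    · intro k hk
      simp only [if_pos hk, if_pos (show k < N by omega)]
      exact Relation.ReflTransGen.refl
  refine ⟨hp, isGood_of_isDom hS.pos fun t ht β => ?_, ?_⟩
  · rw [hpt t ht, map_add, map_zsmul, map_zsmul, map_neg, smul_eq_mul, smul_eq_mul]
    have := hmu β
    have ht' : (t : ℤ) ≤ N := by exact_mod_cast ht
    nlinarith
  · have h2 := hp.smul_wt
    rw [hpt N le_rfl] at h2
    rw [smul_left_cancel' D hS.pos h2, add_neg_cancel]

end PosRootDatum

namespace PosRootDatum

open AddMonoidAlgebra (single)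

variable {ι Λ : Type*} [Fintype ι] [AddCommGroup Λ] (D : PosRootDatum ι Λ)

/-- Rescaling the coefficients of a formal character. -/
noncomputable def scale (c : Λ → ℂ) : AddMonoidAlgebra ℂ Λ →+ AddMonoidAlgebra ℂ Λ where
  toFun f := .ofCoeff (Finsupp.onFinset f.coeff.support (fun χ => c χ * f.coeff χ)
    (fun χ h => by
      rw [Finsupp.mem_support_iff]; exact right_ne_zero_of_mul h))
  map_zero' := by ext; simp
  map_add' f g := by ext; simp [mul_add]

omit [AddCommGroup Λ] in
@[simp] lemma coeff_scale (c : Λ → ℂ) (f : AddMonoidAlgebra ℂ Λ) (χ : Λ) :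
    (scale c f).coeff χ = c χ * f.coeff χ := rfl

lemma algebra_induction {C : AddMonoidAlgebra ℂ Λ → Prop} (f : AddMonoidAlgebra ℂ Λ)
    (h0 : C 0) (h1 : ∀ χ r, C (single χ r)) (h2 : ∀ f g, C f → C g → C (f + g)) : C f :=
  Finsupp.induction_linear (motive := fun x ↦ C (.ofCoeff x)) f.coeff h0
    (fun x y hf hg ↦ h2 (.ofCoeff x) (.ofCoeff y) hf hg) fun m r ↦ h1 m r

/-- The Weyl denominator. -/
noncomputable def den (ρ : Λ) : AddMonoidAlgebra ℂ Λ :=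
  single ρ 1 * ∏ β, (1 - single (-D.root β) 1)

/-- The Weyl denominator without the factor of `β`. -/
noncomputable def denErase (ρ : Λ) (β : ι) : AddMonoidAlgebra ℂ Λ := by
  classical
  exact single ρ 1 * ∏ γ ∈ Finset.univ.erase β, (1 - single (-D.root γ) 1)

lemma den_eq (ρ : Λ) (β : ι) : D.den ρ = (1 - single (-D.root β) 1) * D.denErase ρ β := by
  classical
  rw [den, denErase, ← Finset.mul_prod_erase _ _ (Finset.mem_univ β)]
  ring

/-- The derivation attached to a weight. -/
noncomputable def deriv (χ : Λ) : AddMonoidAlgebra ℂ Λ →+ AddMonoidAlgebra ℂ Λ :=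
  scale fun ψ => (D.form χ ψ : ℂ)

/-- The Laplacian. -/
noncomputable def lap : AddMonoidAlgebra ℂ Λ →+ AddMonoidAlgebra ℂ Λ :=
  scale fun ψ => (D.form ψ ψ : ℂ)

lemma deriv_mul (χ : Λ) (f g : AddMonoidAlgebra ℂ Λ) :
    D.deriv χ (f * g) = f * D.deriv χ g + g * D.deriv χ f := by
  induction f using algebra_induction with
  | h0 => simp
  | h1 a r =>
    ext h
    rw [mul_comm g]
    have e : D.deriv χ (single a r) = single a (D.form χ a * r) := by
      classical
      ext ψ
      rw [deriv, coeff_scale, AddMonoidAlgebra.coeff_single, AddMonoidAlgebra.coeff_single,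
        Finsupp.single_apply, Finsupp.single_apply]
      split_ifs with h
      · rw [h]
      · simp
    rw [e, deriv, coeff_scale, AddMonoidAlgebra.coeff_single_mul_apply,
      AddMonoidAlgebra.coeff_add, Finsupp.add_apply, AddMonoidAlgebra.coeff_single_mul_apply,
      AddMonoidAlgebra.coeff_single_mul_apply, coeff_scale]
    have : D.form χ h = D.form χ a + D.form χ (-a + h) := by
      rw [← form_add_right]; congr 1; abel
    rw [this]; push_cast; ring
  | h2 f f' h h' =>
    rw [add_mul, map_add, h, h', map_add]; ring

lemma lap_single_mul (a : Λ) (r : ℂ) (g : AddMonoidAlgebra ℂ Λ) :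
    D.lap (single a r * g) = D.lap (single a r) * g + 2 * (single a r * D.deriv a g)
      + single a r * D.lap g := by
  have e : D.lap (single a r) = single a (D.form a a * r) := by
    classical
    ext ψ
    rw [lap, coeff_scale, AddMonoidAlgebra.coeff_single, AddMonoidAlgebra.coeff_single,
      Finsupp.single_apply, Finsupp.single_apply]
    split_ifs with h
    · rw [h]
    · simp
  rw [two_mul, e]
  ext h
  simp only [lap, deriv, coeff_scale, AddMonoidAlgebra.coeff_single_mul_apply,
      AddMonoidAlgebra.coeff_add, Finsupp.add_apply]
  have : D.form h h = D.form a a + 2 * D.form a (-a + h) + D.form (-a + h) (-a + h) := by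
    obtain ⟨b, rfl⟩ : ∃ b, h = a + b := ⟨-a + h, by abel⟩
    rw [neg_add_cancel_left, form_add_right, form_add_left, form_add_left, D.form_comm b a]
    ring
  rw [this]; push_cast; ring

lemma deriv_single (χ a : Λ) (r : ℂ) : D.deriv χ (single a r) = single a (D.form χ a * r) := by
  classical
  ext ψ
  rw [deriv, coeff_scale, AddMonoidAlgebra.coeff_single, AddMonoidAlgebra.coeff_single,
    Finsupp.single_apply, Finsupp.single_apply]
  split_ifs with h
  · rw [h]
  · simp

lemma deriv_one (χ : Λ) : D.deriv χ 1 = 0 := by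
  have := D.deriv_mul χ 1 1
  simpa using this

lemma single_scalar (a : Λ) (c r : ℂ) :
    (single a (c * r) : AddMonoidAlgebra ℂ Λ) = c • single a r := by
  rw [AddMonoidAlgebra.smul_single, smul_eq_mul]

lemma deriv_prod (χ ρ : Λ) (s : Finset ι) [DecidableEq ι] :
    D.deriv χ (single ρ 1 * ∏ β ∈ s, (1 - single (-D.root β) 1)) =
      (D.form χ ρ : ℂ) • (single ρ 1 * ∏ β ∈ s, (1 - single (-D.root β) 1)) +
      ∑ β ∈ s, (D.form χ (D.root β) : ℂ) • (single (-D.root β) 1 *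
        (single ρ 1 * ∏ γ ∈ s.erase β, (1 - single (-D.root γ) 1))) := by
  induction s using Finset.induction_on with
  | empty => simp [deriv_single, AddMonoidAlgebra.smul_single]
  | insert i s hi ih =>
    rw [Finset.prod_insert hi, Finset.sum_insert hi, Finset.erase_insert hi]
    have e1 : ∀ β ∈ s, ∏ γ ∈ (insert i s).erase β, (1 - single (-D.root γ) (1 : ℂ)) =
        (1 - single (-D.root i) 1) * ∏ γ ∈ s.erase β, (1 - single (-D.root γ) 1) := by
      intro β hβ
      rw [Finset.erase_insert_of_ne (by rintro rfl; exact hi hβ),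
        Finset.prod_insert (by simp [hi])]
    rw [Finset.sum_congr rfl fun β hβ => by rw [e1 β hβ]]
    rw [mul_left_comm, deriv_mul, ih, map_sub, deriv_one, deriv_single, form_neg_right,
      mul_add, Finset.mul_sum]
    push_cast
    rw [single_scalar, zero_sub, neg_smul, neg_neg, mul_smul_comm, mul_smul_comm]
    rw [mul_comm (single ρ 1 * _) (single (-D.root i) 1)]
    rw [add_assoc, add_comm (∑ _ ∈ s, _)]
    congr 2
    refine Finset.sum_congr rfl fun β _ => ?_
    rw [mul_smul_comm]
    congr 1
    ring

lemma two_deriv_den {ρ : Λ} (hρ : D.IsRho ρ) (χ : Λ) :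
    2 * D.deriv χ (D.den ρ) =
      ∑ β, (D.form χ (D.root β) : ℂ) • ((1 + single (-D.root β) 1) * D.denErase ρ β) := by
  classical
  have h1 : 2 * ((D.form χ ρ : ℂ) • D.den ρ) =
      ∑ β, (D.form χ (D.root β) : ℂ) • ((1 - single (-D.root β) 1) * D.denErase ρ β) := by
    rw [Finset.sum_congr rfl fun β _ => by rw [← D.den_eq ρ β], ← Finset.sum_smul, two_mul,
      ← add_smul]
    congr 1
    have : D.form χ ρ + D.form χ ρ = ∑ β, D.form χ (D.root β) := by
      rw [← form_add_right, hρ, twoRho]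
      exact map_sum (⟨⟨D.form χ, D.form_zero_right χ⟩, D.form_add_right χ⟩ : Λ →+ ℚ) _ _
    exact_mod_cast this
  have h2 := D.deriv_prod χ ρ Finset.univ
  rw [← den] at h2
  rw [h2, mul_add, h1, Finset.mul_sum, ← Finset.sum_add_distrib]
  refine Finset.sum_congr rfl fun β _ => ?_
  rw [mul_smul_comm, ← smul_add, denErase]
  congr 1
  ring

lemma lap_mul_den {ρ : Λ} (hρ : D.IsRho ρ) (f : AddMonoidAlgebra ℂ Λ) :
    D.lap (f * D.den ρ) = D.lap f * D.den ρ + f * D.lap (D.den ρ) +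
      ∑ β, (1 + single (-D.root β) 1) * D.denErase ρ β * D.deriv (D.root β) f := by
  induction f using algebra_induction with
  | h0 => simp
  | h1 a r =>
    rw [lap_single_mul, mul_left_comm 2, two_deriv_den D hρ, Finset.mul_sum, add_right_comm]
    congr 1
    refine Finset.sum_congr rfl fun β _ => ?_
    rw [deriv_single, form_comm, single_scalar, mul_smul_comm, mul_smul_comm]
    congr 1
    ring
  | h2 f g hf hg =>
    rw [add_mul, map_add, hf, hg, map_add, add_mul, add_mul]
    simp only [map_add, mul_add, Finset.sum_add_distrib]
    ring

variable {D}

lemma coeff_prod_den (s : Finset ι) :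
    (∀ ψ, (∏ β ∈ s, (1 - single (-D.root β) (1 : ℂ))).coeff ψ ≠ 0 → -ψ ∈ D.posCone) ∧
      (∏ β ∈ s, (1 - single (-D.root β) (1 : ℂ))).coeff 0 = 1 := by
  classical
  induction s using Finset.induction_on with
  | empty =>
    refine ⟨fun ψ h => ?_, by simp⟩
    rw [Finset.prod_empty, AddMonoidAlgebra.one_def, AddMonoidAlgebra.coeff_single,
      Finsupp.single_apply] at h
    have : (0 : Λ) = ψ := by by_contra hne; simp [hne] at h
    rw [← this, neg_zero]
    exact zero_mem _
  | insert i s hi ih =>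
    have key : ∀ ψ, (∏ β ∈ insert i s, (1 - single (-D.root β) (1 : ℂ))).coeff ψ =
        (∏ β ∈ s, (1 - single (-D.root β) (1 : ℂ))).coeff ψ -
        (∏ β ∈ s, (1 - single (-D.root β) (1 : ℂ))).coeff (D.root i + ψ) := by
      intro ψ
      rw [Finset.prod_insert hi, sub_mul, one_mul, AddMonoidAlgebra.coeff_sub, Finsupp.sub_apply,
        AddMonoidAlgebra.coeff_single_mul_apply, one_mul, neg_neg]
    refine ⟨fun ψ h => ?_, ?_⟩
    · rw [key] at h
      by_cases h1 : (∏ β ∈ s, (1 - single (-D.root β) (1 : ℂ))).coeff ψ = 0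
      · rw [h1, zero_sub, neg_ne_zero] at h
        have := add_mem (ih.1 _ h) (D.root_mem_posCone i)
        rwa [neg_add_rev, neg_add_cancel_right] at this
      · exact ih.1 _ h1
    · rw [key, ih.2, sub_eq_self]
      by_contra h
      have := ih.1 _ h
      exact D.add_ne_zero_of_mem_posCone this i (by abel)

lemma coeff_den (ρ ψ : Λ) : (D.den ρ).coeff (ψ + ρ) =
    (∏ β, (1 - single (-D.root β) (1 : ℂ))).coeff ψ := by
  rw [den, AddMonoidAlgebra.coeff_single_mul_apply, one_mul]
  congr 1; abel

lemma coeff_den_self (ρ : Λ) : (D.den ρ).coeff (0 + ρ) = 1 := by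
  rw [coeff_den]; exact (coeff_prod_den _).2

lemma neg_mem_of_coeff_den {ρ ψ : Λ} (h : (D.den ρ).coeff (ψ + ρ) ≠ 0) : -ψ ∈ D.posCone := by
  rw [coeff_den] at h; exact (coeff_prod_den _).1 _ h

lemma coeff_den_of_isDom {ρ κ : Λ} (hκ : D.IsDom κ) (h : κ ≠ 0) :
    (D.den ρ).coeff (κ + ρ) = 0 := by
  by_contra hne
  have h1 := neg_mem_of_coeff_den hne
  have h2 := D.form_nonneg_of_simple (χ := κ) (fun i _ => hκ i) h1
  rw [form_neg_right] at h2
  exact h (D.eq_zero_of_form_self κ (by linarith))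

lemma coeff_mapDomain_refl (i : ι) (f : AddMonoidAlgebra ℂ Λ) (χ : Λ) :
    (AddMonoidAlgebra.mapDomainRingHom ℂ (D.refl i) f).coeff χ = f.coeff (D.refl i χ) := by
  obtain ⟨χ, rfl⟩ : ∃ ψ, χ = D.refl i ψ := ⟨D.refl i χ, (D.refl_refl i χ).symm⟩
  rw [refl_refl]
  exact Finsupp.mapDomain_apply (D.refl_injective i) _ _

lemma mapDomain_den {ρ : Λ} (hρ : D.IsRho ρ) {i : ι} (hi : D.IsSimpleRoot i) :
    AddMonoidAlgebra.mapDomainRingHom ℂ (D.refl i) (D.den ρ) = - D.den ρ := by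
  classical
  have e : ∀ χ r, AddMonoidAlgebra.mapDomainRingHom ℂ (D.refl i) (single χ r) =
      single (D.refl i χ) r := fun χ r => AddMonoidAlgebra.mapDomain_single
  have h1 : AddMonoidAlgebra.mapDomainRingHom ℂ (D.refl i) (D.denErase ρ i) =
      single (-D.root i) 1 * D.denErase ρ i := by
    rw [denErase, map_mul, map_prod, e, refl_apply, hρ.p_simple hi, one_smul, ← mul_assoc,
      AddMonoidAlgebra.single_mul_single, one_mul, neg_add_eq_sub]
    congr 1
    refine Finset.prod_nbij' (D.rperm i) (D.rperm i) ?_ ?_ ?_ ?_ ?_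
    · intro β hβ; simpa using D.rperm_ne (Finset.ne_of_mem_erase hβ)
    · intro β hβ; simpa using D.rperm_ne (Finset.ne_of_mem_erase hβ)
    · intro β _; exact D.rperm_rperm i β
    · intro β _; exact D.rperm_rperm i β
    · intro β hβ
      rw [map_sub, map_one, e, map_neg, D.refl_root_simple hi (Finset.ne_of_mem_erase hβ)]
  rw [D.den_eq ρ i, map_mul, h1, map_sub, map_one, e, map_neg, refl_root_self, neg_neg,
    ← mul_assoc, sub_mul, one_mul, AddMonoidAlgebra.single_mul_single, add_neg_cancel, one_mul,
    ← AddMonoidAlgebra.one_def, ← neg_mul, neg_sub]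

lemma isSkew_mul_den {ρ : Λ} (hρ : D.IsRho ρ) {f : AddMonoidAlgebra ℂ Λ}
    (hf : ∀ i, D.IsSimpleRoot i → ∀ χ, f.coeff (D.refl i χ) = f.coeff χ) :
    D.IsSkew (f * D.den ρ).coeff := by
  intro i hi χ
  rw [← coeff_mapDomain_refl, map_mul, mapDomain_den hρ hi]
  have : AddMonoidAlgebra.mapDomainRingHom ℂ (D.refl i) f = f := by
    ext χ
    rw [coeff_mapDomain_refl, hf i hi]
  rw [this, mul_neg]
  rfl

lemma isSkew_den {ρ : Λ} (hρ : D.IsRho ρ) : D.IsSkew (D.den ρ).coeff := by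
  intro i hi χ
  rw [← coeff_mapDomain_refl, mapDomain_den hρ hi]
  rfl

lemma lap_den {ρ : Λ} (hρ : D.IsRho ρ) : D.lap (D.den ρ) = (D.form ρ ρ : ℂ) • D.den ρ := by
  ext ξ
  rw [lap, coeff_scale, AddMonoidAlgebra.coeff_smul, Finsupp.smul_apply, smul_eq_mul]
  by_cases h : (D.den ρ).coeff ξ = 0
  · simp [h]
  · obtain ⟨κ, h1, h2, l, h3⟩ := (isSkew_den hρ).exists_dom hρ h
    have h0 : κ = 0 := by
      by_contra hne; exact h2 (coeff_den_of_isDom h1 hne)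
    rw [h0, zero_add] at h3
    rw [← h3, form_word]

/-- The eigenvalue of the Casimir operator read off from formal characters. -/
lemma coeff_casimir {ρ : Λ} (hρ : D.IsRho ρ) {f g : AddMonoidAlgebra ℂ Λ}
    (T : ι → AddMonoidAlgebra ℂ Λ)
    (hT : ∀ β, T β - single (-D.root β) 1 * T β = D.deriv (D.root β) f)
    (hg : g = D.lap f + ∑ β, (T β + single (-D.root β) 1 * T β)) (ξ : Λ) :
    (g * D.den ρ).coeff ξ = (D.form ξ ξ - D.form ρ ρ : ℂ) * (f * D.den ρ).coeff ξ := by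
  have h1 : D.lap (f * D.den ρ) = g * D.den ρ + (D.form ρ ρ : ℂ) • (f * D.den ρ) := by
    rw [lap_mul_den D hρ, lap_den hρ, hg, add_mul, mul_smul_comm, Finset.sum_mul, add_right_comm]
    congr 2
    refine Finset.sum_congr rfl fun β _ => ?_
    rw [← hT, D.den_eq ρ β]
    ring
  have h2 := congrArg (fun x => AddMonoidAlgebra.coeff x ξ) h1
  simp only [lap, coeff_scale, AddMonoidAlgebra.coeff_add, Finsupp.add_apply,
    AddMonoidAlgebra.coeff_smul, Finsupp.smul_apply, smul_eq_mul] at h2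
  rw [sub_mul, h2]
  ring

theorem coeff_mul_ne_zero {ρ : Λ} (hρ : D.IsRho ρ) {chV chW : AddMonoidAlgebra ℂ Λ}
    (hV : D.IsSkew (chV * D.den ρ).coeff) (hW : D.IsSkew (chW * D.den ρ).coeff)
    {lam mu ν η : Λ} (hlam : D.IsDom lam) (hmu : D.IsDom mu) (hν : D.IsDom ν)
    (hV0 : ∀ κ, D.IsDom κ → κ ≠ lam → (chV * D.den ρ).coeff (κ + ρ) = 0)
    (hW0 : ∀ κ, D.IsDom κ → κ ≠ mu → (chW * D.den ρ).coeff (κ + ρ) = 0)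
    (hV1 : (chV * D.den ρ).coeff (lam + ρ) ≠ 0) (hW1 : (chW * D.den ρ).coeff (mu + ρ) ≠ 0)
    (hη : D.Conj (-mu) η) (hc : D.Conj (ν + η) lam) :
    (chV * chW * D.den ρ).coeff (ν + ρ) ≠ 0 := by
  classical
  obtain ⟨O, N, hS, hO⟩ := D.exists_pathSetup (-mu)
  set X : AddMonoidAlgebra ℂ Λ := ∑ d ∈ D.paths O N, single (-wt N d) 1 with hX
  have hXc : ∀ (f : AddMonoidAlgebra ℂ Λ) ξ, (X * f).coeff ξ =
      ∑ d ∈ D.paths O N, f.coeff (ξ + wt N d) := by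
    intro f ξ
    rw [hX, Finset.sum_mul, AddMonoidAlgebra.coeff_sum, Finsupp.finsetSum_apply]
    refine Finset.sum_congr rfl fun d _ => ?_
    rw [AddMonoidAlgebra.coeff_single_mul_apply, one_mul, neg_neg, add_comm]
  have hXs : D.IsSkew (X * D.den ρ).coeff := by
    refine isSkew_mul_den hρ fun i hi χ => ?_
    have := sum_paths_refl hS hi fun ψ => (single (0 : Λ) (1 : ℂ)).coeff (χ + ψ)
    have e1 : ∀ ψ : Λ, (single (0 : Λ) (1 : ℂ)).coeff (D.refl i χ + ψ) =
        (single (0 : Λ) (1 : ℂ)).coeff (χ + D.refl i ψ) := by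
      intro ψ
      have e2 : χ + D.refl i ψ = D.refl i (D.refl i χ + ψ) := by rw [map_add, refl_refl]
      rw [e2, AddMonoidAlgebra.coeff_single, Finsupp.single_apply, Finsupp.single_apply]
      congr 1
      apply propext
      constructor
      · intro h; rw [← h, map_zero]
      · intro h
        exact D.refl_injective i (by rw [map_zero, h])
    rw [← mul_one X, AddMonoidAlgebra.one_def, hXc, hXc, ← this]
    exact Finset.sum_congr rfl fun d _ => e1 _
  have hcount : ∀ (f : AddMonoidAlgebra ℂ Λ), D.IsSkew f.coeff → ∀ κ, D.IsDom κ →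
      (X * f).coeff (κ + ρ) =
        ∑ d ∈ (D.paths O N).filter (D.IsGood N κ), f.coeff (κ + wt N d + ρ) := by
    intro f hf κ hκ
    rw [hXc, sum_paths_skew hS hf hκ fun i hi => hρ.p_simple hi]
    exact Finset.sum_congr rfl fun d _ => by rw [add_right_comm]
  have hgood : ∀ κ, ∀ d ∈ (D.paths O N).filter (D.IsGood N κ),
      D.IsPath O N d ∧ D.IsGood N κ d ∧ D.IsDom (κ + wt N d) := by
    intro κ d hd
    rw [Finset.mem_filter, mem_paths] at hd
    exact ⟨hd.1, hd.2, hd.2.isDom_wt hS hd.1⟩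
  set a := (chW * D.den ρ).coeff (mu + ρ) with ha
  have hWX : chW * D.den ρ = a • (X * D.den ρ) := by
    have hsk : D.IsSkew (chW * D.den ρ - a • (X * D.den ρ)).coeff := by
      intro i hi χ
      simp only [AddMonoidAlgebra.coeff_sub, AddMonoidAlgebra.coeff_smul, Finsupp.sub_apply,
        Finsupp.smul_apply, smul_eq_mul, hW i hi χ, hXs i hi χ]
      ring
    have h0 := hsk.eq_zero hρ ?_
    · rw [← sub_eq_zero]
      ext ξ
      exact congrFun h0 ξ
    · intro κ hκ
      simp only [AddMonoidAlgebra.coeff_sub, AddMonoidAlgebra.coeff_smul, Finsupp.sub_apply,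
        Finsupp.smul_apply, smul_eq_mul]
      rw [hcount _ (isSkew_den hρ) κ hκ]
      by_cases hκm : κ = mu
      · subst hκm
        obtain ⟨c1, c2, c3⟩ := exists_const_path hS hκ hO
        rw [Finset.sum_eq_single_of_mem (fun k => if k < N then -κ else 0)
          (by rw [Finset.mem_filter, mem_paths]; exact ⟨c1, c2⟩), c3, coeff_den_self, ← ha]
        · ring
        · intro d hd hne
          obtain ⟨g1, g2, g3⟩ := hgood κ d hd
          by_cases hz : κ + wt N d = 0
          · exfalso
            refine hne (funext fun k => ?_)
            have := (g2.eq_const hS hκ hO g1 hz).2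
            split_ifs with hk
            · exact this k hk
            · exact g1.zero k (by omega)
          · exact coeff_den_of_isDom g3 hz
      · rw [hW0 κ hκ hκm, Finset.sum_eq_zero, mul_zero, sub_zero]
        intro d hd
        obtain ⟨g1, g2, g3⟩ := hgood κ d hd
        refine coeff_den_of_isDom g3 fun hz => hκm (g2.eq_const hS hmu hO g1 hz).1
  have hfin : chV * chW * D.den ρ = a • (X * (chV * D.den ρ)) := by
    rw [mul_assoc, hWX, mul_smul_comm]
    congr 1; ring
  rw [hfin, AddMonoidAlgebra.coeff_smul, Finsupp.smul_apply, smul_eq_mul]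
  refine mul_ne_zero hW1 ?_
  rw [hcount _ hV ν hν]
  have hval : ∀ d ∈ (D.paths O N).filter (D.IsGood N ν),
      (chV * D.den ρ).coeff (ν + wt N d + ρ) =
        if ν + wt N d = lam then (chV * D.den ρ).coeff (lam + ρ) else 0 := by
    intro d hd
    split_ifs with h
    · rw [h]
    · exact hV0 _ (hgood ν d hd).2.2 h
  rw [Finset.sum_congr rfl hval, Finset.sum_ite, Finset.sum_const_zero, add_zero,
    Finset.sum_const, nsmul_eq_mul]
  refine mul_ne_zero ?_ hV1
  obtain ⟨d, d1, d2, d3⟩ := exists_good_path hS hν hlam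
    (fun l => (hO _).mpr (Conj.trans (D := D) hη ⟨l, rfl⟩)) hc
  rw [Nat.cast_ne_zero, ← Nat.pos_iff_ne_zero, Finset.card_pos]
  exact ⟨d, by simp only [Finset.mem_filter, mem_paths]; exact ⟨⟨d1, d2⟩, d3⟩⟩

end PosRootDatum

namespace PRVLie

open LieAlgebra LieAlgebra.IsKilling LieModule

variable {L : Type*} [LieRing L] [LieAlgebra ℂ L] [FiniteDimensional ℂ L]
  [LieAlgebra.IsKilling ℂ L] {H : LieSubalgebra ℂ L} [H.IsCartanSubalgebra]

/-- The index type of positive roots. -/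
abbrev PosIdx (P : Set (H → ℂ)) := {α : Weight ℂ H L // (α : H → ℂ) ∈ P}

noncomputable instance (P : Set (H → ℂ)) : Fintype (PosIdx P) := Fintype.ofFinite _

/-- The lattice of integral weights. -/
def IntWt (P : Set (H → ℂ)) : AddSubgroup (Module.Dual ℂ H) where
  carrier := {χ | ∀ β : PosIdx P, ∃ k : ℤ, (k : ℂ) = χ (coroot β.1)}
  add_mem' {a b} ha hb β := by
    obtain ⟨k, hk⟩ := ha β
    obtain ⟨l, hl⟩ := hb β
    exact ⟨k + l, by simp [hk, hl]⟩
  zero_mem' β := ⟨0, by simp⟩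
  neg_mem' {a} ha β := by
    obtain ⟨k, hk⟩ := ha β
    exact ⟨-k, by simp [hk]⟩

variable {P : Set (H → ℂ)}

/-- The integral pairing with a coroot. -/
noncomputable def pairing (β : PosIdx P) : IntWt P →+ ℤ :=
  AddMonoidHom.mk' (fun χ => (χ.2 β).choose) fun χ ψ => by
    apply Int.cast_injective (α := ℂ)
    push_cast
    rw [(χ.2 β).choose_spec, (ψ.2 β).choose_spec, ((χ + ψ).2 β).choose_spec]
    simp

lemma cast_pairing (β : PosIdx P) (χ : IntWt P) : (pairing β χ : ℂ) = χ.1 (coroot β.1) :=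
  (χ.2 β).choose_spec

/-- A root as an integral weight. -/
noncomputable def wtRoot (P : Set (H → ℂ)) (α : Weight ℂ H L) : IntWt P :=
  ⟨α.toLinear, fun β => ⟨_, (apply_coroot_eq_cast β.1 α).symm⟩⟩

lemma wtRoot_apply (α : Weight ℂ H L) (h : H) : (wtRoot P α).1 h = α h := rfl

lemma pairing_wtRoot (α : Weight ℂ H L) (β : PosIdx P) :
    pairing β (wtRoot P α) = chainBotCoeff β.1 α - chainTopCoeff β.1 α := by
  apply Int.cast_injective (α := ℂ)
  rw [cast_pairing, wtRoot_apply, apply_coroot_eq_cast]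

lemma wtRoot_eq_iff (α : Weight ℂ H L) (χ : IntWt P) :
    wtRoot P α = χ ↔ (α : H → ℂ) = χ.1 := by
  rw [Subtype.ext_iff, LinearMap.ext_iff, funext_iff]
  rfl

lemma wtRoot_neg (α : Weight ℂ H L) : wtRoot P (-α) = - wtRoot P α := by
  rw [wtRoot_eq_iff]; rfl

lemma wtRoot_injective : Function.Injective (wtRoot P : Weight ℂ H L → IntWt P) := by
  intro α β h
  rw [wtRoot_eq_iff] at h
  exact DFunLike.coe_injective h

lemma isRootOf_iff (α : H → ℂ) :
    IsRootOf H α ↔ ∃ a : Weight ℂ H L, a.IsNonZero ∧ (a : H → ℂ) = α := by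
  constructor
  · rintro ⟨h0, h1⟩
    exact ⟨⟨α, h1⟩, h0, rfl⟩
  · rintro ⟨a, ha, rfl⟩
    exact ⟨ha, a.genWeightSpace_ne_bot⟩

variable (hP : IsPositiveSystem H P)
include hP

lemma isNonZero (β : PosIdx P) : β.1.IsNonZero := (hP.1 _ β.2).1

lemma exists_posIdx (a : Weight ℂ H L) (ha : a.IsNonZero) :
    ∃ δ : PosIdx P, a = δ.1 ∨ a = -δ.1 := by
  rcases hP.2.1 a ((isRootOf_iff _).2 ⟨a, ha, rfl⟩) with h | h
  · exact ⟨⟨a, h⟩, Or.inl rfl⟩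
  · exact ⟨⟨-a, h⟩, Or.inr (neg_neg a).symm⟩

lemma pairing_self (β : PosIdx P) : pairing β (wtRoot P β.1) = 2 := by
  apply Int.cast_injective (α := ℂ)
  rw [cast_pairing, wtRoot_apply, root_apply_coroot (isNonZero hP β)]; simp

lemma rootSum_eq (F : Weight ℂ H L → ℂ) (hF : ∀ α, F (-α) = F α) :
    ∑ α ∈ H.root, F α = 2 * ∑ β : PosIdx P, F β.1 := by
  classical
  have hinj : Function.Injective (Sum.elim (fun β : PosIdx P => β.1) (fun β : PosIdx P => -β.1)) := by
    rintro (a | a) (b | b) h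
    · exact congrArg _ (Subtype.ext h)
    · simp only [Sum.elim_inl, Sum.elim_inr] at h
      have := a.2
      rw [h] at this
      exact (hP.2.2.1 _ b.2 this).elim
    · simp only [Sum.elim_inl, Sum.elim_inr] at h
      have := b.2
      rw [← h] at this
      exact (hP.2.2.1 _ a.2 this).elim
    · simp only [Sum.elim_inr] at h
      exact congrArg _ (Subtype.ext (neg_injective h))
  have himg : H.root = Finset.univ.image (Sum.elim (fun β : PosIdx P => β.1) (fun β : PosIdx P => -β.1)) := by
    ext a
    simp only [Finset.mem_filter, Finset.mem_univ, true_and, Finset.mem_image]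
    constructor
    · intro ha
      obtain ⟨δ, h | h⟩ := exists_posIdx hP a ha
      · exact ⟨Sum.inl δ, h.symm⟩
      · exact ⟨Sum.inr δ, h.symm⟩
    · rintro ⟨b | b, rfl⟩
      · exact isNonZero hP b
      · exact (isNonZero hP b).neg
  rw [himg, Finset.sum_image hinj.injOn, Fintype.sum_sum_type]
  simp [hF, two_mul]

lemma traceForm_eq (h h' : H) :
    traceForm ℂ H L h h' = 2 * ∑ γ : PosIdx P, γ.1 h * γ.1 h' := by
  rw [← rootSum_eq hP (fun α => α h * α h') (by intro α; simp)]
  have := congrArg (fun B => B h h') (restrict_killingForm_eq_sum (K := ℂ) (L := L) (H := H))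
  rw [restrict_killingForm] at this
  rw [this]
  simp only [LinearMap.sum_apply, LinearMap.smulRight_apply, smul_eq_mul, LinearMap.smul_apply]
  rfl

omit hP in
lemma traceForm_symm_apply (χ : Module.Dual ℂ H) (x : H) :
    traceForm ℂ H L ((cartanEquivDual H).symm χ) x = χ x := by
  exact LinearMap.congr_fun (LinearEquiv.apply_symm_apply (cartanEquivDual H) χ) x

/-- Half of the squared length of a positive root. -/
noncomputable def halfLen (β : PosIdx P) : ℚ :=
  (∑ γ : PosIdx P, (pairing β (wtRoot P γ.1) : ℚ) ^ 2)⁻¹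

lemma halfLen_pos (β : PosIdx P) : 0 < halfLen β := by
  refine inv_pos.2 (Finset.sum_pos' (fun _ _ => sq_nonneg _) ⟨β, Finset.mem_univ _, ?_⟩)
  rw [pairing_self hP]; norm_num

lemma cartan_symm_eq (β : PosIdx P) :
    (cartanEquivDual H).symm β.1.toLinear = (halfLen β : ℂ) • coroot β.1 := by
  set t := (cartanEquivDual H).symm β.1.toLinear with ht
  have h0 : β.1 t ≠ 0 := root_apply_cartanEquivDual_symm_ne_zero (isNonZero hP β)
  have hc : coroot β.1 = (2 * (β.1 t)⁻¹) • t := by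
    rw [coroot, ← ht, ← Nat.cast_smul_eq_nsmul ℂ, smul_smul]; norm_num
  have h1 : traceForm ℂ H L (coroot β.1) (coroot β.1) = 4 * (β.1 t)⁻¹ := by
    rw [traceForm_coroot, ← ht, root_apply_coroot (isNonZero hP β), ← Nat.cast_smul_eq_nsmul ℂ]
    simp only [smul_eq_mul]; push_cast; ring
  rw [traceForm_eq hP] at h1
  have h2 : ((halfLen β : ℚ) : ℂ) = (∑ γ : PosIdx P, γ.1 (coroot β.1) * γ.1 (coroot β.1))⁻¹ := by
    rw [halfLen]
    push_cast
    congr 1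
    refine Finset.sum_congr rfl fun γ _ => ?_
    rw [cast_pairing, wtRoot_apply]; ring
  have h3 : ∑ γ : PosIdx P, γ.1 (coroot β.1) * γ.1 (coroot β.1) = 2 * (β.1 t)⁻¹ := by
    linear_combination h1 / 2
  rw [h2, h3, hc, smul_smul, inv_mul_cancel₀, one_smul]
  simp [h0]

lemma halfLen_mul_pairing (β : PosIdx P) (χ : IntWt P) :
    (halfLen β : ℂ) * pairing β χ = β.1 ((cartanEquivDual H).symm χ.1) := by
  have : traceForm ℂ H L ((cartanEquivDual H).symm β.1.toLinear)
      ((cartanEquivDual H).symm χ.1) = _ := traceForm_symm_apply _ _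
  rw [LieModule.traceForm_comm, traceForm_symm_apply, cartan_symm_eq hP, map_smul, smul_eq_mul,
    ← cast_pairing] at this
  exact this


lemma form_eq_aux (χ ψ : IntWt P) :
    2 * ∑ γ : PosIdx P, (halfLen γ : ℂ) ^ 2 * pairing γ χ * pairing γ ψ =
      ψ.1 ((cartanEquivDual H).symm χ.1) := by
  have := traceForm_eq hP ((cartanEquivDual H).symm χ.1) ((cartanEquivDual H).symm ψ.1)
  rw [LieModule.traceForm_comm, traceForm_symm_apply] at this
  rw [this]
  congr 1
  refine Finset.sum_congr rfl fun γ _ => ?_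
  rw [← halfLen_mul_pairing hP, ← halfLen_mul_pairing hP]
  ring

lemma rootSpace_ne_bot_of (α β : Weight ℂ H L) (hα : α.IsNonZero) {n : ℤ}
    (h1 : n ≤ chainTopCoeff α β) (h2 : -n ≤ chainBotCoeff α β) :
    ∃ δ : Weight ℂ H L, (δ : H → ℂ) = n • (α : H → ℂ) + β :=
  ⟨⟨_, (rootSpace_zsmul_add_ne_bot_iff α β hα n).2 ⟨h1, h2⟩⟩, rfl⟩

/-- The root datum of a positive system. -/
noncomputable def rootDatum : PosRootDatum (PosIdx P) (IntWt P) where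
  root β := wtRoot P β.1
  p := pairing
  len := halfLen
  len_pos := halfLen_pos hP
  p_self := pairing_self hP
  form_root' χ β := by
    apply Rat.cast_injective (α := ℂ)
    push_cast
    rw [form_eq_aux hP, halfLen_mul_pairing hP]
    rfl
  refl_root β γ := by
    obtain ⟨δ, h⟩ := exists_posIdx hP _ (reflectRoot_isNonZero β.1 γ.1 (isNonZero hP γ))
    have key : wtRoot P γ.1 - pairing β (wtRoot P γ.1) • wtRoot P β.1 =
        wtRoot P (reflectRoot β.1 γ.1) := by
      symm
      rw [wtRoot_eq_iff]
      ext x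
      have := cast_pairing β (wtRoot P γ.1)
      rw [wtRoot_apply] at this
      simp [reflectRoot, ← this, wtRoot_apply]
    refine ⟨δ, ?_⟩
    rw [key]
    rcases h with h | h
    · left; rw [h]
    · right; rw [h, wtRoot_neg]
  add_root β γ h := by
    rw [pairing_wtRoot] at h
    obtain ⟨δ, hδ⟩ := rootSpace_ne_bot_of hP β.1 γ.1 (isNonZero hP β) (n := 1) (by lia) (by lia)
    rw [one_smul] at hδ
    have hnz : δ.IsNonZero := by
      intro h0
      have h0 : (δ : H → ℂ) = 0 := h0
      rw [h0] at hδ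
      refine hP.2.2.1 _ γ.2 ?_
      rw [← eq_neg_of_add_eq_zero_left hδ.symm]
      exact β.2
    have := hP.2.2.2 _ β.2 _ γ.2 ((isRootOf_iff _).2 ⟨δ, hnz, hδ⟩)
    rw [← hδ] at this
    refine ⟨⟨δ, this⟩, ?_⟩
    rw [wtRoot_eq_iff, hδ]
    rfl
  sub_root β γ h hne := by
    rw [pairing_wtRoot] at h
    obtain ⟨δ, hδ⟩ := rootSpace_ne_bot_of hP β.1 γ.1 (isNonZero hP β) (n := -1) (by lia) (by lia)
    have hδ : (δ : H → ℂ) = γ.1 - β.1 := by rw [hδ]; ext; simp; ring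
    have hnz : δ.IsNonZero := by
      intro h0
      have h0 : (δ : H → ℂ) = 0 := h0
      rw [h0] at hδ
      exact hne (Subtype.ext (DFunLike.coe_injective (sub_eq_zero.1 hδ.symm)))
    have key : wtRoot P γ.1 - wtRoot P β.1 = wtRoot P δ := by
      symm
      rw [wtRoot_eq_iff, hδ]
      rfl
    obtain ⟨ε, h⟩ := exists_posIdx hP _ hnz
    refine ⟨ε, ?_⟩
    rw [key]
    rcases h with h | h
    · left; rw [h]
    · right; rw [h, wtRoot_neg]
  reduced β γ h := by
    rw [wtRoot_eq_iff] at h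
    have h2 := rootSpace_two_smul γ.1 (isNonZero hP γ)
    apply β.1.genWeightSpace_ne_bot
    rw [h, ← h2]
    congr 1
    ext x
    simp [wtRoot_apply, two_mul]
  root_ne_neg β γ h := by
    rw [← wtRoot_neg] at h
    have := wtRoot_injective h
    have h2 := β.2
    rw [this] at h2
    exact hP.2.2.1 _ γ.2 h2
  root_inj β γ h := Subtype.ext (wtRoot_injective h)
  nondeg χ h := by
    have h0 : (cartanEquivDual H).symm χ.1 = 0 := by
      have : ∀ x, traceForm ℂ H L ((cartanEquivDual H).symm χ.1) x = 0 := by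
        intro x
        rw [traceForm_eq hP]
        simp [← halfLen_mul_pairing hP, h]
      have h2 := this
      have : cartanEquivDual H ((cartanEquivDual H).symm χ.1) = 0 := by
        ext x; exact h2 x
      simpa using this
    exact Subtype.ext (by simpa using h0)

lemma form_eq (χ ψ : IntWt P) :
    ((rootDatum hP).form χ ψ : ℂ) = ψ.1 ((cartanEquivDual H).symm χ.1) := by
  rw [← form_eq_aux hP, PosRootDatum.form]
  push_cast
  rfl

end PRVLie

namespace PRVLie

open LieAlgebra LieAlgebra.IsKilling LieModule

variable {L : Type*} [LieRing L] [LieAlgebra ℂ L] [FiniteDimensional ℂ L]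
  [LieAlgebra.IsKilling ℂ L] {H : LieSubalgebra ℂ L} [H.IsCartanSubalgebra]
  {P : Set (H → ℂ)} (hP : IsPositiveSystem H P)
include hP

lemma exists_sl2 (β : PosIdx P) : ∃ e f : L, IsSl2Triple (coroot β.1 : L) e f ∧
    e ∈ rootSpace H (β.1 : H → ℂ) ∧ f ∈ rootSpace H (-(β.1 : H → ℂ)) := by
  obtain ⟨h, e, f, ht, he, hf⟩ := exists_isSl2Triple_of_weight_isNonZero (isNonZero hP β)
  refine ⟨e, f, ?_, he, hf⟩
  rwa [← ht.h_eq_coroot (isNonZero hP β) he hf]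

/-- A raising operator of weight `β`. -/
noncomputable def eV (β : PosIdx P) : L := (exists_sl2 hP β).choose

/-- A lowering operator of weight `-β`. -/
noncomputable def fV (β : PosIdx P) : L := (exists_sl2 hP β).choose_spec.choose

lemma isSl2Triple (β : PosIdx P) : IsSl2Triple (coroot β.1 : L) (eV hP β) (fV hP β) :=
  (exists_sl2 hP β).choose_spec.choose_spec.1

lemma eV_mem (β : PosIdx P) : eV hP β ∈ rootSpace H (β.1 : H → ℂ) :=
  (exists_sl2 hP β).choose_spec.choose_spec.2.1

lemma fV_mem (β : PosIdx P) : fV hP β ∈ rootSpace H (-(β.1 : H → ℂ)) :=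
  (exists_sl2 hP β).choose_spec.choose_spec.2.2

lemma lie_eV (β : PosIdx P) (h : H) : ⁅(h : L), eV hP β⁆ = β.1 h • eV hP β :=
  lie_eq_smul_of_mem_rootSpace (eV_mem hP β) h

lemma lie_fV (β : PosIdx P) (h : H) : ⁅(h : L), fV hP β⁆ = -β.1 h • fV hP β :=
  lie_eq_smul_of_mem_rootSpace (fV_mem hP β) h

lemma mem_rootSpace_eV (β : PosIdx P) {x : L} (hx : x ∈ rootSpace H (β.1 : H → ℂ)) :
    ∃ c : ℂ, x = c • eV hP β := by
  have h1 := finrank_rootSpace_eq_one β.1 (isNonZero hP β)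
  have h2 : (⟨eV hP β, eV_mem hP β⟩ : rootSpace H (β.1 : H → ℂ)) ≠ 0 := by
    intro h
    exact (isSl2Triple hP β).e_ne_zero (congrArg Subtype.val h)
  obtain ⟨c, hc⟩ := (finrank_eq_one_iff_of_nonzero' _ h2).1 h1 ⟨x, hx⟩
  exact ⟨c, (congrArg Subtype.val hc).symm⟩

lemma mem_rootSpace_fV (β : PosIdx P) {x : L} (hx : x ∈ rootSpace H (-(β.1 : H → ℂ))) :
    ∃ c : ℂ, x = c • fV hP β := by
  have h1 := finrank_rootSpace_eq_one (-β.1) (isNonZero hP β).neg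
  have h2 : (⟨fV hP β, fV_mem hP β⟩ : rootSpace H ((-β.1 : Weight ℂ H L) : H → ℂ)) ≠ 0 := by
    intro h
    exact (isSl2Triple hP β).f_ne_zero (congrArg Subtype.val h)
  obtain ⟨c, hc⟩ := (finrank_eq_one_iff_of_nonzero' _ h2).1 h1 ⟨x, hx⟩
  exact ⟨c, (congrArg Subtype.val hc).symm⟩

/-- The Lie algebra is spanned by the Cartan subalgebra and the root vectors. -/
lemma span_induction (S : Submodule ℂ L) (hH : ∀ h : H, (h : L) ∈ S) (he : ∀ β, eV hP β ∈ S)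
    (hf : ∀ β, fV hP β ∈ S) (x : L) : x ∈ S := by
  have htop : (⨆ α : Weight ℂ H L, (rootSpace H (α : H → ℂ)).toSubmodule) = ⊤ := by
    rw [← LieSubmodule.iSup_toSubmodule, iSup_genWeightSpace_eq_top', LieSubmodule.top_toSubmodule]
  have hle : (⨆ α : Weight ℂ H L, (rootSpace H (α : H → ℂ)).toSubmodule) ≤ S := by
    refine iSup_le fun α y hy => ?_
    by_cases hα : α.IsNonZero
    · obtain ⟨δ, rfl | rfl⟩ := exists_posIdx hP α hα
      · obtain ⟨c, rfl⟩ := mem_rootSpace_eV hP δ hy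
        exact S.smul_mem _ (he δ)
      · obtain ⟨c, rfl⟩ := mem_rootSpace_fV hP δ hy
        exact S.smul_mem _ (hf δ)
    · have h0 : (α : H → ℂ) = 0 := not_not.1 hα
      rw [h0] at hy
      have hy : y ∈ rootSpace H (0 : H → ℂ) := hy
      rw [rootSpace_zero_eq] at hy
      exact hH ⟨y, hy⟩
  rw [htop] at hle
  exact hle trivial

lemma killing_smul (β : PosIdx P) :
    (killingForm ℂ L (eV hP β) (fV hP β) * halfLen β : ℂ) = 1 := by
  have h1 := lie_eq_killingForm_smul_of_mem_rootSpace_of_mem_rootSpace_neg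
    (eV_mem hP β) (fV_mem hP β)
  rw [(isSl2Triple hP β).lie_e_f] at h1
  have h2 := cartan_symm_eq hP β
  have h3 : (coroot β.1 : L) = (killingForm ℂ L (eV hP β) (fV hP β) * halfLen β : ℂ) •
      (coroot β.1 : L) := by
    conv_lhs => rw [h1]
    erw [h2]
    rw [mul_smul]
    rfl
  have hne := (isSl2Triple hP β).h_ne_zero
  by_contra hc
  apply hne
  have : ((1 : ℂ) - killingForm ℂ L (eV hP β) (fV hP β) * halfLen β) • (coroot β.1 : L) = 0 := by
    rw [sub_smul, ← h3, one_smul, sub_self]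
  rcases smul_eq_zero.1 this with h | h
  · exact (hc (sub_eq_zero.1 h).symm).elim
  · exact h

/-- The normalised lowering operator, dual to `eV` for the Killing form. -/
noncomputable def gV (β : PosIdx P) : L := (halfLen β : ℂ) • fV hP β

lemma gV_mem (β : PosIdx P) : gV hP β ∈ rootSpace H (-(β.1 : H → ℂ)) :=
  Submodule.smul_mem _ _ (fV_mem hP β)

lemma lie_gV (β : PosIdx P) (h : H) : ⁅(h : L), gV hP β⁆ = -β.1 h • gV hP β :=
  lie_eq_smul_of_mem_rootSpace (gV_mem hP β) h

lemma fV_eq (β : PosIdx P) : fV hP β = (halfLen β : ℂ)⁻¹ • gV hP β := by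
  rw [gV, smul_smul, inv_mul_cancel₀, one_smul]
  exact_mod_cast (halfLen_pos hP β).ne'

lemma lie_eV_gV (β : PosIdx P) :
    ⁅eV hP β, gV hP β⁆ = ((cartanEquivDual H).symm β.1.toLinear : L) := by
  rw [gV, lie_smul, (isSl2Triple hP β).lie_e_f, cartan_symm_eq hP]
  rfl

lemma killing_eV_gV (β : PosIdx P) : killingForm ℂ L (eV hP β) (gV hP β) = 1 := by
  rw [gV, map_smul, smul_eq_mul, mul_comm, killing_smul]

lemma killing_eV_gV_ne (β γ : PosIdx P) (h : β ≠ γ) :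
    killingForm ℂ L (eV hP β) (gV hP γ) = 0 := by
  refine killingForm_apply_eq_zero_of_mem_rootSpace_of_add_ne_zero ℂ L H
    (eV_mem hP β) (gV_mem hP γ) fun h0 => h ?_
  exact Subtype.ext (DFunLike.coe_injective (add_neg_eq_zero.1 h0))

lemma killing_eV_eV (β γ : PosIdx P) : killingForm ℂ L (eV hP β) (eV hP γ) = 0 := by
  refine killingForm_apply_eq_zero_of_mem_rootSpace_of_add_ne_zero ℂ L H
    (eV_mem hP β) (eV_mem hP γ) fun h0 => ?_
  refine hP.2.2.1 _ γ.2 ?_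
  rw [← eq_neg_of_add_eq_zero_left h0]
  exact β.2

lemma killing_gV_gV (β γ : PosIdx P) : killingForm ℂ L (gV hP β) (gV hP γ) = 0 := by
  refine killingForm_apply_eq_zero_of_mem_rootSpace_of_add_ne_zero ℂ L H
    (gV_mem hP β) (gV_mem hP γ) fun h0 => ?_
  refine hP.2.2.1 _ γ.2 ?_
  rw [← eq_neg_of_add_eq_zero_left (a := (β.1 : H → ℂ))]
  · exact β.2
  · rw [← neg_add, neg_eq_zero] at h0; exact h0

lemma killing_H_eV (h : H) (γ : PosIdx P) : killingForm ℂ L (h : L) (eV hP γ) = 0 := by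
  have hh : (h : L) ∈ rootSpace H (0 : H → ℂ) := by
    rw [rootSpace_zero_eq]; exact h.2
  refine killingForm_apply_eq_zero_of_mem_rootSpace_of_add_ne_zero ℂ L H
    hh (eV_mem hP γ) fun h0 => isNonZero hP γ ?_
  rwa [zero_add] at h0

lemma killing_H_gV (h : H) (γ : PosIdx P) : killingForm ℂ L (h : L) (gV hP γ) = 0 := by
  have hh : (h : L) ∈ rootSpace H (0 : H → ℂ) := by
    rw [rootSpace_zero_eq]; exact h.2
  refine killingForm_apply_eq_zero_of_mem_rootSpace_of_add_ne_zero ℂ L H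
    hh (gV_mem hP γ) fun h0 => isNonZero hP γ ?_
  rwa [zero_add, neg_eq_zero] at h0

/-- Indices of a basis of `L` adapted to the root decomposition. -/
abbrev CasIdx (P : Set (H → ℂ)) := Fin (Module.finrank ℂ H) ⊕ PosIdx P ⊕ PosIdx P

/-- A family spanning `L`. -/
noncomputable def casU : CasIdx P → L :=
  Sum.elim (fun j => (Module.finBasis ℂ H j : L)) (Sum.elim (eV hP) (gV hP))

/-- The family dual to `casU` for the Killing form. -/
noncomputable def casV : CasIdx P → L :=
  Sum.elim (fun j => ((cartanEquivDual H).symm ((Module.finBasis ℂ H).coord j) : L))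
    (Sum.elim (gV hP) (eV hP))

lemma casU_expand (x : L) : ∑ a, killingForm ℂ L x (casV hP a) • casU hP a = x := by
  let T : L →ₗ[ℂ] L := ∑ a, ((killingForm ℂ L).flip (casV hP a)).smulRight (casU hP a)
  have hT : ∀ x, T x = ∑ a, killingForm ℂ L x (casV hP a) • casU hP a := by
    intro x; simp [T, LinearMap.sum_apply]
  rw [← hT]
  have : x ∈ LinearMap.eqLocus T LinearMap.id := by
    refine span_induction hP _ (fun h => ?_) (fun β => ?_) (fun β => ?_) x
    · change T h = h
      rw [hT]
      simp only [Fintype.sum_sum_type, casU, casV, Sum.elim_inl, Sum.elim_inr, killing_H_eV,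
        killing_H_gV, zero_smul, Finset.sum_const_zero, add_zero]
      have h2 : ∀ j, killingForm ℂ L (h : L)
          ((cartanEquivDual H).symm ((Module.finBasis ℂ H).coord j) : L) =
          (Module.finBasis ℂ H).repr h j := by
        intro j
        rw [LieModule.traceForm_comm]
        exact traceForm_symm_apply ((Module.finBasis ℂ H).coord j) h
      simp only [h2]
      have := congrArg H.toSubmodule.subtype ((Module.finBasis ℂ H).sum_repr h)
      rw [map_sum] at this
      simp only [map_smul] at this
      exact this
    · change T _ = eV hP β
      rw [hT]
      have h3 : ∀ j, killingForm ℂ L (eV hP β)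
          ((cartanEquivDual H).symm ((Module.finBasis ℂ H).coord j) : L) = 0 := by
        intro j
        rw [LieModule.traceForm_comm]; exact killing_H_eV hP _ _
      simp only [Fintype.sum_sum_type, casU, casV, Sum.elim_inl, Sum.elim_inr, killing_eV_eV, h3,
        zero_smul, Finset.sum_const_zero, add_zero, zero_add]
      rw [Finset.sum_eq_single β, killing_eV_gV, one_smul]
      · intro γ _ h
        rw [killing_eV_gV_ne hP _ _ h.symm, zero_smul]
      · simp
    · rw [fV_eq]
      refine Submodule.smul_mem _ _ ?_
      change T _ = gV hP β
      rw [hT]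
      have h3 : ∀ j, killingForm ℂ L (gV hP β)
          ((cartanEquivDual H).symm ((Module.finBasis ℂ H).coord j) : L) = 0 := by
        intro j
        rw [LieModule.traceForm_comm]; exact killing_H_gV hP _ _
      simp only [Fintype.sum_sum_type, casU, casV, Sum.elim_inl, Sum.elim_inr, killing_gV_gV, h3,
        zero_smul, Finset.sum_const_zero, add_zero, zero_add]
      rw [Finset.sum_eq_single β, LieModule.traceForm_comm, killing_eV_gV, one_smul]
      · intro γ _ h
        rw [LieModule.traceForm_comm, killing_eV_gV_ne hP _ _ h, zero_smul]
      · simp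
  exact this

lemma casV_expand (x : L) : ∑ a, killingForm ℂ L x (casU hP a) • casV hP a = x := by
  have hnd : ∀ y : L, (∀ z, killingForm ℂ L y z = 0) → y = 0 := by
    intro y hy
    have : y ∈ LinearMap.ker (killingForm ℂ L) := by
      rw [LinearMap.mem_ker]; ext z; exact hy z
    rw [IsKilling.ker_killingForm_eq_bot] at this
    exact this
  rw [← sub_eq_zero]
  refine hnd _ fun z => ?_
  rw [map_sub, map_sum, LinearMap.sub_apply, LinearMap.sum_apply, sub_eq_zero]
  conv_rhs => rw [← casU_expand hP z]
  rw [map_sum]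
  refine Finset.sum_congr rfl fun a _ => ?_
  rw [map_smul, map_smul, LinearMap.smul_apply, LieModule.traceForm_comm ℂ L L z, smul_eq_mul,
    smul_eq_mul, mul_comm]

end PRVLie

namespace PRVLie

open LieAlgebra LieAlgebra.IsKilling LieModule
open AddMonoidAlgebra (single)

variable {L : Type*} [LieRing L] [LieAlgebra ℂ L] [FiniteDimensional ℂ L]
  [LieAlgebra.IsKilling ℂ L] {H : LieSubalgebra ℂ L} [H.IsCartanSubalgebra]
  {P : Set (H → ℂ)} (hP : IsPositiveSystem H P)
  (M : Type*) [AddCommGroup M] [Module ℂ M] [LieRingModule L M] [LieModule ℂ L M]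

/-- The Casimir operator. -/
noncomputable def cas : Module.End ℂ M :=
  ∑ a, toEnd ℂ L M (casU hP a) * toEnd ℂ L M (casV hP a)

lemma cas_apply (m : M) : cas hP M m = ∑ a, ⁅casU hP a, ⁅casV hP a, m⁆⁆ := by
  simp [cas, LinearMap.sum_apply]

variable {M}

lemma cas_lie (x : L) (m : M) : cas hP M ⁅x, m⁆ = ⁅x, cas hP M m⁆ := by
  have hu : ∀ a, ⁅x, casU hP a⁆ =
      ∑ b, killingForm ℂ L ⁅x, casU hP a⁆ (casV hP b) • casU hP b :=
    fun a => (casU_expand hP _).symm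
  have hv : ∀ a, ⁅x, casV hP a⁆ =
      ∑ b, killingForm ℂ L ⁅x, casV hP a⁆ (casU hP b) • casV hP b :=
    fun a => (casV_expand hP _).symm
  have hK : ∀ a b, killingForm ℂ L ⁅x, casV hP a⁆ (casU hP b) =
      - killingForm ℂ L ⁅x, casU hP b⁆ (casV hP a) := by
    intro a b
    have := LieModule.traceForm_apply_lie_apply ℂ L L (casV hP a) x (casU hP b)
    rw [← lie_skew x (casV hP a), map_neg, LinearMap.neg_apply, this,
      LieModule.traceForm_comm]
  have h1 : ∑ a, ⁅⁅x, casU hP a⁆, ⁅casV hP a, m⁆⁆ + ∑ a, ⁅casU hP a, ⁅⁅x, casV hP a⁆, m⁆⁆ = 0 := by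
    have e1 : ∀ a, ⁅⁅x, casU hP a⁆, ⁅casV hP a, m⁆⁆ =
        ∑ b, killingForm ℂ L ⁅x, casU hP a⁆ (casV hP b) • ⁅casU hP b, ⁅casV hP a, m⁆⁆ := by
      intro a
      conv_lhs => rw [hu a]
      simp only [sum_lie, smul_lie]
    have e2 : ∀ a, ⁅casU hP a, ⁅⁅x, casV hP a⁆, m⁆⁆ =
        ∑ b, - (killingForm ℂ L ⁅x, casU hP b⁆ (casV hP a) • ⁅casU hP a, ⁅casV hP b, m⁆⁆) := by
      intro a
      conv_lhs => rw [hv a]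
      simp only [sum_lie, lie_sum, hK, smul_lie, lie_smul, neg_smul, neg_lie, lie_neg]
    simp only [e1, e2]
    rw [Finset.sum_comm, ← Finset.sum_add_distrib]
    refine Finset.sum_eq_zero fun a _ => ?_
    rw [← Finset.sum_add_distrib]
    exact Finset.sum_eq_zero fun b _ => add_neg_cancel _
  rw [cas_apply, cas_apply, lie_sum, ← sub_eq_zero, ← neg_eq_zero, ← h1, neg_sub,
    ← Finset.sum_sub_distrib, ← Finset.sum_add_distrib]
  refine Finset.sum_congr rfl fun a _ => ?_
  rw [leibniz_lie x (casU hP a), leibniz_lie x (casV hP a), lie_add]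
  abel

lemma cas_commute (x : L) : Commute (cas hP M) (toEnd ℂ L M x) := by
  ext m
  exact cas_lie hP x m

/-- Weight vectors of integral weight. -/
def IsWtVec (χ : IntWt P) (v : M) : Prop := ∀ h : H, ⁅(h : L), v⁆ = χ.1 h • v

lemma IsWtVec.smul {χ : IntWt P} {v : M} (hv : IsWtVec χ v) (c : ℂ) : IsWtVec χ (c • v) := by
  intro h
  rw [lie_smul, hv, smul_comm]

lemma IsWtVec.eV {χ : IntWt P} {v : M} (hv : IsWtVec χ v) (β : PosIdx P) :
    IsWtVec (χ + wtRoot P β.1) ⁅eV hP β, v⁆ := by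
  intro h
  rw [leibniz_lie, lie_eV, hv, smul_lie, lie_smul, ← add_smul, add_comm]
  rfl

lemma IsWtVec.gV {χ : IntWt P} {v : M} (hv : IsWtVec χ v) (β : PosIdx P) :
    IsWtVec (χ - wtRoot P β.1) ⁅gV hP β, v⁆ := by
  intro h
  rw [leibniz_lie, lie_gV, hv, smul_lie, lie_smul, ← add_smul, add_comm, ← sub_eq_add_neg]
  rfl

lemma IsWtVec.fV {χ : IntWt P} {v : M} (hv : IsWtVec χ v) (β : PosIdx P) :
    IsWtVec (χ - wtRoot P β.1) ⁅fV hP β, v⁆ := by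
  rw [fV_eq, smul_lie]
  exact IsWtVec.smul (hv.gV hP β) _

lemma IsWtVec.map {χ : IntWt P} {v : M} (hv : IsWtVec χ v) (T : Module.End ℂ M)
    (hT : ∀ (x : L) m, T ⁅x, m⁆ = ⁅x, T m⁆) : IsWtVec χ (T v) := by
  intro h
  rw [← hT, hv, map_smul]

lemma cas_wt {χ : IntWt P} {v : M} (hv : IsWtVec χ v) :
    cas hP M v = ((rootDatum hP).form χ χ : ℂ) • v +
      ∑ β, (⁅PRVLie.eV hP β, ⁅PRVLie.gV hP β, v⁆⁆ + ⁅PRVLie.gV hP β, ⁅PRVLie.eV hP β, v⁆⁆) := by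
  rw [cas_apply]
  simp only [Fintype.sum_sum_type, casU, casV, Sum.elim_inl, Sum.elim_inr]
  rw [Finset.sum_add_distrib]
  congr 1
  have h1 : ∀ j, ⁅(Module.finBasis ℂ H j : L),
      ⁅((cartanEquivDual H).symm ((Module.finBasis ℂ H).coord j) : L), v⁆⁆ =
      ((Module.finBasis ℂ H).repr ((cartanEquivDual H).symm χ.1) j *
        χ.1 (Module.finBasis ℂ H j)) • v := by
    intro j
    rw [hv, lie_smul, hv, smul_smul]
    congr 2
    rw [← traceForm_symm_apply, LieModule.traceForm_comm, traceForm_symm_apply]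
    rfl
  simp only [h1]
  rw [← Finset.sum_smul, form_eq hP]
  congr 1
  conv_rhs => rw [← (Module.finBasis ℂ H).sum_repr ((cartanEquivDual H).symm χ.1)]
  rw [map_sum]
  simp

section WtBasis

variable {I : Type*} [Fintype I] (b : Module.Basis I ℂ M) (wt : I → IntWt P)
  (hb : ∀ i, IsWtVec (wt i) (b i))

include hb in
lemma wt_eq_of_repr {χ : IntWt P} {v : M} (hv : IsWtVec χ v) {i : I} (hi : b.repr v i ≠ 0) :
    wt i = χ := by
  apply Subtype.ext
  ext h
  have h1 : (b.coord i).comp (toEnd ℂ L M (h : L)) = (wt i).1 h • b.coord i := by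
    refine b.ext fun j => ?_
    simp only [LinearMap.comp_apply, toEnd_apply_apply, LinearMap.smul_apply, smul_eq_mul]
    rw [hb, map_smul]
    by_cases hij : j = i
    · subst hij; simp
    · simp [Finsupp.single_eq_of_ne' hij, hij]
  have h2 := LinearMap.congr_fun h1 v
  simp only [LinearMap.comp_apply, toEnd_apply_apply, LinearMap.smul_apply, smul_eq_mul] at h2
  rw [hv, map_smul, smul_eq_mul, Module.Basis.coord_apply] at h2
  exact (mul_right_cancel₀ hi h2).symm

/-- The formal trace of an operator over the weight spaces. -/
noncomputable def trCh : Module.End ℂ M →+ AddMonoidAlgebra ℂ (IntWt P) where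
  toFun T := ∑ i, single (wt i) (b.repr (T (b i)) i)
  map_zero' := by simp
  map_add' S T := by simp [Finset.sum_add_distrib]

lemma trCh_apply (T : Module.End ℂ M) :
    trCh b wt T = ∑ i, single (wt i) (b.repr (T (b i)) i) := rfl

lemma trCh_mul_comm (A B : Module.End ℂ M) (γ : IntWt P)
    (hA : ∀ i j, b.repr (A (b i)) j ≠ 0 → wt j = wt i + γ) :
    trCh b wt (B * A) = single (-γ) 1 * trCh b wt (A * B) := by
  have key : ∀ (S T : Module.End ℂ M) i, b.repr ((S * T) (b i)) i =
      ∑ j, b.repr (T (b i)) j * b.repr (S (b j)) i := by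
    intro S T i
    rw [Module.End.mul_apply]
    conv_lhs => rw [← b.sum_repr (T (b i))]
    simp only [map_sum, map_smul, Finsupp.finsetSum_apply, Finsupp.smul_apply, smul_eq_mul]
  rw [trCh_apply, trCh_apply, Finset.mul_sum]
  simp only [key, AddMonoidAlgebra.single_mul_single, one_mul]
  have hs : ∀ (a : IntWt P) (f : I → ℂ), single a (∑ j, f j) = ∑ j, single a (f j) :=
    fun a f => map_sum (AddMonoidAlgebra.singleAddHom a) f Finset.univ
  simp only [hs]
  rw [Finset.sum_comm]
  refine Finset.sum_congr rfl fun j _ => Finset.sum_congr rfl fun i _ => ?_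
  by_cases h0 : b.repr (A (b i)) j = 0
  · simp [h0]
  · rw [hA i j h0, mul_comm]
    congr 1
    abel

end WtBasis

end PRVLie

namespace PRVLie

open LieAlgebra LieAlgebra.IsKilling LieModule
open AddMonoidAlgebra (single)

variable {L : Type*} [LieRing L] [LieAlgebra ℂ L] [FiniteDimensional ℂ L]
  [LieAlgebra.IsKilling ℂ L] {H : LieSubalgebra ℂ L} [H.IsCartanSubalgebra]
  {P : Set (H → ℂ)} (hP : IsPositiveSystem H P)
  {M : Type*} [AddCommGroup M] [Module ℂ M] [LieRingModule L M] [LieModule ℂ L M]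
  {I : Type*} [Fintype I] (b : Module.Basis I ℂ M) (wt : I → IntWt P)
  (hb : ∀ i, IsWtVec (wt i) (b i))

lemma lie_lie_wt {χ : IntWt P} {v : M} (hv : IsWtVec χ v) (β : PosIdx P) :
    ⁅eV hP β, ⁅gV hP β, v⁆⁆ - ⁅gV hP β, ⁅eV hP β, v⁆⁆ =
      ((rootDatum hP).form ((rootDatum hP).root β) χ : ℂ) • v := by
  rw [← lie_lie, lie_eV_gV, hv, form_eq]
  rfl

include hb in
lemma coeff_trCh_cas {ρ : IntWt P} (hρ : (rootDatum hP).IsRho ρ) (T : Module.End ℂ M)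
    (hT : ∀ (x : L) m, T ⁅x, m⁆ = ⁅x, T m⁆) (ξ : IntWt P) :
    (trCh b wt (T * cas hP M) * (rootDatum hP).den ρ).coeff ξ =
      ((rootDatum hP).form ξ ξ - (rootDatum hP).form ρ ρ : ℂ) *
        (trCh b wt T * (rootDatum hP).den ρ).coeff ξ := by
  have hsw : ∀ β, single (-(rootDatum hP).root β) 1 *
      trCh b wt (T * toEnd ℂ L M (eV hP β) * toEnd ℂ L M (gV hP β)) =
      trCh b wt (T * toEnd ℂ L M (gV hP β) * toEnd ℂ L M (eV hP β)) := by
    intro β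
    rw [← trCh_mul_comm b wt (T * toEnd ℂ L M (eV hP β)) (toEnd ℂ L M (gV hP β))]
    · congr 1
      ext m
      simp [hT]
    · intro i j hij
      refine wt_eq_of_repr b wt hb ?_ hij
      exact ((hb i).eV hP β).map T hT
  refine (rootDatum hP).coeff_casimir hρ
    (fun β => trCh b wt (T * toEnd ℂ L M (eV hP β) * toEnd ℂ L M (gV hP β))) ?_ ?_ ξ
  · intro β
    simp only [hsw]
    rw [← map_sub, trCh_apply, trCh_apply, map_sum]
    refine Finset.sum_congr rfl fun i _ => ?_
    rw [PosRootDatum.deriv_single]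
    congr 1
    have := congrArg T (lie_lie_wt hP (hb i) β)
    rw [map_sub, map_smul] at this
    simp only [LinearMap.sub_apply, Module.End.mul_apply, toEnd_apply_apply, this]
    simp
  · simp only [hsw, ← map_add]
    rw [← map_sum, trCh_apply, trCh_apply, trCh_apply, map_sum, ← Finset.sum_add_distrib]
    refine Finset.sum_congr rfl fun i _ => ?_
    have hlap : ∀ (a : IntWt P) r, (rootDatum hP).lap (single a r) =
        single a (((rootDatum hP).form a a : ℂ) * r) := by
      classical
      intro a r
      ext ψ
      rw [PosRootDatum.lap, PosRootDatum.coeff_scale, AddMonoidAlgebra.coeff_single,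
        AddMonoidAlgebra.coeff_single, Finsupp.single_apply, Finsupp.single_apply]
      split_ifs with h
      · rw [h]
      · simp
    rw [hlap, ← AddMonoidAlgebra.single_add]
    congr 1
    rw [Module.End.mul_apply, cas_wt hP (hb i), map_add, map_smul, map_sum, map_add]
    simp [LinearMap.sum_apply]

lemma aeval_cas_lie (p : Polynomial ℂ) (x : L) (m : M) :
    Polynomial.aeval (cas hP M) p ⁅x, m⁆ = ⁅x, Polynomial.aeval (cas hP M) p m⁆ := by
  induction p using Polynomial.induction_on' with
  | add p q hp hq => simp [hp, hq]
  | monomial n a =>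
    have : Commute (Polynomial.aeval (cas hP M) (Polynomial.monomial n a)) (toEnd ℂ L M x) := by
      rw [Polynomial.aeval_monomial]
      exact Commute.mul_left (Algebra.commutes a _) ((cas_commute hP x).pow_left n)
    exact LinearMap.congr_fun this m

include hb in
lemma coeff_trCh_aeval {ρ : IntWt P} (hρ : (rootDatum hP).IsRho ρ) (p : Polynomial ℂ)
    (ξ : IntWt P) :
    (trCh b wt (Polynomial.aeval (cas hP M) p) * (rootDatum hP).den ρ).coeff ξ =
      p.eval ((rootDatum hP).form ξ ξ - (rootDatum hP).form ρ ρ : ℂ) *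
        (trCh b wt 1 * (rootDatum hP).den ρ).coeff ξ := by
  induction p using Polynomial.induction_on' with
  | add p q hp hq =>
    rw [map_add, map_add, add_mul, AddMonoidAlgebra.coeff_add, Finsupp.add_apply, hp, hq,
      Polynomial.eval_add, add_mul]
  | monomial n a =>
    induction n with
    | zero =>
      have : trCh b wt (Polynomial.aeval (cas hP M) (Polynomial.monomial 0 a)) =
          a • trCh b wt 1 := by
        rw [trCh_apply, trCh_apply, Finset.smul_sum]
        refine Finset.sum_congr rfl fun i _ => ?_
        simp
      rw [this, smul_mul_assoc, AddMonoidAlgebra.coeff_smul]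
      simp
    | succ n ih =>
      have h1 : Polynomial.aeval (cas hP M) (Polynomial.monomial (n + 1) a) =
          Polynomial.aeval (cas hP M) (Polynomial.monomial n a) * cas hP M := by
        rw [← Polynomial.monomial_mul_X, map_mul, Polynomial.aeval_X]
      rw [h1, coeff_trCh_cas hP b wt hb hρ _ (aeval_cas_lie hP _), ih, ← Polynomial.monomial_mul_X,
        Polynomial.eval_mul, Polynomial.eval_X]
      ring

/-- The Casimir operator acts on a highest weight vector by a scalar. -/
lemma cas_hw {ρ : IntWt P} (hρ : (rootDatum hP).IsRho ρ) {κ : IntWt P} {v : M}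
    (hv : IsWtVec κ v) (he : ∀ β, ⁅eV hP β, v⁆ = 0) :
    cas hP M v = ((rootDatum hP).form (κ + ρ) (κ + ρ) - (rootDatum hP).form ρ ρ : ℂ) • v := by
  have h1 : ∀ β, ⁅eV hP β, ⁅gV hP β, v⁆⁆ + ⁅gV hP β, ⁅eV hP β, v⁆⁆ =
      ((rootDatum hP).form ((rootDatum hP).root β) κ : ℂ) • v := by
    intro β
    rw [← lie_lie_wt hP hv, he, lie_zero, add_zero, sub_zero]
  rw [cas_wt hP hv]
  simp only [h1]
  rw [← Finset.sum_smul, ← add_smul]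
  congr 1
  have h2 : ∑ β, (rootDatum hP).form ((rootDatum hP).root β) κ =
      (rootDatum hP).form κ ρ + (rootDatum hP).form κ ρ := by
    rw [← PosRootDatum.form_add_right, hρ, PosRootDatum.form_comm, PosRootDatum.twoRho]
    symm
    let F : IntWt P →+ ℚ := AddMonoidHom.mk' (fun χ => (rootDatum hP).form χ κ)
      fun x y => (rootDatum hP).form_add_left x y κ
    exact map_sum F _ _
  have h3 := congrArg (fun q : ℚ => (q : ℂ)) h2
  push_cast at h3
  rw [h3, PosRootDatum.form_add_left, PosRootDatum.form_add_right, PosRootDatum.form_add_right,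
    (rootDatum hP).form_comm ρ κ]
  push_cast
  ring

include hb in
lemma exists_hw {ρ : IntWt P} (hρ : (rootDatum hP).IsRho ρ) {ν : IntWt P}
    (hν : (rootDatum hP).IsDom ν)
    (h : (trCh b wt 1 * (rootDatum hP).den ρ).coeff (ν + ρ) ≠ 0) :
    ∃ v : M, v ≠ 0 ∧ IsWtVec ν v ∧ ∀ β, ⁅eV hP β, v⁆ = 0 := by
  classical
  set D := rootDatum hP with hD
  have : FiniteDimensional ℂ M := b.finiteDimensional_of_finite
  set c : ℂ := (D.form (ν + ρ) (ν + ρ) - D.form ρ ρ : ℂ) with hc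
  have hq0 : minpoly ℂ (cas hP M) ≠ 0 := minpoly.ne_zero (Algebra.IsIntegral.isIntegral _)
  obtain ⟨r, hr, hdvd⟩ :=
    Polynomial.exists_eq_pow_rootMultiplicity_mul_and_not_dvd (minpoly ℂ (cas hP M)) hq0 c
  set k := (minpoly ℂ (cas hP M)).rootMultiplicity c with hk
  have hrc : r.eval c ≠ 0 := by
    intro h0
    exact hdvd (Polynomial.dvd_iff_isRoot.2 h0)
  have ha := coeff_trCh_aeval hP b wt hb hρ r (ν + ρ)
  have ha0 : (trCh b wt (Polynomial.aeval (cas hP M) r) * D.den ρ).coeff (ν + ρ) ≠ 0 := by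
    rw [ha]; exact mul_ne_zero hrc h
  obtain ⟨i, hi, hiν⟩ : ∃ i, Polynomial.aeval (cas hP M) r (b i) ≠ 0 ∧
      wt i - ν ∈ D.posCone := by
    by_contra! hcon
    apply ha0
    rw [trCh_apply, Finset.sum_mul, AddMonoidAlgebra.coeff_sum, Finsupp.finsetSum_apply]
    refine Finset.sum_eq_zero fun i _ => ?_
    rw [AddMonoidAlgebra.coeff_single_mul_apply]
    by_cases h0 : Polynomial.aeval (cas hP M) r (b i) = 0
    · simp [h0]
    · rw [show -wt i + (ν + ρ) = -(wt i - ν) + ρ by abel]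
      by_contra h1
      apply hcon i h0
      have := D.neg_mem_of_coeff_den (right_ne_zero_of_mul h1)
      rwa [neg_neg] at this
  let N := Polynomial.aeval (cas hP M) ((Polynomial.X - Polynomial.C c) ^ k)
  let S : Finset (IntWt P) := (Finset.univ.image wt).filter fun κ => κ - ν ∈ D.posCone ∧
    ∃ v : M, v ≠ 0 ∧ IsWtVec κ v ∧ N v = 0
  have hS : ∀ κ (v : M), v ≠ 0 → IsWtVec κ v → κ - ν ∈ D.posCone → N v = 0 → κ ∈ S := by
    intro κ v h0 hv hκ hN
    refine Finset.mem_filter.2 ⟨?_, hκ, v, h0, hv, hN⟩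
    have : b.repr v ≠ 0 := by simpa using h0
    obtain ⟨j, hj⟩ := Finsupp.ne_iff.1 this
    exact Finset.mem_image.2 ⟨j, Finset.mem_univ _, wt_eq_of_repr b wt hb hv hj⟩
  have hne : S.Nonempty := by
    refine ⟨wt i, hS _ _ hi ((hb i).map _ (aeval_cas_lie hP r)) hiν ?_⟩
    have h1 := minpoly.aeval ℂ (cas hP M)
    rw [hr, map_mul] at h1
    exact LinearMap.congr_fun h1 (b i)
  obtain ⟨κ, hκ, hmax⟩ := S.exists_max_image (fun κ => D.form κ ρ) hne
  obtain ⟨-, hκν, v, hv0, hv, hN⟩ := Finset.mem_filter.1 hκ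
  have he : ∀ β, ⁅eV hP β, v⁆ = 0 := by
    intro β
    by_contra h0
    have h1 := hmax _ (hS _ _ h0 (hv.eV hP β) ?_ ?_)
    · rw [PosRootDatum.form_add_left] at h1
      have h2 := hρ.p_pos β
      rw [PosRootDatum.p_pos_iff, PosRootDatum.form_comm] at h2
      have h3 : D.form (wtRoot P β.1) ρ = D.form (D.root β) ρ := rfl
      linarith
    · rw [add_sub_right_comm]
      exact add_mem hκν (D.root_mem_posCone β)
    · change N _ = 0
      rw [aeval_cas_lie]
      change ⁅eV hP β, N v⁆ = 0
      rw [hN, lie_zero]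
  have hcas := cas_hw hP hρ hv he
  have hcc : (D.form (κ + ρ) (κ + ρ) - D.form ρ ρ : ℂ) = c := by
    have h2 : ((D.form (κ + ρ) (κ + ρ) - D.form ρ ρ : ℂ) - c) ^ k • v = 0 := by
      have h1 := Module.End.aeval_apply_of_hasEigenvector (f := cas hP M)
        (p := (Polynomial.X - Polynomial.C c) ^ k) ⟨Module.End.mem_eigenspace_iff.2 hcas, hv0⟩
      rw [Polynomial.eval_pow, Polynomial.eval_sub, Polynomial.eval_X, Polynomial.eval_C] at h1
      rw [← h1]
      exact hN
    rcases smul_eq_zero.1 h2 with h3 | h3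
    · exact sub_eq_zero.1 (by by_contra hz; exact pow_ne_zero k hz h3)
    · exact (hv0 h3).elim
  have hγ : κ - ν = 0 := by
    apply D.eq_zero_of_form_self
    have h1 : D.form (κ + ρ) (κ + ρ) = D.form (ν + ρ) (ν + ρ) := by
      have : ((D.form (κ + ρ) (κ + ρ) : ℚ) : ℂ) = (D.form (ν + ρ) (ν + ρ) : ℚ) := by
        rw [hc] at hcc
        exact sub_left_injective hcc
      exact_mod_cast this
    have h2 : D.form (κ + ρ) (κ + ρ) = D.form (ν + ρ) (ν + ρ) + 2 * D.form ν (κ - ν) +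
        2 * D.form ρ (κ - ν) + D.form (κ - ν) (κ - ν) := by
      simp only [PosRootDatum.form_add_left, PosRootDatum.form_add_right,
        PosRootDatum.form_sub_left, PosRootDatum.form_sub_right]
      rw [D.form_comm κ ν, D.form_comm κ ρ, D.form_comm ν ρ]
      ring
    have h3 := D.form_nonneg_of_simple (fun i _ => hν i) hκν
    have h4 := D.form_nonneg_of_simple (fun i _ => (hρ.p_pos i).le) hκν
    linarith
  rw [sub_eq_zero] at hγ
  exact ⟨v, hv0, hγ ▸ hv, he⟩

end PRVLie

namespace PRVLie

open LieAlgebra LieAlgebra.IsKilling LieModule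
open AddMonoidAlgebra (single)

section Sl2

variable {L : Type*} [LieRing L] [LieAlgebra ℂ L]
  {M : Type*} [AddCommGroup M] [Module ℂ M] [LieRingModule L M] [LieModule ℂ L M]
  {h e f : L}

lemma lie_h_pow_f (t : IsSl2Triple h e f) {v : M} {a : ℂ} (hv : ⁅h, v⁆ = a • v) (n : ℕ) :
    ⁅h, (toEnd ℂ L M f ^ n) v⁆ = (a - 2 * n) • (toEnd ℂ L M f ^ n) v := by
  induction n with
  | zero => simpa using hv
  | succ n ih =>
    rw [pow_succ', Module.End.mul_apply, toEnd_apply_apply, Nat.cast_add, Nat.cast_one,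
      leibniz_lie h, t.lie_lie_smul_f ℂ, ← neg_smul, ih, lie_smul, smul_lie, ← add_smul]
    congr 1
    ring

lemma lie_e_pow_f (t : IsSl2Triple h e f) {v : M} {a : ℂ} (hv : ⁅h, v⁆ = a • v) (n : ℕ) :
    ⁅e, (toEnd ℂ L M f ^ (n + 1)) v⁆ =
      (toEnd ℂ L M f ^ (n + 1)) ⁅e, v⁆ + ((n + 1) * (a - n)) • (toEnd ℂ L M f ^ n) v := by
  induction n with
  | zero => simp [leibniz_lie e f, t.lie_e_f, hv, add_comm]
  | succ n ih =>
    rw [pow_succ', Module.End.mul_apply, toEnd_apply_apply, leibniz_lie e, t.lie_e_f,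
      lie_h_pow_f t hv, ih, lie_add, lie_smul, Module.End.mul_apply, toEnd_apply_apply]
    have : ⁅f, (toEnd ℂ L M f ^ n) v⁆ = (toEnd ℂ L M f ^ (n + 1)) v := by
      rw [pow_succ', Module.End.mul_apply, toEnd_apply_apply]
    rw [this, add_left_comm, ← add_smul]
    congr 2
    push_cast
    ring

/-- A weight vector killed by `f e` has non-negative integral weight. -/
lemma exists_nat_of_lie_lie (t : IsSl2Triple h e f) [FiniteDimensional ℂ M] {v : M} {a : ℂ}
    (h0 : v ≠ 0) (hv : ⁅h, v⁆ = a • v) (hfe : ⁅f, ⁅e, v⁆⁆ = 0) : ∃ n : ℕ, a = n := by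
  have hpow : ∀ n : ℕ, (toEnd ℂ L M f ^ (n + 1)) ⁅e, v⁆ = 0 := by
    intro n
    rw [pow_succ, Module.End.mul_apply, toEnd_apply_apply, hfe, map_zero]
  by_cases hz : ∃ n : ℕ, (toEnd ℂ L M f ^ n) v = 0
  · obtain ⟨n, hn₁, hn₂⟩ := Nat.exists_not_and_succ_of_not_zero_of_exists
      (p := fun n => (toEnd ℂ L M f ^ n) v = 0) (by simpa using h0) hz
    refine ⟨n, ?_⟩
    have := lie_e_pow_f t hv n
    rw [hn₂, lie_zero, hpow, zero_add, eq_comm, smul_eq_zero_iff_left hn₁, mul_eq_zero,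
      sub_eq_zero] at this
    exact this.resolve_left (Nat.cast_add_one_ne_zero n)
  · push Not at hz
    have hfin := (toEnd ℂ L M h).finite_hasEigenvalue
    have hinj : Function.Injective fun n : ℕ => a - 2 * (n : ℂ) := by
      intro n m hnm
      simpa using hnm
    refine (Set.infinite_range_of_injective hinj (hfin.subset ?_)).elim
    rintro _ ⟨n, rfl⟩
    exact Module.End.hasEigenvalue_of_hasEigenvector (x := (toEnd ℂ L M f ^ n) v)
      ⟨Module.End.mem_eigenspace_iff.2 (lie_h_pow_f t hv n), hz n⟩

/-- Raising is injective on sufficiently negative weights. -/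
lemma eq_zero_of_pow_f (t : IsSl2Triple h e f) [FiniteDimensional ℂ M] (k : ℕ) {m : ℤ}
    (hm : k ≤ m) {v : M} (hv : ⁅h, v⁆ = (m : ℂ) • v) (hk : (toEnd ℂ L M f ^ k) v = 0) :
    v = 0 := by
  induction k generalizing m v with
  | zero => simpa using hk
  | succ k ih =>
    by_contra h0
    have hw : ⁅h, ⁅f, v⁆⁆ = ((m - 2 : ℤ) : ℂ) • ⁅f, v⁆ := by
      have := lie_h_pow_f t hv 1
      simpa using this
    rw [pow_succ, Module.End.mul_apply, toEnd_apply_apply] at hk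
    have hef : ⁅e, ⁅f, v⁆⁆ = 0 := by
      by_cases hc : (k : ℤ) ≤ m - 2
      · rw [ih hc hw hk, lie_zero]
      · rcases k with _ | k
        · rw [pow_zero, Module.End.one_apply] at hk
          rw [hk, lie_zero]
        · refine ih (m := m) (by lia) ?_ ?_
          · rw [leibniz_lie, t.lie_h_e_smul ℂ, hw, smul_lie, lie_smul, ← add_smul]
            congr 1
            push_cast
            ring
          · have := lie_e_pow_f t hw k
            rw [hk, lie_zero] at this
            have hz : ((k : ℂ) + 1) * (((m - 2 : ℤ) : ℂ) - k) = 0 := by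
              have : m = k + 2 := by push_cast at hm hc; lia
              rw [this]
              push_cast
              ring
            rw [hz, zero_smul, add_zero] at this
            exact this.symm
    obtain ⟨n, hn⟩ := exists_nat_of_lie_lie t.symm (a := -(m : ℂ)) h0
      (by rw [neg_lie, hv, neg_smul]) hef
    have : -m = n := by exact_mod_cast hn
    push_cast at hm
    lia

end Sl2

variable {L : Type*} [LieRing L] [LieAlgebra ℂ L] [FiniteDimensional ℂ L]
  [LieAlgebra.IsKilling ℂ L] {H : LieSubalgebra ℂ L} [H.IsCartanSubalgebra]
  {P : Set (H → ℂ)} (hP : IsPositiveSystem H P)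
  {M : Type*} [AddCommGroup M] [Module ℂ M] [LieRingModule L M] [LieModule ℂ L M]

lemma exists_isRho : ∃ ρ, (rootDatum hP).IsRho ρ := by
  set D := rootDatum hP
  refine ⟨⟨(1 / 2 : ℂ) • D.twoRho.1, fun β => ?_⟩, ?_⟩
  · obtain ⟨k, hk⟩ := D.even_p_twoRho β
    refine ⟨k, ?_⟩
    have h1 : (pairing β D.twoRho : ℂ) = _ := cast_pairing β D.twoRho
    have h2 : pairing β D.twoRho = k + k := hk
    rw [LinearMap.smul_apply, ← h1, h2]
    push_cast
    rw [smul_eq_mul]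
    ring
  · apply Subtype.ext
    change (1 / 2 : ℂ) • D.twoRho.1 + (1 / 2 : ℂ) • D.twoRho.1 = D.twoRho.1
    rw [← add_smul]
    norm_num

lemma exists_refl_map [FiniteDimensional ℂ M] (β : PosIdx P) (χ : IntWt P) :
    ∃ T : Module.End ℂ M, (∀ v, IsWtVec χ v → IsWtVec ((rootDatum hP).refl β χ) (T v)) ∧
      ∀ v, IsWtVec χ v → T v = 0 → v = 0 := by
  have hr : (rootDatum hP).refl β χ = χ - pairing β χ • wtRoot P β.1 :=
    (rootDatum hP).refl_apply β χ
  have hh : ∀ v : M, IsWtVec χ v → ⁅(coroot β.1 : L), v⁆ = (pairing β χ : ℂ) • v := by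
    intro v hv
    rw [hv, cast_pairing]
  obtain ⟨n, hn | hn⟩ := Int.eq_nat_or_neg (pairing β χ)
  · refine ⟨toEnd ℂ L M (fV hP β) ^ n, fun v hv => ?_, fun v hv h0 => ?_⟩
    · rw [hr, hn]
      clear hn
      induction n with
      | zero => simpa using hv
      | succ n ih =>
        rw [pow_succ', Module.End.mul_apply, toEnd_apply_apply]
        convert ih.fV hP β using 1
        push_cast
        rw [add_smul, one_smul]
        abel
    · exact eq_zero_of_pow_f (isSl2Triple hP β) n (m := pairing β χ) (by lia) (hh v hv) h0
  · refine ⟨toEnd ℂ L M (eV hP β) ^ n, fun v hv => ?_, fun v hv h0 => ?_⟩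
    · rw [hr, hn]
      clear hn
      induction n with
      | zero => simpa using hv
      | succ n ih =>
        rw [pow_succ', Module.End.mul_apply, toEnd_apply_apply]
        convert ih.eV hP β using 1
        push_cast
        rw [neg_add, add_smul, neg_smul, neg_smul, one_smul]
        abel
    · refine eq_zero_of_pow_f (isSl2Triple hP β).symm n (m := -pairing β χ) (by lia) ?_ h0
      rw [neg_lie, hh v hv]
      push_cast
      rw [neg_smul]

variable {I : Type*} [Fintype I] (b : Module.Basis I ℂ M) (wt : I → IntWt P)
  (hb : ∀ i, IsWtVec (wt i) (b i))

open Classical in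
lemma coeff_trCh_one (χ : IntWt P) :
    (trCh b wt 1).coeff χ = ((Finset.univ.filter fun i => wt i = χ).card : ℂ) := by
  rw [trCh_apply, AddMonoidAlgebra.coeff_sum, Finsupp.finsetSum_apply, Finset.card_filter]
  push_cast
  refine Finset.sum_congr rfl fun i _ => ?_
  rw [AddMonoidAlgebra.coeff_single, Finsupp.single_apply]
  simp

include hb in
open Classical in
lemma card_le_card_refl (β : PosIdx P) (χ : IntWt P) :
    (Finset.univ.filter fun i => wt i = χ).card ≤
      (Finset.univ.filter fun i => wt i = (rootDatum hP).refl β χ).card := by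
  have : FiniteDimensional ℂ M := b.finiteDimensional_of_finite
  obtain ⟨T, hT, hT0⟩ := exists_refl_map hP (M := M) β χ
  have hwt : ∀ c : {i // wt i = χ} → ℂ, IsWtVec χ (∑ i, c i • b i.1) := by
    intro c h
    rw [lie_sum, Finset.smul_sum]
    refine Finset.sum_congr rfl fun i _ => ?_
    rw [lie_smul, hb, i.2, smul_comm]
  have hli : LinearIndependent ℂ fun i : {i // wt i = χ} => T (b i.1) := by
    rw [Fintype.linearIndependent_iff]
    intro c hc
    have h1 : T (∑ i, c i • b i.1) = 0 := by simpa using hc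
    have h2 := hT0 _ (hwt c) h1
    exact Fintype.linearIndependent_iff.1
      (b.linearIndependent.comp _ Subtype.val_injective) c h2
  have hmem : Set.range (fun i : {i // wt i = χ} => T (b i.1)) ≤
      Submodule.span ℂ (Set.range fun j : {j // wt j = (rootDatum hP).refl β χ} => b j.1) := by
    rintro _ ⟨i, rfl⟩
    have hwi := hb i.1
    rw [i.2] at hwi
    have hi := hT _ hwi
    change T (b i.1) ∈ _
    rw [← b.sum_repr (T (b i.1))]
    refine Submodule.sum_mem _ fun j _ => ?_
    by_cases h0 : b.repr (T (b i.1)) j = 0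
    · rw [h0, zero_smul]; exact Submodule.zero_mem _
    · exact Submodule.smul_mem _ _
        (Submodule.subset_span ⟨⟨j, wt_eq_of_repr b wt hb hi h0⟩, rfl⟩)
  have h1 := linearIndependent_le_span_aux' _ hli _ hmem
  have h2 := Fintype.card_range_le
    (fun j : {j // wt j = (rootDatum hP).refl β χ} => b j.1)
  rw [← Fintype.card_subtype, ← Fintype.card_subtype]
  exact h1.trans h2

include hb in
lemma coeff_trCh_refl (β : PosIdx P) (χ : IntWt P) :
    (trCh b wt 1).coeff ((rootDatum hP).refl β χ) = (trCh b wt 1).coeff χ := by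
  classical
  rw [coeff_trCh_one, coeff_trCh_one]
  congr 1
  refine le_antisymm ?_ (card_le_card_refl hP b wt hb β χ)
  have := card_le_card_refl hP b wt hb β ((rootDatum hP).refl β χ)
  rwa [PosRootDatum.refl_refl] at this

include hb in
lemma isSkew_trCh {ρ : IntWt P} (hρ : (rootDatum hP).IsRho ρ) :
    (rootDatum hP).IsSkew (trCh b wt 1 * (rootDatum hP).den ρ).coeff :=
  (rootDatum hP).isSkew_mul_den hρ fun i _ χ => coeff_trCh_refl hP b wt hb i χ

end PRVLie

namespace PRVLie

open LieAlgebra LieAlgebra.IsKilling LieModule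
open AddMonoidAlgebra (single)

variable {L : Type*} [LieRing L] [LieAlgebra ℂ L] [FiniteDimensional ℂ L]
  [LieAlgebra.IsKilling ℂ L] {H : LieSubalgebra ℂ L} [H.IsCartanSubalgebra]
  {P : Set (H → ℂ)} (hP : IsPositiveSystem H P)
  {V : Type*} [AddCommGroup V] [Module ℂ V] [LieRingModule L V] [LieModule ℂ L V]

/-- The submodule over the Cartan subalgebra of vectors killed by the raising operators. -/
noncomputable def killed (V : Type*) [AddCommGroup V] [Module ℂ V] [LieRingModule L V]
    [LieModule ℂ L V] : LieSubmodule ℂ H V where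
  carrier := {v | ∀ β, ⁅eV hP β, v⁆ = 0}
  add_mem' {a b} ha hb β := by rw [lie_add, ha, hb, add_zero]
  zero_mem' β := lie_zero _
  smul_mem' c v hv β := by rw [lie_smul, hv, smul_zero]
  lie_mem {h v} hv β := by
    change ⁅eV hP β, ⁅(h : L), v⁆⁆ = 0
    rw [leibniz_lie, hv, lie_zero, add_zero, ← lie_skew, lie_eV, neg_lie, smul_lie, hv,
      smul_zero, neg_zero]

/-- A highest weight vector can be chosen to be a true weight vector of integral weight. -/
lemma exists_wtVec [FiniteDimensional ℂ V] {lam : H → ℂ} (h : ∃ v : V, IsHWVec H P lam v) :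
    ∃ χ : IntWt P, (χ.1 : H → ℂ) = lam ∧ (rootDatum hP).IsDom χ ∧
      ∃ v : V, v ≠ 0 ∧ IsWtVec χ v ∧ ∀ β, ⁅eV hP β, v⁆ = 0 := by
  obtain ⟨v, hv0, hv, he⟩ := h
  have hk : v ∈ killed hP V := fun β => he _ β.2 _ (eV_mem hP β)
  have hmem : (⟨v, hk⟩ : killed hP V) ∈ genWeightSpace (killed hP V) lam := by
    rw [← comap_genWeightSpace_eq_of_injective
      (f := (killed hP V).incl) (killed hP V).injective_incl]
    exact hv
  have hne : genWeightSpace (killed hP V) lam ≠ ⊥ := by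
    intro h0
    rw [h0, LieSubmodule.mem_bot] at hmem
    exact hv0 (congrArg Subtype.val hmem)
  let χ : Weight ℂ H (killed hP V) := ⟨lam, hne⟩
  obtain ⟨⟨m, hm⟩, hm0, hmw⟩ := exists_forall_lie_eq_smul ℂ H (killed hP V) χ
  let χl : Module.Dual ℂ H := Weight.toLinear ℂ H (killed hP V) χ
  have hm0 : m ≠ 0 := fun h0 => hm0 (Subtype.ext h0)
  have hmw : ∀ h : H, ⁅(h : L), m⁆ = χl h • m := fun h => congrArg Subtype.val (hmw h)
  have hnat : ∀ β : PosIdx P, ∃ n : ℕ, χl (coroot β.1) = n := fun β =>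
    exists_nat_of_lie_lie (isSl2Triple hP β) hm0 (hmw _) (by rw [hm β, lie_zero])
  let χ' : IntWt P := ⟨χl, fun β => by
    obtain ⟨n, hn⟩ := hnat β
    exact ⟨n, by rw [hn]; norm_cast⟩⟩
  refine ⟨χ', rfl, fun β => ?_, m, hm0, hmw, hm⟩
  obtain ⟨n, hn⟩ := hnat β
  have h1 : (pairing β χ' : ℂ) = _ := cast_pairing β χ'
  have h2 : pairing β χ' = n := by
    have : (pairing β χ' : ℂ) = n := h1.trans hn
    exact_mod_cast this
  change 0 ≤ pairing β χ'
  lia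

/-- Vectors obtained from `v` by lowering operators, with their weights. -/
inductive Low (lam : IntWt P) (v : V) : IntWt P → V → Prop
  | base : Low lam v lam v
  | step {χ : IntWt P} {u : V} (β : PosIdx P) :
      Low lam v χ u → Low lam v (χ - wtRoot P β.1) ⁅fV hP β, u⁆

lemma Low.isWtVec {lam χ : IntWt P} {v u : V} (h : Low hP lam v χ u) (hv : IsWtVec lam v) :
    IsWtVec χ u := by
  induction h with
  | base => exact hv
  | step β _ ih => exact ih.fV hP β

lemma Low.sub_mem {lam χ : IntWt P} {v u : V} (h : Low hP lam v χ u) :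
    lam - χ ∈ (rootDatum hP).posCone := by
  induction h with
  | base => rw [sub_self]; exact zero_mem _
  | step β _ ih =>
    rw [← sub_add]
    exact add_mem ih ((rootDatum hP).root_mem_posCone β)

lemma span_low_eq_top [IsIrreducible ℂ L V] {lam : IntWt P} {v : V} (hv0 : v ≠ 0)
    (hv : IsWtVec lam v) (he : ∀ β, ⁅eV hP β, v⁆ = 0) :
    Submodule.span ℂ {u | ∃ χ, Low hP lam v χ u} = ⊤ := by
  set S := Submodule.span ℂ {u | ∃ χ, Low hP lam v χ u} with hS
  have hf : ∀ β, ∀ u ∈ S, ⁅fV hP β, u⁆ ∈ S := by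
    intro β u hu
    induction hu using Submodule.span_induction with
    | mem u hu =>
      obtain ⟨χ, hu⟩ := hu
      exact Submodule.subset_span ⟨_, hu.step β⟩
    | zero => rw [lie_zero]; exact S.zero_mem
    | add a b _ _ ha hb => rw [lie_add]; exact S.add_mem ha hb
    | smul c a _ ha => rw [lie_smul]; exact S.smul_mem _ ha
  have hlow : ∀ χ u, Low hP lam v χ u → ∀ x : L, ⁅x, u⁆ ∈ S := by
    intro χ u hu
    induction hu with
    | base =>
      refine span_induction hP
        { carrier := {x | ⁅x, v⁆ ∈ S}
          add_mem' := fun {x y} hx hy => by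
            change ⁅x + y, v⁆ ∈ S
            rw [add_lie]
            exact S.add_mem hx hy
          zero_mem' := by
            change ⁅(0 : L), v⁆ ∈ S
            rw [zero_lie]
            exact S.zero_mem
          smul_mem' := fun a x hx => by
            change ⁅a • x, v⁆ ∈ S
            rw [smul_lie]
            exact S.smul_mem a hx } ?_ ?_ ?_
      · intro h
        change ⁅(h : L), v⁆ ∈ S
        rw [hv]
        exact S.smul_mem _ (Submodule.subset_span ⟨_, .base⟩)
      · intro β
        change ⁅eV hP β, v⁆ ∈ S
        rw [he]
        exact S.zero_mem
      · intro β
        exact hf β _ (Submodule.subset_span ⟨_, .base⟩)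
    | step β _ ih =>
      intro x
      rw [leibniz_lie]
      exact S.add_mem (ih _) (hf β _ (ih x))
  let N : LieSubmodule ℂ L V :=
    { S with
      lie_mem := by
        intro x u hu
        change u ∈ S at hu
        change ⁅x, u⁆ ∈ S
        induction hu using Submodule.span_induction with
        | mem u hu =>
          obtain ⟨χ, hu⟩ := hu
          exact hlow χ u hu x
        | zero => rw [lie_zero]; exact S.zero_mem
        | add a b _ _ ha hb => rw [lie_add]; exact S.add_mem ha hb
        | smul c a _ ha => rw [lie_smul]; exact S.smul_mem _ ha }
  have hvN : v ∈ N := Submodule.subset_span ⟨_, .base⟩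
  have hN : N = ⊤ := by
    refine (eq_bot_or_eq_top N).resolve_left fun h0 => hv0 ?_
    rw [h0] at hvN
    exact hvN
  exact congrArg LieSubmodule.toSubmodule hN

lemma exists_basis [FiniteDimensional ℂ V] [IsIrreducible ℂ L V] {lam : IntWt P} {v : V}
    (hv0 : v ≠ 0) (hv : IsWtVec lam v) (he : ∀ β, ⁅eV hP β, v⁆ = 0) :
    ∃ (n : ℕ) (b : Module.Basis (Fin n) ℂ V) (wt : Fin n → IntWt P),
      (∀ i, IsWtVec (wt i) (b i)) ∧ ∀ i, lam - wt i ∈ (rootDatum hP).posCone := by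
  let b := Module.Basis.ofSpan (span_low_eq_top hP hv0 hv he).ge
  have : Finite _ := Module.Finite.finite_basis b
  obtain ⟨n, ⟨e⟩⟩ := Finite.exists_equiv_fin
    ((linearIndepOn_empty ℂ id).extend (Set.empty_subset {u : V | ∃ χ, Low hP lam v χ u}))
  have hb : ∀ i, ∃ χ, Low hP lam v χ (b.reindex e i) := by
    intro i
    rw [Module.Basis.reindex_apply]
    exact Module.Basis.ofSpan_subset (span_low_eq_top hP hv0 hv he).ge ⟨_, rfl⟩
  choose wt hwt using hb
  exact ⟨n, b.reindex e, wt, fun i => (hwt i).isWtVec hP hv, fun i => (hwt i).sub_mem hP⟩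

lemma exists_wt_eq {I : Type*} [Fintype I] (b : Module.Basis I ℂ V) (wt : I → IntWt P)
    (hb : ∀ i, IsWtVec (wt i) (b i)) {χ : IntWt P} {v : V} (hv0 : v ≠ 0) (hv : IsWtVec χ v) :
    ∃ i, wt i = χ := by
  have : b.repr v ≠ 0 := by simpa using hv0
  obtain ⟨j, hj⟩ := Finsupp.ne_iff.1 this
  exact ⟨j, wt_eq_of_repr b wt hb hv hj⟩

lemma hw_unique [FiniteDimensional ℂ V] [IsIrreducible ℂ L V] {lam κ : IntWt P} {v u : V}
    (hv0 : v ≠ 0) (hv : IsWtVec lam v) (he : ∀ β, ⁅eV hP β, v⁆ = 0)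
    (hu0 : u ≠ 0) (hu : IsWtVec κ u) (hue : ∀ β, ⁅eV hP β, u⁆ = 0) : κ = lam := by
  obtain ⟨n, b, wt, hb, hwt⟩ := exists_basis hP hv0 hv he
  obtain ⟨m, c, wt', hc, hwt'⟩ := exists_basis hP hu0 hu hue
  obtain ⟨i, hi⟩ := exists_wt_eq b wt hb hu0 hu
  obtain ⟨j, hj⟩ := exists_wt_eq c wt' hc hv0 hv
  have h1 := hwt i
  have h2 := hwt' j
  rw [hi, ← neg_sub] at h1
  rw [hj] at h2
  exact sub_eq_zero.1 ((rootDatum hP).eq_zero_of_mem_of_neg_mem h2 h1)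

/-- The numerator of the character of an irreducible module. -/
lemma exists_char [FiniteDimensional ℂ V] {lam : H → ℂ} (hV : IsHWModule H P lam V)
    {ρ : IntWt P} (hρ : (rootDatum hP).IsRho ρ) :
    ∃ χ : IntWt P, (χ.1 : H → ℂ) = lam ∧ (rootDatum hP).IsDom χ ∧
      ∃ (n : ℕ) (b : Module.Basis (Fin n) ℂ V) (wt : Fin n → IntWt P),
        (∀ i, IsWtVec (wt i) (b i)) ∧
        (∀ κ, (rootDatum hP).IsDom κ → κ ≠ χ →
          (trCh b wt 1 * (rootDatum hP).den ρ).coeff (κ + ρ) = 0) ∧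
        (trCh b wt 1 * (rootDatum hP).den ρ).coeff (χ + ρ) ≠ 0 := by
  classical
  obtain ⟨hirr, hex⟩ := hV
  obtain ⟨χ, hχ, hdom, v, hv0, hv, he⟩ := exists_wtVec hP hex
  obtain ⟨n, b, wt, hb, hwt⟩ := exists_basis hP hv0 hv he
  refine ⟨χ, hχ, hdom, n, b, wt, hb, fun κ hκ hne => ?_, ?_⟩
  · by_contra h0
    obtain ⟨u, hu0, hu, hue⟩ := exists_hw hP b wt hb hρ hκ h0
    exact hne (hw_unique hP hv0 hv he hu0 hu hue)
  · obtain ⟨i, hi⟩ := exists_wt_eq b wt hb hv0 hv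
    have : (trCh b wt 1 * (rootDatum hP).den ρ).coeff (χ + ρ) =
        ((Finset.univ.filter fun i => wt i = χ).card : ℂ) := by
      rw [trCh_apply, Finset.sum_mul, AddMonoidAlgebra.coeff_sum, Finsupp.finsetSum_apply,
        Finset.card_filter]
      push_cast
      refine Finset.sum_congr rfl fun j _ => ?_
      rw [AddMonoidAlgebra.coeff_single_mul_apply]
      split_ifs with hj
      · rw [hj, show -χ + (χ + ρ) = 0 + ρ by abel, PosRootDatum.coeff_den_self]
        simp
      · rw [← add_assoc]
        by_contra h1
        have h2 := (rootDatum hP).neg_mem_of_coeff_den (right_ne_zero_of_mul h1)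
        have h3 := (rootDatum hP).eq_zero_of_mem_of_neg_mem (hwt j)
          (by rwa [show -(χ - wt j) = -(-wt j + χ) by abel])
        exact hj (sub_eq_zero.1 h3).symm
    rw [this]
    have : (Finset.univ.filter fun i => wt i = χ).Nonempty :=
      ⟨i, Finset.mem_filter.2 ⟨Finset.mem_univ _, hi⟩⟩
    exact_mod_cast this.card_pos.ne'

section Tensor

variable {W : Type*} [AddCommGroup W] [Module ℂ W] [LieRingModule L W] [LieModule ℂ L W]
  {I J : Type*} [Fintype I] [Fintype J] (b : Module.Basis I ℂ V) (c : Module.Basis J ℂ W)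
  (wt : I → IntWt P) (wt' : J → IntWt P)

lemma isWtVec_tensor (hb : ∀ i, IsWtVec (wt i) (b i)) (hc : ∀ j, IsWtVec (wt' j) (c j))
    (x : I × J) : IsWtVec (wt x.1 + wt' x.2) (b.tensorProduct c x) := by
  intro h
  rw [Module.Basis.tensorProduct_apply', TensorProduct.LieModule.lie_tmul_right, hb, hc,
    TensorProduct.tmul_smul, ← TensorProduct.smul_tmul', ← add_smul]
  rfl

lemma trCh_one : trCh b wt 1 = ∑ i, single (wt i) 1 := by
  rw [trCh_apply]
  simp

lemma trCh_tensor :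
    trCh (b.tensorProduct c) (fun x => wt x.1 + wt' x.2) 1 = trCh b wt 1 * trCh c wt' 1 := by
  rw [trCh_one, trCh_one, trCh_one, Finset.sum_mul_sum, Fintype.sum_prod_type]
  simp [AddMonoidAlgebra.single_mul_single]

end Tensor

lemma isHWVec_of_isWtVec {ν : IntWt P} {v : V} (hv0 : v ≠ 0) (hv : IsWtVec ν v)
    (he : ∀ β, ⁅eV hP β, v⁆ = 0) : IsHWVec H P ν.1 v := by
  refine ⟨hv0, ?_, fun α hα x hx => ?_⟩
  · refine weightSpace_le_genWeightSpace V _ ?_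
    rw [mem_weightSpace]
    exact hv
  · let β : PosIdx P := ⟨⟨α, (hP.1 α hα).2⟩, hα⟩
    obtain ⟨k, rfl⟩ := mem_rootSpace_eV hP β hx
    rw [smul_lie, he, smul_zero]

lemma rootRefl_apply (β : PosIdx P) (χ : IntWt P) :
    rootRefl H β.1 χ.1 = (((rootDatum hP).refl β χ).1 : H → ℂ) := by
  ext h
  have h1 : (rootDatum hP).refl β χ = χ - pairing β χ • wtRoot P β.1 :=
    (rootDatum hP).refl_apply β χ
  rw [h1]
  have := cast_pairing β χ
  simp [rootRefl, ← this, wtRoot_apply]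

lemma rootRefl_neg (α : Weight ℂ H L) (χ : IntWt P) : rootRefl H (-α) χ.1 = rootRefl H α χ.1 := by
  ext h
  simp [rootRefl, coroot_neg]

/-- Weyl group elements preserve integral weights. -/
lemma exists_conj {w : (H → ℂ) →ₗ[ℂ] (H → ℂ)} (hw : w ∈ WeylMonoid H) :
    ∃ s : IntWt P →+ IntWt P, (∀ χ, (rootDatum hP).Conj χ (s χ)) ∧
      ∀ χ : IntWt P, w χ.1 = ((s χ).1 : H → ℂ) := by
  induction hw using Submonoid.closure_induction with
  | mem w hw =>
    obtain ⟨α, hα, rfl⟩ := hw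
    obtain ⟨β, rfl | rfl⟩ := exists_posIdx hP α hα
    · exact ⟨(rootDatum hP).refl β, fun χ => .refl_left _ _, rootRefl_apply hP β⟩
    · exact ⟨(rootDatum hP).refl β, fun χ => .refl_left _ _, fun χ => by
        rw [rootRefl_neg, rootRefl_apply hP]⟩
  | one => exact ⟨.id _, fun χ => ⟨[], rfl⟩, fun χ => rfl⟩
  | mul u w _ _ hu hw =>
    obtain ⟨s, hs, hs'⟩ := hu
    obtain ⟨t, ht, ht'⟩ := hw
    refine ⟨s.comp t, fun χ => PosRootDatum.Conj.trans (D := rootDatum hP) (ht χ) (hs _),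
      fun χ => ?_⟩
    rw [Module.End.mul_apply, ht', hs']
    rfl

end PRVLie

theorem PRV_component {L : Type*} [LieRing L] [LieAlgebra ℂ L]
    [FiniteDimensional ℂ L] [LieAlgebra.IsKilling ℂ L]
    (H : LieSubalgebra ℂ L) [H.IsCartanSubalgebra]
    (P : Set (H → ℂ)) (hP : IsPositiveSystem H P)
    {V W : Type*} [AddCommGroup V] [Module ℂ V] [LieRingModule L V] [LieModule ℂ L V]
    [FiniteDimensional ℂ V]
    [AddCommGroup W] [Module ℂ W] [LieRingModule L W] [LieModule ℂ L W]
    [FiniteDimensional ℂ W]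
    (lam mu : H → ℂ)
    (hV : IsHWModule H P lam V) (hW : IsHWModule H P mu W)
    -- `w` is an element of the Weyl group
    (w : (H → ℂ) →ₗ[ℂ] (H → ℂ)) (hw : w ∈ WeylMonoid H)
    -- `ν` is the dominant representative of `λ + wμ`
    (ν : H → ℂ)
    (hν_orbit : ∃ u ∈ WeylMonoid H, u (lam + w mu) = ν)
    (hν_dom : ∀ α : LieModule.Weight ℂ H L, ⇑α ∈ P →
      ∃ k : ℕ, ν (LieAlgebra.IsKilling.coroot α) = (k : ℂ)) :
    -- `V(ν)` occurs in `V(λ) ⊗ V(μ)`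
    ∃ v : V ⊗[ℂ] W, IsHWVec H P ν v := by
  obtain ⟨ρ, hρ⟩ := PRVLie.exists_isRho hP
  obtain ⟨χ, rfl, hχ, n, b, wt, hb, hV0, hV1⟩ := PRVLie.exists_char hP hV hρ
  obtain ⟨ψ, rfl, hψ, m, c, wt', hc, hW0, hW1⟩ := PRVLie.exists_char hP hW hρ
  obtain ⟨u, hu, rfl⟩ := hν_orbit
  obtain ⟨s, hs, hs'⟩ := PRVLie.exists_conj hP hw
  obtain ⟨t, ht, ht'⟩ := PRVLie.exists_conj hP hu
  have hν : u (χ.1 + w ψ.1) = ((t (χ + s ψ)).1 : H → ℂ) := by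
    rw [hs', ← ht']
    rfl
  rw [hν] at hν_dom ⊢
  have hdom : (PRVLie.rootDatum hP).IsDom (t (χ + s ψ)) := by
    intro β
    obtain ⟨k, hk⟩ := hν_dom β.1 β.2
    have h1 : (PRVLie.pairing β (t (χ + s ψ)) : ℂ) = k :=
      (PRVLie.cast_pairing β _).trans hk
    have h2 : PRVLie.pairing β (t (χ + s ψ)) = k := by exact_mod_cast h1
    change 0 ≤ PRVLie.pairing β (t (χ + s ψ))
    lia
  have hη : (PRVLie.rootDatum hP).Conj (-ψ) (-t (s ψ)) :=
    ((hs ψ).trans _ (ht _)).neg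
  have hconj : (PRVLie.rootDatum hP).Conj (t (χ + s ψ) + -t (s ψ)) χ := by
    rw [map_add, add_neg_cancel_right]
    exact (ht χ).symm
  have key := (PRVLie.rootDatum hP).coeff_mul_ne_zero hρ
    (PRVLie.isSkew_trCh hP b wt hb hρ) (PRVLie.isSkew_trCh hP c wt' hc hρ)
    hχ hψ hdom hV0 hW0 hV1 hW1 hη hconj
  rw [← PRVLie.trCh_tensor] at key
  obtain ⟨v, hv0, hv, he⟩ := PRVLie.exists_hw hP (b.tensorProduct c) _
    (PRVLie.isWtVec_tensor b c wt wt' hb hc) hρ hdom key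
  exact ⟨v, PRVLie.isHWVec_of_isWtVec hP hv0 hv he⟩
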